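/- arXiv:0711.1373 — 2 statements merged into one kernel-verified Lean document; each statement's English description precedes it below -/
import Mathlib

section
/- On the region R(2): uniformly on every compact subset K of the interior of R(2), ln|F_n(z)|/(2√n) → (1/2)·Re(√(Li₂(z²))) as n → ∞; that is, sup_{z ∈ K} | ln|F_n(z)|/(2√n) − (1/2)·Re(√(Li₂(z²))) | → 0. -/
open Complex Filter

/-- `partsCount k n` is the number of partitions of `n` with exactly `k` parts. -/
noncomputable def partsCount (k n : ℕ) : ℕ := Nat.card {p : Nat.Partition n // p.parts.card = k}

/-- The partition polynomial `F_n(x) = ∑_{k=1}^n p_k(n) x^k`. -/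
noncomputable def F (n : ℕ) (x : ℂ) : ℂ := ∑ k ∈ Finset.Icc 1 n, (partsCount k n : ℂ) * x ^ k

/-- The dilogarithm `Li₂(z) = ∑_{n=1}^∞ zⁿ/n²`. -/
noncomputable def dilog (z : ℂ) : ℂ := ∑' n : ℕ, z ^ (n + 1) / ((n : ℂ) + 1) ^ 2

/-- `fk k x = (1/k)·Re √(Li₂(x^k))` with the principal branch square root. -/
noncomputable def fk (k : ℕ) (x : ℂ) : ℝ := (1 / (k : ℝ)) * ((dilog (x ^ k)) ^ (1 / 2 : ℂ)).re

/-- The region `R(1)`. -/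
def R1 : Set ℂ := {x | ‖x‖ < 1 ∧ fk 2 x ≤ fk 1 x ∧ fk 3 x ≤ fk 1 x}

/-- The region `R(2)`. -/
def R2 : Set ℂ := {x | ‖x‖ < 1 ∧ fk 1 x ≤ fk 2 x ∧ fk 3 x ≤ fk 2 x}

/-- The region `R(3)`. -/
def R3 : Set ℂ := {x | ‖x‖ < 1 ∧ fk 1 x ≤ fk 3 x ∧ fk 2 x ≤ fk 3 x}

/-!
Cauchy's formula on the circle `|q| = exp (-Re w / √n)` turns `F n x` into an integral of
`∏ (1 - x qⁱ)⁻¹ / qⁿ⁺¹`. Write `w = √Li₂(x²) / 2`. On `R(2)` the generating function is largest near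
`q = -1`, where its logarithm at `q = -exp (-W / √n)` is `√n w² / W + O(1)`; so the integrand has a
saddle point at `W = w`, with value of size `exp (2 √n Re w)`, and in the scale
`W = w + i t / n ^ (1 / 4)` it converges to a Gaussian with dominated convergence on `|W - w| ≤ 1`.

The rest of the circle is exponentially smaller, by compactness: along an ultrafilter, either no
`√n (q⁻ᵏ - 1)` converges, and the logarithm is `o(√n)`; or there is a least such `k = m`, and the
logarithm divided by `√n` tends to `Li₂(xᵐ) / (m γ)`, where `γ` is the limit for `k = m`. For
`m ≠ 2` the real part is at most `(fk m x)² / fk 2 x`, and `fk m x < fk 2 x` in the interior of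
`R(2)`: for `m ≥ 4` by explicit bounds on the dilogarithm, for `m = 1, 3` by the maximum principle.
For `m = 2` the circle is within `O(1 / √n)` of `-1`, and `w² / W + W - 2 w = (W - w)² / W` measures
the loss.
-/

open scoped Topology

/-- The series `∑ xᵏ / k · aₖ`, the common shape of the logarithms of the infinite products used
here. Its term `k = 0` vanishes because `x ^ 0 / 0 = 0`. -/
noncomputable def logSeries (x : ℂ) (a : ℕ → ℂ) : ℂ := ∑' k : ℕ, x ^ k / k * a k

section LogSeries

variable {x : ℂ} {a : ℕ → ℂ} {C : ℝ}

theorem norm_logSeries_term_le {r : ℝ} (hxr : ‖x‖ ≤ r) (ha : ∀ k ≠ 0, ‖a k‖ ≤ C) (k : ℕ) :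
    ‖x ^ k / k * a k‖ ≤ r ^ k * C := by
  rcases eq_or_ne k 0 with rfl | hk
  · simpa using (norm_nonneg _).trans (ha 1 one_ne_zero)
  have hdiv : ‖x ^ k / (k : ℂ)‖ ≤ r ^ k := by
    rw [norm_div, norm_pow, Complex.norm_natCast]
    calc ‖x‖ ^ k / k ≤ ‖x‖ ^ k :=
          div_le_self (by positivity) (by exact_mod_cast Nat.one_le_iff_ne_zero.2 hk)
      _ ≤ r ^ k := by gcongr
  rw [norm_mul]
  exact mul_le_mul hdiv (ha k hk) (norm_nonneg _) ((norm_nonneg _).trans hdiv)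

theorem summable_geometric_mul {r : ℝ} (h0 : 0 ≤ r) (h1 : r < 1) :
    Summable fun k : ℕ => r ^ k * C :=
  (summable_geometric_of_lt_one h0 h1).mul_right C

theorem summable_logSeries (hx : ‖x‖ < 1) (ha : ∀ k ≠ 0, ‖a k‖ ≤ C) :
    Summable fun k : ℕ => x ^ k / k * a k :=
  (summable_geometric_mul (norm_nonneg x) hx).of_norm_bounded (norm_logSeries_term_le le_rfl ha)

theorem norm_logSeries_le (hx : ‖x‖ < 1) (ha : ∀ k ≠ 0, ‖a k‖ ≤ C) :
    ‖logSeries x a‖ ≤ (1 - ‖x‖)⁻¹ * C :=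
  tsum_of_norm_bounded ((hasSum_geometric_of_lt_one (norm_nonneg x) hx).mul_right C)
    (norm_logSeries_term_le le_rfl ha)

theorem logSeries_const_mul (c : ℂ) : logSeries x (fun k => c * a k) = c * logSeries x a := by
  simp only [logSeries, ← tsum_mul_left]
  exact tsum_congr fun k => by ring

theorem tendsto_logSeries {ι : Type*} {l : Filter ι} {y : ι → ℂ} {b : ι → ℕ → ℂ} (hx : ‖x‖ < 1)
    (hy : Tendsto y l (𝓝 x)) (hb : ∀ k ≠ 0, Tendsto (b · k) l (𝓝 (a k)))
    (hC : ∀ᶠ i in l, ∀ k ≠ 0, ‖b i k‖ ≤ C) :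
    Tendsto (fun i => logSeries (y i) (b i)) l (𝓝 (logSeries x a)) := by
  obtain ⟨r, hxr, hr⟩ := exists_between hx
  refine tendsto_tsum_of_dominated_convergence
    (summable_geometric_mul (C := C) ((norm_nonneg x).trans hxr.le) hr) (fun k => ?_) ?_
  · rcases eq_or_ne k 0 with rfl | hk
    · simp [tendsto_const_nhds]
    · exact ((hy.pow k).div_const _).mul (hb k hk)
  · filter_upwards [hC, hy.norm.eventually (eventually_le_nhds hxr)] with i hi hyi
    exact norm_logSeries_term_le hyi hi

theorem continuousOn_logSeries {Y : Type*} [TopologicalSpace Y] {b : Y → ℕ → ℂ} {s : Set Y}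
    (hx : ‖x‖ < 1) (hb : ∀ k ≠ 0, ContinuousOn (b · k) s) (hC : ∀ y ∈ s, ∀ k ≠ 0, ‖b y k‖ ≤ C) :
    ContinuousOn (fun y => logSeries x (b y)) s := fun y hy =>
  tendsto_logSeries hx tendsto_const_nhds (fun k hk => hb k hk y hy)
    (eventually_mem_nhdsWithin.mono hC)

theorem one_sub_mul_ne_zero {u : ℂ} (hx : ‖x‖ < 1) (hu : ‖u‖ ≤ 1) : 1 - x * u ≠ 0 := by
  intro h
  have : ‖x * u‖ < 1 := by
    rw [norm_mul]
    exact mul_lt_one_of_nonneg_of_lt_one_left (norm_nonneg _) hx hu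
  rw [← sub_eq_zero.1 h, norm_one] at this
  exact this.false

theorem exp_logSeries_sum_pow {ι : Type*} (s : Finset ι) {u : ι → ℂ} (hx : ‖x‖ < 1)
    (hu : ∀ i, ‖u i‖ ≤ 1) :
    exp (logSeries x fun k => ∑ i ∈ s, u i ^ k) = (∏ i ∈ s, (1 - x * u i))⁻¹ := by
  have hlt (i : ι) : ‖x * u i‖ < 1 := by
    rw [norm_mul]
    exact mul_lt_one_of_nonneg_of_lt_one_left (norm_nonneg _) hx (hu i)
  have hlog : logSeries x (fun k => ∑ i ∈ s, u i ^ k) = ∑ i ∈ s, -log (1 - x * u i) := by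
    rw [← (hasSum_sum fun i (_ : i ∈ s) => hasSum_taylorSeries_neg_log (hlt i)).tsum_eq]
    refine tsum_congr fun k => ?_
    rw [Finset.mul_sum]
    exact Finset.sum_congr rfl fun i _ => by ring
  rw [hlog, Complex.exp_sum, ← Finset.prod_inv_distrib]
  refine Finset.prod_congr rfl fun i _ => ?_
  rw [Complex.exp_neg, Complex.exp_log (one_sub_mul_ne_zero hx (hu i))]

end LogSeries

/-- The logarithm `∑ xᵏ / k · 1 / (pᵏ - 1)` of the generating function `∑ Fₙ(x) qⁿ`,
in the variable `p = q⁻¹`, `‖p‖ > 1`. -/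
noncomputable def logGenFun (x p : ℂ) : ℂ := logSeries x fun k => (p ^ k - 1)⁻¹

section LogGenFun

variable {x p : ℂ} {r : ℝ}

theorem sub_one_le_norm_pow_sub_one (hr : 1 ≤ r) (hp : r ≤ ‖p‖) {k : ℕ} (hk : k ≠ 0) :
    r - 1 ≤ ‖p ^ k - 1‖ :=
  calc r - 1 ≤ ‖p‖ ^ k - 1 := by linarith [le_self_pow₀ (hr.trans hp) hk]
    _ = ‖p ^ k‖ - ‖(1 : ℂ)‖ := by rw [norm_pow, norm_one]
    _ ≤ ‖p ^ k - 1‖ := norm_sub_norm_le _ _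

theorem norm_inv_pow_sub_one_le (hr : 1 < r) (hp : r ≤ ‖p‖) {k : ℕ} (hk : k ≠ 0) :
    ‖(p ^ k - 1)⁻¹‖ ≤ (r - 1)⁻¹ := by
  rw [norm_inv]
  exact inv_anti₀ (sub_pos.2 hr) (sub_one_le_norm_pow_sub_one hr.le hp hk)

theorem pow_sub_one_ne_zero (hp : 1 < ‖p‖) {k : ℕ} (hk : k ≠ 0) : p ^ k - 1 ≠ 0 :=
  norm_pos_iff.1 ((sub_pos.2 hp).trans_le (sub_one_le_norm_pow_sub_one hp.le le_rfl hk))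

theorem continuousOn_logGenFun (hx : ‖x‖ < 1) (hr : 1 < r) :
    ContinuousOn (logGenFun x) {p | r ≤ ‖p‖} := by
  refine continuousOn_logSeries hx (fun k hk => ?_) fun p hp k hk =>
    norm_inv_pow_sub_one_le hr hp hk
  exact ContinuousOn.inv₀ (by fun_prop) fun p hp => pow_sub_one_ne_zero (hr.trans_le hp) hk

theorem norm_sum_geometric_le {q : ℂ} (hq : ‖q‖ < 1) (N : ℕ) {k : ℕ} (hk : k ≠ 0) :
    ‖∑ i ∈ Finset.range N, (q ^ (i + 1)) ^ k‖ ≤ (1 - ‖q‖)⁻¹ :=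
  calc ‖∑ i ∈ Finset.range N, (q ^ (i + 1)) ^ k‖ ≤ ∑ i ∈ Finset.range N, ‖q‖ ^ i := by
        refine norm_sum_le_of_le _ fun i _ => ?_
        rw [← pow_mul, norm_pow]
        exact pow_le_pow_of_le_one (norm_nonneg _) hq.le
          ((Nat.le_succ i).trans (Nat.le_mul_of_pos_right _ (Nat.pos_of_ne_zero hk)))
    _ ≤ (1 - ‖q‖)⁻¹ := by
        rw [← tsum_geometric_of_lt_one (norm_nonneg _) hq]
        exact (summable_geometric_of_lt_one (norm_nonneg _) hq).sum_le_tsum _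
          fun i _ => by positivity

theorem hasSum_pow_succ_pow {q : ℂ} (hq : ‖q‖ < 1) (hq0 : q ≠ 0) {k : ℕ} (hk : k ≠ 0) :
    HasSum (fun i : ℕ => (q ^ (i + 1)) ^ k) ((q⁻¹ ^ k - 1)⁻¹) := by
  have hqk : ‖q ^ k‖ < 1 := by
    rw [norm_pow]
    exact pow_lt_one₀ (norm_nonneg _) hq hk
  have hne : 1 - q ^ k ≠ 0 := by simpa using one_sub_mul_ne_zero hqk norm_one.le
  have hval : (q⁻¹ ^ k - 1)⁻¹ = q ^ k * (1 - q ^ k)⁻¹ := by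
    rw [inv_pow]
    field_simp
  rw [hval, funext fun i : ℕ => (by ring : (q ^ (i + 1)) ^ k = q ^ k * (q ^ k) ^ i)]
  exact (hasSum_geometric_of_norm_lt_one hqk).mul_left (q ^ k)

end LogGenFun

section GeneratingFunction

open PowerSeries PowerSeries.WithPiTopology

/-- The generating function `∑ₙ Fₙ(x) Xⁿ` of the partition polynomials: every part is weighted by
`x`. -/
noncomputable def partsGenFun (x : ℂ) : ℂ⟦X⟧ := Nat.Partition.genFun fun _ c => x ^ c

theorem card_parts_mem_Icc {n : ℕ} (hn : n ≠ 0) (p : n.Partition) :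
    p.parts.card ∈ Finset.Icc 1 n := by
  refine Finset.mem_Icc.2 ⟨Nat.one_le_iff_ne_zero.2 fun h => hn ?_, ?_⟩
  · rw [← p.parts_sum, Multiset.card_eq_zero.1 h, Multiset.sum_zero]
  · simpa [p.parts_sum] using Multiset.card_nsmul_le_sum (a := 1) fun y hy => p.parts_pos hy

theorem coeff_partsGenFun (x : ℂ) {n : ℕ} (hn : n ≠ 0) : coeff n (partsGenFun x) = F n x := by
  have hweight (p : n.Partition) :
      p.parts.toFinsupp.prod (fun _ c => x ^ c) = x ^ p.parts.card := by
    simp only [Finsupp.prod, Multiset.toFinsupp_support, Multiset.toFinsupp_apply]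
    rw [Finset.prod_pow_eq_pow_sum, Multiset.toFinset_sum_count_eq]
  simp only [partsGenFun, Nat.Partition.coeff_genFun, hweight, F, partsCount]
  rw [← Finset.sum_fiberwise_of_maps_to fun p _ => card_parts_mem_Icc hn p]
  refine Finset.sum_congr rfl fun k _ => ?_
  rw [Finset.sum_congr rfl fun p hp => by rw [(Finset.mem_filter.1 hp).2], Finset.sum_const,
    nsmul_eq_mul, Nat.card_eq_fintype_card, Fintype.card_subtype]

theorem X_pow_dvd_prod_sub_one {R ι : Type*} [CommRing R] {d : ℕ} {u : ι → R⟦X⟧} (s : Finset ι)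
    (h : ∀ i ∈ s, X ^ d ∣ u i - 1) : X ^ d ∣ ∏ i ∈ s, u i - 1 := by
  refine Finset.prod_induction u (X ^ d ∣ · - 1) (fun a b ha hb => ?_) (by simp) h
  rw [show a * b - 1 = (a - 1) * b + (b - 1) by ring]
  exact dvd_add (ha.mul_right b) hb

theorem X_pow_dvd_of_tendsto {R : Type*} [CommRing R] [TopologicalSpace R] [T2Space R] {d : ℕ}
    {f : ℕ → R⟦X⟧} {g : R⟦X⟧} (hf : Tendsto f atTop (𝓝 g)) {c : R⟦X⟧}
    (h : ∀ᶠ M in atTop, X ^ d ∣ f M - c) : X ^ d ∣ g - c := by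
  rw [X_pow_dvd_iff]
  intro m hm
  have hlim := (WithPiTopology.tendsto_iff_coeff_tendsto R f atTop g).1 hf m
  have hconst : ∀ᶠ M in atTop, coeff m (f M) = coeff m c := by
    filter_upwards [h] with M hM
    simpa [sub_eq_zero] using X_pow_dvd_iff.1 hM m hm
  rw [map_sub, sub_eq_zero]
  exact tendsto_nhds_unique (hlim.congr' hconst) tendsto_const_nhds

theorem X_pow_succ_dvd_partsGenFun_mul_prod (x : ℂ) (N : ℕ) :
    X ^ (N + 1) ∣ partsGenFun x * ∏ i ∈ Finset.range N, (1 - C x * X ^ (i + 1)) - 1 := by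
  set u : ℕ → ℂ⟦X⟧ := fun i => 1 + ∑' j, x ^ (j + 1) • X ^ ((i + 1) * (j + 1))
  have hprod : HasProd u (partsGenFun x) := Nat.Partition.hasProd_genFun fun _ c => x ^ c
  have hinv (i : ℕ) : u i * (1 - C x * X ^ (i + 1)) = 1 := by
    have hs := Nat.Partition.summable_genFun_term (fun _ c => x ^ c) i
    have hstep : ∑' j, x ^ (j + 1) • (X : ℂ⟦X⟧) ^ ((i + 1) * (j + 1)) = C x * X ^ (i + 1) +
        C x * X ^ (i + 1) * ∑' j, x ^ (j + 1) • X ^ ((i + 1) * (j + 1)) := by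
      conv_lhs => rw [hs.tsum_eq_zero_add]
      rw [← hs.tsum_mul_left]
      simp only [PowerSeries.smul_eq_C_mul, map_pow]
      congr 1
      · ring
      · exact tsum_congr fun j => by ring
    linear_combination hstep
  have htail (M : ℕ) : X ^ (N + 1) ∣ ∏ i ∈ Finset.Ico N M, u i - 1 := by
    refine X_pow_dvd_prod_sub_one _ fun i hi => ?_
    refine (pow_dvd_pow X (add_le_add_left (Finset.mem_Ico.1 hi).1 1)).trans ?_
    exact ⟨C x * u i, by linear_combination hinv i⟩
  refine X_pow_dvd_of_tendsto (hprod.tendsto_prod_nat.mul_const _) ?_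
  filter_upwards [eventually_ge_atTop N] with M hM
  rw [← Finset.prod_range_mul_prod_Ico _ hM, mul_right_comm, ← Finset.prod_mul_distrib]
  simpa [hinv] using htail M

end GeneratingFunction

section CauchyFormula

theorem circleIntegral_eval_mul_inv_pow (P : Polynomial ℂ) (n : ℕ) {ρ : ℝ} (hρ : 0 < ρ) :
    ∮ q in C(0, ρ), P.eval q * (q ^ (n + 1))⁻¹ = 2 * Real.pi * I * P.coeff n := by
  have hne {q : ℂ} (hq : q ∈ Metric.sphere 0 ρ) : q ≠ 0 := ne_zero_of_mem_sphere hρ.ne' ⟨q, hq⟩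
  have hterm (i : ℕ) : ∮ q in C(0, ρ), P.coeff i * (q - 0) ^ ((i : ℤ) - (n + 1)) =
      if i = n then 2 * Real.pi * I * P.coeff n else 0 := by
    rw [circleIntegral.integral_const_mul]
    split_ifs with h
    · subst h
      simp only [sub_add_cancel_left, zpow_neg_one, circleIntegral.integral_sub_center_inv _ hρ.ne']
      ring
    · rw [circleIntegral.integral_sub_zpow_of_ne (by omega), mul_zero]
  calc ∮ q in C(0, ρ), P.eval q * (q ^ (n + 1))⁻¹
      = ∮ q in C(0, ρ), ∑ i ∈ P.support, P.coeff i * (q - 0) ^ ((i : ℤ) - (n + 1)) := by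
        refine circleIntegral.integral_congr hρ.le fun q hq => ?_
        simp only [Polynomial.eval_eq_sum, Polynomial.sum, Finset.sum_mul, sub_zero]
        refine Finset.sum_congr rfl fun i _ => ?_
        rw [zpow_sub₀ (hne hq), zpow_natCast, ← Nat.cast_add_one, zpow_natCast]
        ring
    _ = ∑ i ∈ P.support, if i = n then 2 * Real.pi * I * P.coeff n else 0 := by
        rw [circleIntegral.integral_fun_sum, Finset.sum_congr rfl fun i _ => hterm i]
        refine fun i _ => ContinuousOn.circleIntegrable hρ.le ?_
        exact continuousOn_const.mul (ContinuousOn.zpow₀ (by fun_prop) _ fun q hq =>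
          .inl (by simpa using hne hq))
    _ = 2 * Real.pi * I * P.coeff n := by
        simp +contextual [Finset.sum_ite_eq']

theorem circleIntegral_inv_mul_inv_pow {Φ : PowerSeries ℂ} {D : Polynomial ℂ} {n : ℕ} {ρ : ℝ}
    (hρ : 0 < ρ) (hD : ∀ q ∈ Metric.closedBall 0 ρ, D.eval q ≠ 0)
    (h : PowerSeries.X ^ (n + 1) ∣ Φ * (D : PowerSeries ℂ) - 1) :
    ∮ q in C(0, ρ), (D.eval q)⁻¹ * (q ^ (n + 1))⁻¹ = 2 * Real.pi * I * PowerSeries.coeff n Φ := by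
  obtain ⟨R, hR⟩ : Polynomial.X ^ (n + 1) ∣ PowerSeries.trunc (n + 1) Φ * D - 1 := by
    rw [Polynomial.X_pow_dvd_iff]
    intro d hd
    rw [← PowerSeries.X_pow_dvd_iff.1 h d hd, map_sub, Polynomial.coeff_sub, ← Polynomial.coeff_coe,
      Polynomial.coe_mul, PowerSeries.coeff_mul_eq_coeff_trunc_mul_trunc _ _ hd,
      PowerSeries.trunc_trunc, ← PowerSeries.coeff_mul_eq_coeff_trunc_mul_trunc _ _ hd,
      ← Polynomial.coe_one, Polynomial.coeff_coe]
  set T := PowerSeries.trunc (n + 1) Φ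
  have hdiff : DifferentiableOn ℂ (fun q => R.eval q / D.eval q) (Metric.closedBall 0 ρ) :=
    R.differentiable.differentiableOn.div D.differentiable.differentiableOn hD
  have hholo : ∮ q in C(0, ρ), R.eval q / D.eval q = 0 :=
    circleIntegral_eq_zero_of_differentiable_on_off_countable hρ.le Set.countable_empty
      hdiff.continuousOn fun z hz => (hdiff z (Metric.ball_subset_closedBall hz.1)).differentiableAt
        (Metric.closedBall_mem_nhds_of_mem hz.1)
  have hsplit : Set.EqOn (fun q => (D.eval q)⁻¹ * (q ^ (n + 1))⁻¹)
      (fun q => T.eval q * (q ^ (n + 1))⁻¹ - R.eval q / D.eval q) (Metric.sphere 0 ρ) := by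
    intro q hq
    have hq0 : q ≠ 0 := ne_zero_of_mem_sphere hρ.ne' ⟨q, hq⟩
    have hDq := hD q (Metric.sphere_subset_closedBall hq)
    have heval := congrArg (Polynomial.eval q) hR
    simp only [Polynomial.eval_sub, Polynomial.eval_mul, Polynomial.eval_one, Polynomial.eval_pow,
      Polynomial.eval_X] at heval
    simp only
    field_simp
    linear_combination -heval
  rw [circleIntegral.integral_congr hρ.le hsplit, circleIntegral.integral_sub, hholo,
    circleIntegral_eval_mul_inv_pow _ _ hρ, PowerSeries.coeff_trunc, if_pos n.lt_succ_self,
    sub_zero]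
  · refine ContinuousOn.circleIntegrable hρ.le (T.continuous.continuousOn.mul ?_)
    exact ContinuousOn.inv₀ (by fun_prop) fun q hq =>
      pow_ne_zero _ (ne_zero_of_mem_sphere hρ.ne' ⟨q, hq⟩)
  · exact (hdiff.continuousOn.mono Metric.sphere_subset_closedBall).circleIntegrable hρ.le

theorem tendsto_circleIntegral_of_dominated {f : ℕ → ℂ → ℂ} {g : ℂ → ℂ} {c : ℂ} {ρ B : ℝ}
    (hρ : 0 ≤ ρ) (hf : ∀ N, ContinuousOn (f N) (Metric.sphere c ρ))
    (hB : ∀ N, ∀ z ∈ Metric.sphere c ρ, ‖f N z‖ ≤ B)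
    (hfg : ∀ z ∈ Metric.sphere c ρ, Tendsto (f · z) atTop (𝓝 (g z))) :
    Tendsto (fun N => ∮ z in C(c, ρ), f N z) atTop (𝓝 (∮ z in C(c, ρ), g z)) := by
  have hmem (θ : ℝ) : circleMap c ρ θ ∈ Metric.sphere c ρ := circleMap_mem_sphere c hρ θ
  refine intervalIntegral.tendsto_integral_filter_of_dominated_convergence (fun _ => ρ * B)
    (.of_forall fun N => ?_) (.of_forall fun N => .of_forall fun θ _ => ?_)
    intervalIntegrable_const (.of_forall fun θ _ => (hfg _ (hmem θ)).const_smul _)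
  · have hcomp : Continuous fun θ => f N (circleMap c ρ θ) :=
      (hf N).comp_continuous (continuous_circleMap c ρ) hmem
    simp only [deriv_circleMap]
    exact (((continuous_circleMap 0 ρ).mul continuous_const).smul hcomp).aestronglyMeasurable
  · rw [norm_smul, deriv_circleMap, norm_mul, norm_I, norm_circleMap_zero, abs_of_nonneg hρ,
      mul_one]
    exact mul_le_mul_of_nonneg_left (hB N _ (hmem θ)) hρ

theorem circleIntegral_inv_prod_mul_inv_pow {x : ℂ} (hx : ‖x‖ < 1) {n N : ℕ} (hn : n ≠ 0)
    (hN : n ≤ N) {ρ : ℝ} (hρ : 0 < ρ) (hρ1 : ρ < 1) :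
    ∮ q in C(0, ρ), (∏ i ∈ Finset.range N, (1 - x * q ^ (i + 1)))⁻¹ * (q ^ (n + 1))⁻¹ =
      2 * Real.pi * I * F n x := by
  set D : Polynomial ℂ :=
    ∏ i ∈ Finset.range N, (1 - Polynomial.C x * Polynomial.X ^ (i + 1)) with hD
  have heval (q : ℂ) : D.eval q = ∏ i ∈ Finset.range N, (1 - x * q ^ (i + 1)) := by
    simp [hD, Polynomial.eval_prod]
  have hcoe : (D : PowerSeries ℂ) =
      ∏ i ∈ Finset.range N, (1 - PowerSeries.C x * PowerSeries.X ^ (i + 1)) := by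
    rw [hD, ← Polynomial.coeToPowerSeries.ringHom_apply, map_prod]
    exact Finset.prod_congr rfl fun i _ => by simp
  simp only [← heval, ← coeff_partsGenFun x hn]
  refine circleIntegral_inv_mul_inv_pow hρ (fun q hq => ?_) ?_
  · rw [heval]
    refine Finset.prod_ne_zero_iff.2 fun i _ => one_sub_mul_ne_zero hx ?_
    rw [norm_pow]
    exact pow_le_one₀ (norm_nonneg _) ((mem_closedBall_zero_iff.1 hq).trans hρ1.le)
  · rw [hcoe]
    exact (pow_dvd_pow _ (Nat.succ_le_succ hN)).trans (X_pow_succ_dvd_partsGenFun_mul_prod x N)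

theorem circleIntegral_exp_logGenFun {x : ℂ} (hx : ‖x‖ < 1) {n : ℕ} (hn : n ≠ 0) {ρ : ℝ}
    (hρ : 0 < ρ) (hρ1 : ρ < 1) :
    ∮ q in C(0, ρ), exp (logGenFun x q⁻¹) * (q ^ (n + 1))⁻¹ = 2 * Real.pi * I * F n x := by
  have hnorm {q : ℂ} (hq : q ∈ Metric.sphere 0 ρ) : ‖q‖ = ρ := mem_sphere_zero_iff_norm.1 hq
  have hne {q : ℂ} (hq : q ∈ Metric.sphere 0 ρ) : q ≠ 0 := ne_zero_of_mem_sphere hρ.ne' ⟨q, hq⟩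
  have hpow {q : ℂ} (hq : q ∈ Metric.sphere 0 ρ) (i : ℕ) : ‖q ^ (i + 1)‖ ≤ 1 := by
    rw [norm_pow, hnorm hq]
    exact pow_le_one₀ hρ.le hρ1.le
  have hgeom {q : ℂ} (hq : q ∈ Metric.sphere 0 ρ) (N k : ℕ) (hk : k ≠ 0) :
      ‖∑ i ∈ Finset.range N, (q ^ (i + 1)) ^ k‖ ≤ (1 - ρ)⁻¹ :=
    hnorm hq ▸ norm_sum_geometric_le ((hnorm hq).trans_lt hρ1) N hk
  refine tendsto_nhds_unique (tendsto_circleIntegral_of_dominated hρ.le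
    (f := fun N q => (∏ i ∈ Finset.range N, (1 - x * q ^ (i + 1)))⁻¹ * (q ^ (n + 1))⁻¹)
    (B := Real.exp ((1 - ‖x‖)⁻¹ * (1 - ρ)⁻¹) * (ρ ^ (n + 1))⁻¹) (fun N => ?_) (fun N q hq => ?_)
    fun q hq => ?_) ?_
  · refine .mul (.inv₀ (by fun_prop) fun q hq => ?_) (.inv₀ (by fun_prop) fun q hq => ?_)
    · exact Finset.prod_ne_zero_iff.2 fun i _ => one_sub_mul_ne_zero hx (hpow hq i)
    · exact pow_ne_zero _ (hne hq)
  · rw [← exp_logSeries_sum_pow _ hx (hpow hq), norm_mul, norm_exp, norm_inv, norm_pow, hnorm hq]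
    gcongr
    exact (re_le_norm _).trans (norm_logSeries_le hx (hgeom hq N))
  · simp only [← exp_logSeries_sum_pow _ hx (hpow hq)]
    refine .mul_const _ ((continuous_exp.tendsto _).comp ?_)
    refine tendsto_logSeries hx tendsto_const_nhds (fun k hk => ?_) (.of_forall (hgeom hq))
    exact (hasSum_pow_succ_pow ((hnorm hq).trans_lt hρ1) (hne hq) hk).tendsto_sum_nat
  · refine tendsto_const_nhds.congr' ?_
    filter_upwards [eventually_ge_atTop n] with N hN
    exact (circleIntegral_inv_prod_mul_inv_pow hx hn hN hρ hρ1).symm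

end CauchyFormula

section Dilogarithm

open MeasureTheory intervalIntegral

theorem logSeries_ite_dvd (x : ℂ) {m : ℕ} (hm : m ≠ 0) :
    logSeries x (fun k => if m ∣ k then (k : ℂ)⁻¹ else 0) = dilog (x ^ m) / m ^ 2 := by
  have hsupp : Function.support (fun k : ℕ => x ^ k / k * if m ∣ k then (k : ℂ)⁻¹ else 0) ⊆
      Set.range fun n : ℕ => m * (n + 1) := by
    intro k hk
    obtain ⟨j, rfl⟩ : m ∣ k := by
      by_contra h
      simp [h] at hk
    obtain _ | j := j
    · simp at hk
    · exact ⟨j, rfl⟩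
  have hinj : Function.Injective fun n : ℕ => m * (n + 1) := fun a b h =>
    Nat.succ_injective (Nat.eq_of_mul_eq_mul_left (Nat.pos_of_ne_zero hm) h)
  rw [logSeries, ← hinj.tsum_eq hsupp, dilog, ← tsum_div_const]
  refine tsum_congr fun n => ?_
  have hmC : (m : ℂ) ≠ 0 := Nat.cast_ne_zero.2 hm
  have hnC : (n : ℂ) + 1 ≠ 0 := Nat.cast_add_one_ne_zero n
  rw [if_pos (dvd_mul_right m _)]
  push_cast
  field_simp
  ring

theorem dilog_zero : dilog 0 = 0 := by simp [dilog]

theorem hasSum_inv_succ_sq : HasSum (fun n : ℕ => 1 / ((n : ℝ) + 1) ^ 2) (Real.pi ^ 2 / 6) := by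
  simpa using (hasSum_nat_add_iff' 1).2 hasSum_zeta_two

theorem norm_dilog_term_le {z : ℂ} (hz : ‖z‖ ≤ 1) (n : ℕ) :
    ‖z ^ (n + 1) / ((n : ℂ) + 1) ^ 2‖ ≤ ‖z‖ * (1 / ((n : ℝ) + 1) ^ 2) := by
  have hcast : ‖(n : ℂ) + 1‖ = n + 1 := by exact_mod_cast Complex.norm_natCast (n + 1)
  rw [norm_div, norm_pow, norm_pow, hcast, pow_succ', mul_div_assoc]
  gcongr
  exact pow_le_one₀ (norm_nonneg _) hz

theorem norm_dilog_le {z : ℂ} (hz : ‖z‖ ≤ 1) : ‖dilog z‖ ≤ 5 / 3 * ‖z‖ :=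
  calc ‖dilog z‖ ≤ ‖z‖ * (Real.pi ^ 2 / 6) :=
        tsum_of_norm_bounded (hasSum_inv_succ_sq.mul_left ‖z‖) (norm_dilog_term_le hz)
    _ ≤ ‖z‖ * (5 / 3) := by
        have hpi : Real.pi ^ 2 / 6 ≤ 5 / 3 := by nlinarith [Real.pi_lt_d2, Real.pi_pos]
        exact mul_le_mul_of_nonneg_left hpi (norm_nonneg z)
    _ = 5 / 3 * ‖z‖ := mul_comm _ _

theorem differentiableOn_dilog : DifferentiableOn ℂ dilog (Metric.ball 0 1) := by
  unfold dilog
  refine differentiableOn_tsum_of_summable_norm hasSum_inv_succ_sq.summable (fun n => by fun_prop)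
    Metric.isOpen_ball fun n w hw => ?_
  have hw1 := (mem_ball_zero_iff.1 hw).le
  exact (norm_dilog_term_le hw1 n).trans (mul_le_of_le_one_left (by positivity) hw1)

theorem analyticAt_dilog {z : ℂ} (hz : ‖z‖ < 1) : AnalyticAt ℂ dilog z :=
  differentiableOn_dilog.analyticAt (Metric.isOpen_ball.mem_nhds (mem_ball_zero_iff.2 hz))

theorem norm_pow_lt_one {x : ℂ} (hx : ‖x‖ < 1) {k : ℕ} (hk : k ≠ 0) : ‖x ^ k‖ < 1 := by
  rw [norm_pow]
  exact pow_lt_one₀ (norm_nonneg _) hx hk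

theorem analyticAt_dilog_pow {x : ℂ} (hx : ‖x‖ < 1) {k : ℕ} (hk : k ≠ 0) :
    AnalyticAt ℂ (fun z => dilog (z ^ k)) x :=
  AnalyticAt.fun_comp (f := fun z => z ^ k) (analyticAt_dilog (norm_pow_lt_one hx hk)) (by fun_prop)

theorem intervalIntegrable_pow_mul_neg_log (n : ℕ) :
    IntervalIntegrable (fun t : ℝ => t ^ n * -Real.log t) volume 0 1 :=
  intervalIntegrable_log'.neg.continuousOn_mul (by fun_prop)

theorem integral_pow_mul_neg_log (n : ℕ) :
    ∫ t in (0 : ℝ)..1, t ^ n * -Real.log t = 1 / ((n : ℝ) + 1) ^ 2 := by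
  have hn : (n : ℝ) + 1 ≠ 0 := by positivity
  rw [integral_eq_sub_of_hasDerivAt_of_le (f := fun t : ℝ =>
    t ^ (n + 1) / ((n : ℝ) + 1) ^ 2 - t ^ n * (t * Real.log t) / (n + 1)) zero_le_one]
  · simp
  · have := Real.continuous_mul_log
    exact Continuous.continuousOn (by fun_prop)
  · intro t ht
    have h0 : t ≠ 0 := ht.1.ne'
    have hlog := ((hasDerivAt_pow (n + 1) t).mul (Real.hasDerivAt_log h0)).div_const ((n : ℝ) + 1)
    refine ((((hasDerivAt_pow (n + 1) t).div_const (((n : ℝ) + 1) ^ 2)).sub hlog).congr_deriv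
      ?_).congr_of_eventuallyEq (.of_forall fun s => ?_)
    · simp only [add_tsub_cancel_right]
      push_cast
      field_simp
      ring
    · simp only [Pi.sub_apply, Pi.mul_apply]
      ring
  · exact intervalIntegrable_pow_mul_neg_log n

theorem norm_ofReal_mul_le {t : ℝ} (ht : t ∈ Set.Icc (0 : ℝ) 1) (z : ℂ) : ‖(t : ℂ) * z‖ ≤ ‖z‖ := by
  rw [norm_mul, Complex.norm_real, Real.norm_of_nonneg ht.1]
  exact mul_le_of_le_one_left (norm_nonneg _) ht.2

theorem one_sub_ofReal_mul_ne_zero {z : ℂ} (hz : ‖z‖ < 1) {t : ℝ} (ht : t ∈ Set.Icc (0 : ℝ) 1) :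
    1 - t * z ≠ 0 := by
  simpa using one_sub_mul_ne_zero ((norm_ofReal_mul_le ht z).trans_lt hz) norm_one.le

theorem neg_log_nonneg {t : ℝ} (ht : t ∈ Set.Icc (0 : ℝ) 1) : 0 ≤ -Real.log t :=
  neg_nonneg.2 (Real.log_nonpos ht.1 ht.2)

theorem dilog_eq_integral {z : ℂ} (hz : ‖z‖ < 1) :
    dilog z = ∫ t in (0 : ℝ)..1, z / (1 - t * z) * (-Real.log t : ℝ) := by
  have hIcc {t : ℝ} (ht : t ∈ Set.uIoc (0 : ℝ) 1) : t ∈ Set.Icc (0 : ℝ) 1 :=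
    Set.Ioc_subset_Icc_self (by rwa [Set.uIoc_of_le zero_le_one] at ht)
  have hterm (n : ℕ) : ∫ t in (0 : ℝ)..1, z * (t * z) ^ n * (-Real.log t : ℝ) =
      z ^ (n + 1) / ((n : ℂ) + 1) ^ 2 := by
    rw [integral_congr (g := fun t => z ^ (n + 1) * (t ^ n * -Real.log t : ℝ))
      fun t _ => by push_cast; ring, intervalIntegral.integral_const_mul, integral_ofReal,
      integral_pow_mul_neg_log]
    push_cast
    ring
  rw [dilog, ← tsum_congr hterm]
  refine (hasSum_integral_of_dominated_convergence (fun n t => ‖z‖ ^ n * -Real.log t)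
    (fun n => ?_) (fun n => .of_forall fun t ht => ?_) (.of_forall fun t _ => ?_) ?_
    (.of_forall fun t ht => ?_)).tsum_eq
  · exact ((by fun_prop : Continuous fun t : ℝ => z * (t * z) ^ n).measurable.mul
      (measurable_ofReal.comp Real.measurable_log.neg)).aestronglyMeasurable
  · rw [norm_mul, Complex.norm_real, Real.norm_of_nonneg (neg_log_nonneg (hIcc ht)), norm_mul,
      norm_pow]
    gcongr
    · exact neg_log_nonneg (hIcc ht)
    · exact (mul_le_of_le_one_left (by positivity) hz.le).trans
        (pow_le_pow_left₀ (norm_nonneg _) (norm_ofReal_mul_le (hIcc ht) z) n)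
  · exact (summable_geometric_of_lt_one (norm_nonneg _) hz).mul_right _
  · simp only [tsum_mul_right]
    exact intervalIntegrable_log'.neg.const_mul _
  · rw [div_eq_mul_inv]
    exact ((hasSum_geometric_of_norm_lt_one
      ((norm_ofReal_mul_le (hIcc ht) z).trans_lt hz)).mul_left z).mul_right _

theorem continuousOn_dilogKernel {z : ℂ} (hz : ‖z‖ < 1) (c : ℂ) :
    ContinuousOn (fun t : ℝ => c * (z / (1 - t * z))) (Set.uIcc 0 1) := by
  rw [Set.uIcc_of_le zero_le_one]
  exact continuousOn_const.mul
    (continuousOn_const.div (by fun_prop) fun t ht => one_sub_ofReal_mul_ne_zero hz ht)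

theorem intervalIntegrable_re_mul_dilogKernel {z : ℂ} (hz : ‖z‖ < 1) (c : ℂ) :
    IntervalIntegrable (fun t : ℝ => (c * (z / (1 - t * z))).re * -Real.log t) volume 0 1 :=
  intervalIntegrable_log'.neg.continuousOn_mul
    (continuous_re.comp_continuousOn (continuousOn_dilogKernel hz c))

theorem re_mul_dilog_eq_integral {z : ℂ} (hz : ‖z‖ < 1) (c : ℂ) :
    (c * dilog z).re = ∫ t in (0 : ℝ)..1, (c * (z / (1 - t * z))).re * -Real.log t := by
  have hlog : IntervalIntegrable (fun t : ℝ => ((-Real.log t : ℝ) : ℂ)) volume 0 1 :=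
    have h := (intervalIntegrable_log' (a := 0) (b := 1)).neg
    ⟨h.1.ofReal, h.2.ofReal⟩
  have hint := hlog.continuousOn_mul (continuousOn_dilogKernel hz c)
  rw [dilog_eq_integral hz, ← intervalIntegral.integral_const_mul]
  simp only [← mul_assoc] at hint ⊢
  rw [← RCLike.re_eq_complex_re, ← intervalIntegral_re hint]
  exact integral_congr fun t _ => Complex.re_mul_ofReal _ _

theorem dilogKernel_eq {z : ℂ} (hz : ‖z‖ < 1) {t : ℝ} (ht : t ∈ Set.Icc (0 : ℝ) 1) :
    z / (1 - t * z) = (z - t * (‖z‖ ^ 2 : ℝ)) / (normSq (1 - t * z) : ℝ) := by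
  have hne := one_sub_ofReal_mul_ne_zero hz ht
  have hconj : (starRingEnd ℂ) (1 - t * z) ≠ 0 := (map_ne_zero (starRingEnd ℂ)).2 hne
  rw [← Complex.mul_conj, ← Complex.normSq_eq_norm_sq, ← Complex.mul_conj,
    div_eq_div_iff hne (mul_ne_zero hne hconj)]
  simp only [map_sub, map_one, map_mul, conj_ofReal]
  ring

theorem re_dilog_nonpos {z : ℂ} (hz : ‖z‖ < 1) (h : z.re ≤ 0) : (dilog z).re ≤ 0 := by
  have hneg : 0 ≤ (-1 * dilog z).re := by
    rw [re_mul_dilog_eq_integral hz]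
    refine integral_nonneg zero_le_one fun t ht => mul_nonneg ?_ (neg_log_nonneg ht)
    rw [dilogKernel_eq hz ht, ← mul_div_assoc, Complex.div_ofReal_re]
    refine div_nonneg ?_ (normSq_nonneg _)
    simpa [← ofReal_pow] using h.trans (mul_nonneg ht.1 (sq_nonneg ‖z‖))
  simpa using hneg

end Dilogarithm

section SquareRoot

/-- The square `(Re √A)²` of the real part of the principal square root, see `sqrt_re_sq`. -/
noncomputable def reSqrtSq (A : ℂ) : ℝ := (‖A‖ + A.re) / 2

theorem sqrt_sq (A : ℂ) : (A ^ (1 / 2 : ℂ)) ^ 2 = A := by simp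

theorem sqrt_re_nonneg (A : ℂ) : 0 ≤ (A ^ (1 / 2 : ℂ)).re := by
  rcases eq_or_ne A 0 with rfl | hA
  · simp
  have him : (log A * (1 / 2 : ℂ)).im = A.arg / 2 := by
    simp only [one_div, mul_im, log_re, log_im, inv_im, inv_re]
    norm_num
    ring
  rw [cpow_def_of_ne_zero hA, exp_re, him]
  refine mul_nonneg (Real.exp_pos _).le (Real.cos_nonneg_of_neg_pi_div_two_le_of_le ?_ ?_)
  · linarith [neg_pi_lt_arg A]
  · linarith [arg_le_pi A]

theorem reSqrtSq_sq (w : ℂ) : reSqrtSq (w ^ 2) = w.re ^ 2 := by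
  rw [reSqrtSq, norm_pow, Complex.sq_norm, normSq_apply, pow_two, mul_re]
  ring

theorem sqrt_re_sq (A : ℂ) : (A ^ (1 / 2 : ℂ)).re ^ 2 = reSqrtSq A := by
  rw [← reSqrtSq_sq, sqrt_sq]

theorem reSqrtSq_le_norm (A : ℂ) : reSqrtSq A ≤ ‖A‖ := by
  linarith [Complex.re_le_norm A, show reSqrtSq A = (‖A‖ + A.re) / 2 from rfl]

theorem re_one_add_mul_le (A : ℂ) {u : ℂ} (hu : ‖u‖ ≤ 1) :
    ((1 + u) * A).re ≤ 2 * reSqrtSq A := by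
  have hre : (u * A).re ≤ ‖A‖ := (Complex.re_le_norm _).trans (by
    rw [norm_mul]
    exact mul_le_of_le_one_left (norm_nonneg A) hu)
  rw [add_mul, one_mul, add_re, reSqrtSq]
  linarith

theorem mem_slitPlane_of_reSqrtSq_pos {A : ℂ} (h : 0 < reSqrtSq A) : A ∈ slitPlane := by
  by_contra hA
  rw [mem_slitPlane_iff, not_or, not_lt, not_not] at hA
  have hnorm : ‖A‖ = -A.re := by rw [← abs_of_nonpos hA.1, abs_re_eq_norm.2 hA.2]
  simp [reSqrtSq, hnorm] at h

end SquareRoot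

section DilogLowerBounds

open MeasureTheory intervalIntegral

variable {a b c : ℝ} {z : ℂ} {t : ℝ}

theorem normSq_one_sub_ofReal_mul (z : ℂ) (t : ℝ) :
    normSq (1 - t * z) = 1 - 2 * t * z.re + (t * ‖z‖) ^ 2 := by
  simp only [mul_pow, Complex.sq_norm, normSq_apply, sub_re, sub_im, one_re, one_im, re_ofReal_mul,
    im_ofReal_mul]
  ring

theorem re_rotated_dilogKernel (hz : ‖z‖ < 1) (hz0 : z ≠ 0) (ht : t ∈ Set.Icc (0 : ℝ) 1) :
    ((1 + (starRingEnd ℂ) z / ‖z‖) * (z / (1 - t * z))).re =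
      (‖z‖ + z.re) * (1 - t * ‖z‖) / normSq (1 - t * z) := by
  have hr : ‖z‖ ≠ 0 := norm_ne_zero_iff.2 hz0
  have hsq : z.re ^ 2 + z.im ^ 2 = ‖z‖ ^ 2 := by rw [Complex.sq_norm, normSq_apply]; ring
  rw [dilogKernel_eq hz ht, ← mul_div_assoc, div_ofReal_re, mul_re, add_re, add_im, div_ofReal_re,
    div_ofReal_im]
  simp only [one_re, conj_re, sub_re, one_im, conj_im, sub_im, re_ofReal_mul, im_ofReal_mul,
    ofReal_re, ofReal_im]
  congr 1
  field_simp
  linear_combination hsq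

theorem linear_mul_normSq_le (hb : 0 ≤ b)
    (hpoly : ∀ u ∈ Set.Icc (0 : ℝ) 1, (a - b * u) * (1 - 2 * c * u + u ^ 2) ≤ 1 - u)
    (hz : ‖z‖ < 1) (hcz : c * ‖z‖ ≤ z.re) (ht : t ∈ Set.Icc (0 : ℝ) 1) :
    (a - b * t) * normSq (1 - t * z) ≤ 1 - t * ‖z‖ := by
  have hu : t * ‖z‖ ∈ Set.Icc (0 : ℝ) 1 :=
    ⟨mul_nonneg ht.1 (norm_nonneg z), mul_le_one₀ ht.2 (norm_nonneg z) hz.le⟩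
  have hlin : a - b * t ≤ a - b * (t * ‖z‖) := by
    nlinarith [mul_le_of_le_one_right ht.1 hz.le]
  have hnormSq : normSq (1 - t * z) ≤ 1 - 2 * c * (t * ‖z‖) + (t * ‖z‖) ^ 2 := by
    rw [normSq_one_sub_ofReal_mul]
    nlinarith [mul_le_mul_of_nonneg_left hcz ht.1]
  rcases le_total (a - b * (t * ‖z‖)) 0 with hneg | hnonneg
  · exact (mul_nonpos_of_nonpos_of_nonneg (hlin.trans hneg) (normSq_nonneg _)).trans
      (sub_nonneg.2 hu.2)
  · calc (a - b * t) * normSq (1 - t * z) ≤ (a - b * (t * ‖z‖)) * normSq (1 - t * z) :=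
          mul_le_mul_of_nonneg_right hlin (normSq_nonneg _)
      _ ≤ (a - b * (t * ‖z‖)) * (1 - 2 * c * (t * ‖z‖) + (t * ‖z‖) ^ 2) :=
          mul_le_mul_of_nonneg_left hnormSq hnonneg
      _ ≤ 1 - t * ‖z‖ := hpoly _ hu

-- Choosing `u = z̄ / ‖z‖` in `re_one_add_mul_le` leaves an explicit positive kernel in the integral
-- for the dilogarithm, and `a - b t` is a linear minorant of it.
theorem mul_norm_le_reSqrtSq_dilog (hb : 0 ≤ b) (hab : 0 ≤ a - b / 4)
    (hpoly : ∀ u ∈ Set.Icc (0 : ℝ) 1, (a - b * u) * (1 - 2 * c * u + u ^ 2) ≤ 1 - u)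
    (hz : ‖z‖ < 1) (hcz : c * ‖z‖ ≤ z.re) :
    (1 + c) / 2 * (a - b / 4) * ‖z‖ ≤ reSqrtSq (dilog z) := by
  rcases eq_or_ne z 0 with rfl | hz0
  · simp [dilog_zero, reSqrtSq]
  have hrot := re_one_add_mul_le (dilog z) (u := (starRingEnd ℂ) z / ‖z‖) (by
    rw [norm_div, RCLike.norm_conj, Complex.norm_real, norm_norm]
    exact div_self_le_one _)
  have hnonneg : 0 ≤ ‖z‖ + z.re := by linarith [neg_le_of_abs_le (abs_re_le_norm z)]
  have hint0 := (intervalIntegrable_pow_mul_neg_log 0).const_mul a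
  have hint1 := (intervalIntegrable_pow_mul_neg_log 1).const_mul b
  have hlin : ∫ t in (0 : ℝ)..1, (‖z‖ + z.re) *
      (a * (t ^ 0 * -Real.log t) - b * (t ^ 1 * -Real.log t)) = (‖z‖ + z.re) * (a - b / 4) := by
    rw [intervalIntegral.integral_const_mul, integral_sub hint0 hint1,
      intervalIntegral.integral_const_mul, intervalIntegral.integral_const_mul,
      integral_pow_mul_neg_log, integral_pow_mul_neg_log]
    push_cast
    ring
  have hker : (‖z‖ + z.re) * (a - b / 4) ≤ ((1 + (starRingEnd ℂ) z / ‖z‖) * dilog z).re := by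
    rw [← hlin, re_mul_dilog_eq_integral hz]
    refine integral_mono_on zero_le_one ((hint0.sub hint1).const_mul _)
      (intervalIntegrable_re_mul_dilogKernel hz _) fun t ht => ?_
    have hpos := normSq_pos.2 (one_sub_ofReal_mul_ne_zero hz ht)
    calc (‖z‖ + z.re) * (a * (t ^ 0 * -Real.log t) - b * (t ^ 1 * -Real.log t))
        = (‖z‖ + z.re) * (a - b * t) * -Real.log t := by ring
      _ ≤ _ := by
          refine mul_le_mul_of_nonneg_right ?_ (neg_log_nonneg ht)
          rw [re_rotated_dilogKernel hz hz0 ht, mul_div_assoc]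
          exact mul_le_mul_of_nonneg_left ((le_div_iff₀ hpos).2
            (linear_mul_normSq_le hb hpoly hz hcz ht)) hnonneg
  have hc : (1 + c) * ‖z‖ * (a - b / 4) ≤ (‖z‖ + z.re) * (a - b / 4) :=
    mul_le_mul_of_nonneg_right (by linarith) hab
  linarith

theorem le_reSqrtSq_dilog_of_neg_sqrt_half_mul_norm_le (hz : ‖z‖ < 1)
    (h : -0.7072 * ‖z‖ ≤ z.re) : 0.0768 * ‖z‖ ≤ reSqrtSq (dilog z) := by
  refine le_trans ?_ (mul_norm_le_reSqrtSq_dilog (a := 0.88) (b := 1.42) (c := -0.7072)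
    (by norm_num) (by norm_num) (fun u hu => ?_) hz h)
  · nlinarith [norm_nonneg z]
  · nlinarith [mul_nonneg hu.1 (sq_nonneg (u - 0.25)), sq_nonneg (u - 0.25),
      mul_nonneg hu.1 (sub_nonneg.2 hu.2)]

theorem le_reSqrtSq_dilog_of_neg_half_mul_norm_le (hz : ‖z‖ < 1) (h : -(1 / 2) * ‖z‖ ≤ z.re) :
    0.14 * ‖z‖ ≤ reSqrtSq (dilog z) := by
  refine le_trans ?_ (mul_norm_le_reSqrtSq_dilog (a := 0.92) (b := 1.415) (c := -(1 / 2))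
    (by norm_num) (by norm_num) (fun u hu => ?_) hz h)
  · nlinarith [norm_nonneg z]
  · nlinarith [mul_nonneg hu.1 (sq_nonneg (u - 0.25)), sq_nonneg (u - 0.25),
      mul_nonneg hu.1 (sub_nonneg.2 hu.2)]

theorem le_reSqrtSq_dilog_of_re_nonneg (hz : ‖z‖ < 1) (h : 0 ≤ z.re) :
    0.34 * ‖z‖ ≤ reSqrtSq (dilog z) := by
  refine le_trans ?_ (mul_norm_le_reSqrtSq_dilog (a := 1) (b := 1.25) (c := 0)
    (by norm_num) (by norm_num) (fun u hu => ?_) hz (by simpa using h))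
  · nlinarith [norm_nonneg z]
  · nlinarith [mul_nonneg hu.1 (sq_nonneg (u - 0.4))]

theorem le_reSqrtSq_dilog_of_half_mul_norm_le (hz : ‖z‖ < 1) (h : 1 / 2 * ‖z‖ ≤ z.re) :
    0.56 * ‖z‖ ≤ reSqrtSq (dilog z) := by
  refine le_trans ?_ (mul_norm_le_reSqrtSq_dilog (a := 1) (b := 1) (c := 1 / 2)
    (by norm_num) (by norm_num) (fun u hu => ?_) hz h)
  · nlinarith [norm_nonneg z]
  · nlinarith [mul_nonneg hu.1 (sq_nonneg (u - 1)), sq_nonneg (u - 1)]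

end DilogLowerBounds

section RegionComparison

variable {x : ℂ} {j k m : ℕ}

/-- The analytic function `√Li₂(xᵏ) / k`, whose real part is `fk k x`. -/
noncomputable def sqrtDilog (k : ℕ) (x : ℂ) : ℂ := 1 / k * dilog (x ^ k) ^ (1 / 2 : ℂ)

theorem sqrtDilog_re (k : ℕ) (x : ℂ) : (sqrtDilog k x).re = fk k x := by
  rw [sqrtDilog, fk, show (1 / k : ℂ) = (1 / k : ℝ) by push_cast; rfl, re_ofReal_mul]

theorem sqrtDilog_sq (k : ℕ) (x : ℂ) : sqrtDilog k x ^ 2 = dilog (x ^ k) / k ^ 2 := by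
  rw [sqrtDilog, mul_pow, sqrt_sq]
  ring

theorem sqrtDilog_two_sq (x : ℂ) : sqrtDilog 2 x ^ 2 = dilog (x ^ 2) / 4 := by
  rw [sqrtDilog_sq]
  norm_num

theorem fk_nonneg (k : ℕ) (x : ℂ) : 0 ≤ fk k x :=
  mul_nonneg (by positivity) (sqrt_re_nonneg _)

theorem fk_sq (k : ℕ) (x : ℂ) : fk k x ^ 2 = reSqrtSq (dilog (x ^ k)) / k ^ 2 := by
  rw [fk, mul_pow, sqrt_re_sq]
  ring

theorem fk_one_sq (x : ℂ) : fk 1 x ^ 2 = reSqrtSq (dilog x) := by simp [fk_sq]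

theorem fk_lt_fk_of_sq_lt_sq (h : fk j x ^ 2 < fk k x ^ 2) : fk j x < fk k x :=
  lt_of_pow_lt_pow_left₀ 2 (fk_nonneg k x) h

theorem analyticAt_sqrtDilog (hx : ‖x‖ < 1) (hk : k ≠ 0) (hpos : 0 < fk k x) :
    AnalyticAt ℂ (sqrtDilog k) x := by
  have hslit : dilog (x ^ k) ∈ slitPlane := by
    refine mem_slitPlane_of_reSqrtSq_pos ?_
    have hsq := pow_pos hpos 2
    rw [fk_sq] at hsq
    exact (div_pos_iff_of_pos_right (by positivity)).1 hsq
  exact analyticAt_const.mul ((analyticAt_dilog_pow hx hk).cpow analyticAt_const hslit)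

theorem fk_sq_le (hx : ‖x‖ < 1) (hmk : m ≤ k) (hm : m ≠ 0) (hjk : j ≤ k) :
    fk k x ^ 2 ≤ 5 / 3 * ‖x‖ ^ j / m ^ 2 := by
  have hnorm : reSqrtSq (dilog (x ^ k)) ≤ 5 / 3 * ‖x‖ ^ j :=
    calc reSqrtSq (dilog (x ^ k)) ≤ ‖dilog (x ^ k)‖ := reSqrtSq_le_norm _
      _ ≤ 5 / 3 * ‖x ^ k‖ := norm_dilog_le (norm_pow_lt_one hx (by omega)).le
      _ ≤ 5 / 3 * ‖x‖ ^ j := by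
          rw [norm_pow]
          gcongr 5 / 3 * ?_
          exact pow_le_pow_of_le_one (norm_nonneg x) hx.le hjk
  rw [fk_sq]
  gcongr

theorem fk_sq_le_of_re_nonpos (hx : ‖x‖ < 1) (hk : k ≠ 0) (hjk : j ≤ k) (hre : (x ^ k).re ≤ 0) :
    fk k x ^ 2 ≤ 5 / 6 * ‖x‖ ^ j / k ^ 2 := by
  have hxk := norm_pow_lt_one hx hk
  have hnorm : ‖dilog (x ^ k)‖ ≤ 5 / 3 * ‖x‖ ^ j :=
    calc ‖dilog (x ^ k)‖ ≤ 5 / 3 * ‖x ^ k‖ := norm_dilog_le hxk.le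
      _ ≤ 5 / 3 * ‖x‖ ^ j := by
          rw [norm_pow]
          gcongr 5 / 3 * ?_
          exact pow_le_pow_of_le_one (norm_nonneg x) hx.le hjk
  rw [fk_sq]
  gcongr
  linarith [re_dilog_nonpos hxk hre, show reSqrtSq (dilog (x ^ k)) = _ / 2 from rfl]

theorem fk_sq_lt_of_five_le_or (hx : ‖x‖ < 1) (hx0 : x ≠ 0) (hj : j ≤ 4)
    (hk : 5 ≤ k ∨ k = 4 ∧ (x ^ 4).re ≤ 0) : fk k x ^ 2 < 0.0768 * ‖x‖ ^ j := by
  have hpos : 0 < ‖x‖ ^ j := by positivity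
  rcases hk with hk | ⟨rfl, hre⟩
  · have := fk_sq_le hx hk (by norm_num) (hj.trans (by omega))
    push_cast at this
    linarith
  · have := fk_sq_le_of_re_nonpos hx four_ne_zero hj hre
    push_cast at this
    linarith

theorem fk_sq_lt_of_four_le (hx : ‖x‖ < 1) (hx0 : x ≠ 0) (hk : 4 ≤ k) (hj : j ≤ 4) :
    fk k x ^ 2 < 0.14 * ‖x‖ ^ j := by
  have hpos : 0 < ‖x‖ ^ j := by positivity
  have := fk_sq_le hx hk four_ne_zero (hj.trans hk)
  push_cast at this
  linarith

theorem sq_re (z : ℂ) : (z ^ 2).re = z.re ^ 2 - z.im ^ 2 := by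
  rw [pow_two, mul_re]
  ring

theorem sq_norm_eq_re_sq_add_im_sq (z : ℂ) : ‖z‖ ^ 2 = z.re ^ 2 + z.im ^ 2 := by
  rw [Complex.sq_norm, normSq_apply]
  ring

theorem fk_lt_fk_one_of_neg_half_le (hx : ‖x‖ < 1) (hx0 : x ≠ 0) (hk : 4 ≤ k)
    (hre : -(1 / 2) * ‖x‖ ≤ x.re) : fk k x < fk 1 x := by
  refine fk_lt_fk_of_sq_lt_sq ((fk_sq_lt_of_four_le hx hx0 hk (j := 1) (by norm_num)).trans_le ?_)
  rw [pow_one, fk_one_sq]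
  exact le_reSqrtSq_dilog_of_neg_half_mul_norm_le hx hre

theorem fk_lt_fk_one_of_re_sq_neg (hx : ‖x‖ < 1) (hx0 : x ≠ 0) (hk : 4 ≤ k)
    (hre : x.re < -(1 / 2) * ‖x‖) (hre2 : (x ^ 2).re < 0) : fk k x < fk 1 x := by
  have hnorm := sq_norm_eq_re_sq_add_im_sq x
  rw [sq_re] at hre2
  have hlow : -0.7072 * ‖x‖ ≤ x.re := by
    have hsq : x.re ^ 2 < (0.7072 * ‖x‖) ^ 2 := by nlinarith
    linarith [(abs_lt.1 (abs_lt_of_sq_lt_sq hsq (by positivity))).1]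
  have hre4 : (x ^ 4).re ≤ 0 := by
    have him : x.im ^ 2 ≤ 3 * x.re ^ 2 := by nlinarith [norm_nonneg x]
    have hre4_eq : (x ^ 4).re = (x.re ^ 2 - x.im ^ 2) ^ 2 - 4 * x.re ^ 2 * x.im ^ 2 := by
      rw [show x ^ 4 = (x ^ 2) ^ 2 by ring, sq_re, sq_re, pow_two x, mul_im]
      ring
    rw [hre4_eq]
    nlinarith [mul_nonneg (sub_nonneg.2 him) (sub_nonneg.2 hre2.le), sq_nonneg x.re,
      sq_nonneg x.im, sq_nonneg (x.re * x.im), sq_nonneg (x.re ^ 2 - x.im ^ 2)]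
  refine fk_lt_fk_of_sq_lt_sq
    ((fk_sq_lt_of_five_le_or hx hx0 (j := 1) (by norm_num) ?_).trans_le ?_)
  · exact hk.lt_or_eq.imp id fun h => ⟨h.symm, hre4⟩
  · rw [pow_one, fk_one_sq]
    exact le_reSqrtSq_dilog_of_neg_sqrt_half_mul_norm_le hx hlow

theorem fk_lt_fk_two_of_re_sq_nonneg (hx : ‖x‖ < 1) (hx0 : x ≠ 0) (hk : 4 ≤ k)
    (hre2 : 0 ≤ (x ^ 2).re) : fk k x < fk 2 x := by
  have hx2 := norm_pow_lt_one hx two_ne_zero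
  have hfk2 : fk 2 x ^ 2 = reSqrtSq (dilog (x ^ 2)) / 4 := by rw [fk_sq]; norm_num
  have hpos : 0 < ‖x‖ ^ 2 := by positivity
  apply fk_lt_fk_of_sq_lt_sq
  by_cases hcase : 5 ≤ k ∨ k = 4 ∧ (x ^ 4).re ≤ 0
  · have hup := fk_sq_lt_of_five_le_or hx hx0 (j := 2) (by norm_num) hcase
    have hlow := le_reSqrtSq_dilog_of_re_nonneg hx2 hre2
    rw [norm_pow] at hlow
    linarith
  · have hre4 : 0 < ((x ^ 2) ^ 2).re := by
      rw [← pow_mul]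
      exact not_le.1 fun h => hcase (hk.lt_or_eq.imp id fun h4 => ⟨h4.symm, h⟩)
    have hhalf : 1 / 2 * ‖x ^ 2‖ ≤ (x ^ 2).re := by
      have hnorm := sq_norm_eq_re_sq_add_im_sq (x ^ 2)
      rw [sq_re (x ^ 2)] at hre4
      exact le_of_sq_le_sq (by nlinarith) hre2
    have hup := fk_sq_lt_of_four_le hx hx0 hk (j := 2) (by norm_num)
    have hlow := le_reSqrtSq_dilog_of_half_mul_norm_le hx2 hhalf
    rw [norm_pow] at hlow
    linarith

theorem fk_lt_max_of_four_le (hx : ‖x‖ < 1) (hx0 : x ≠ 0) (hk : 4 ≤ k) :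
    fk k x < max (fk 1 x) (fk 2 x) := by
  rcases le_or_gt (-(1 / 2) * ‖x‖) x.re with hre | hre
  · exact lt_max_of_lt_left (fk_lt_fk_one_of_neg_half_le hx hx0 hk hre)
  rcases lt_or_ge (x ^ 2).re 0 with hre2 | hre2
  · exact lt_max_of_lt_left (fk_lt_fk_one_of_re_sq_neg hx hx0 hk hre hre2)
  · exact lt_max_of_lt_right (fk_lt_fk_two_of_re_sq_nonneg hx hx0 hk hre2)

theorem fk_lt_fk_of_small_pos {t : ℝ} (ht0 : 0 < t) (ht : t ≤ 1 / 4) (hj : j ≠ 0) (hjk : j < k) :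
    fk k t < fk j t := by
  have hnorm : ‖(t : ℂ)‖ = t := by rw [Complex.norm_real, Real.norm_of_nonneg ht0.le]
  have ht1 : ‖(t : ℂ)‖ < 1 := by linarith
  have : (0 : ℝ) < j := by exact_mod_cast Nat.pos_of_ne_zero hj
  have hlow := le_reSqrtSq_dilog_of_half_mul_norm_le (norm_pow_lt_one ht1 hj) (by
    rw [norm_pow, hnorm, ← ofReal_pow, ofReal_re]
    linarith [pow_pos ht0 j])
  rw [norm_pow, hnorm] at hlow
  apply fk_lt_fk_of_sq_lt_sq
  calc fk k t ^ 2 ≤ 5 / 3 * ‖(t : ℂ)‖ ^ (j + 1) / j ^ 2 := fk_sq_le ht1 hjk.le hj hjk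
    _ = (5 / 3 * t) * t ^ j / j ^ 2 := by rw [hnorm]; ring
    _ < 0.56 * t ^ j / j ^ 2 := by
        gcongr
        linarith
    _ ≤ fk j t ^ 2 := by
        rw [fk_sq]
        gcongr

end RegionComparison

section StrictRegion

variable {x : ℂ} {j k : ℕ}

theorem eventually_eq_of_isLocalMax_re {f : ℂ → ℂ} {z : ℂ} (hf : AnalyticAt ℂ f z)
    (hmax : IsLocalMax (fun w => (f w).re) z) : ∀ᶠ w in 𝓝 z, f w = f z := by
  refine hf.eventually_constant_or_nhds_le_map_nhds.resolve_right fun hopen => ?_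
  have hnhds : {w : ℂ | w.re ≤ (f z).re} ∈ 𝓝 (f z) := hopen hmax
  rw [← mem_interior_iff_mem_nhds, interior_setOfPred_re_le] at hnhds
  exact lt_irrefl (f z).re hnhds

theorem analyticAt_sqrtDilog_sq (hx : ‖x‖ < 1) (hk : k ≠ 0) :
    AnalyticAt ℂ (fun z => sqrtDilog k z ^ 2) x := by
  simp only [sqrtDilog_sq]
  exact (analyticAt_dilog_pow hx hk).div_const

theorem fk_ne_fk_quarter (hj : j ≠ 0) (hk : k ≠ 0) (hjk : j ≠ k) :
    fk j (1 / 4 : ℝ) ≠ fk k (1 / 4 : ℝ) := by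
  rcases lt_or_gt_of_ne hjk with h | h
  · exact (fk_lt_fk_of_small_pos (by norm_num) le_rfl hj h).ne'
  · exact (fk_lt_fk_of_small_pos (by norm_num) le_rfl hk h).ne

-- Squaring twice removes the roots from `√A - √B = c`, so the relation extends to the whole disk.
theorem not_eventually_sqrtDilog_sub_eq (hx : ‖x‖ < 1) (hj : j ≠ 0) (hk : k ≠ 0) (hjk : j ≠ k)
    (c : ℂ) : ¬ ∀ᶠ z in 𝓝 x, sqrtDilog j z - sqrtDilog k z = c := by
  intro hconst
  have heq : Set.EqOn (fun z => (sqrtDilog j z ^ 2 - sqrtDilog k z ^ 2 - c ^ 2) ^ 2)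
      (fun z => 4 * c ^ 2 * sqrtDilog k z ^ 2) (Metric.ball 0 1) := by
    refine AnalyticOnNhd.eqOn_of_preconnected_of_eventuallyEq (𝕜 := ℂ)
      (fun z hz => ?_) (fun z hz => ?_) (convex_ball _ _).isPreconnected (mem_ball_zero_iff.2 hx) ?_
    · have hz1 := mem_ball_zero_iff.1 hz
      exact (((analyticAt_sqrtDilog_sq hz1 hj).sub (analyticAt_sqrtDilog_sq hz1 hk)).sub
        analyticAt_const).pow 2
    · exact analyticAt_const.mul (analyticAt_sqrtDilog_sq (mem_ball_zero_iff.1 hz) hk)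
    · filter_upwards [hconst] with z hz
      rw [← hz]
      ring
  have hc : c = 0 := by
    have hzero := heq (Metric.mem_ball_self one_pos)
    simpa [sqrtDilog_sq, hj, hk, dilog_zero] using hzero
  have hquarter : sqrtDilog j (1 / 4 : ℝ) ^ 2 = sqrtDilog k (1 / 4 : ℝ) ^ 2 := by
    have hval := heq (x := ((1 / 4 : ℝ) : ℂ))
      (by rw [mem_ball_zero_iff, Complex.norm_real]; norm_num)
    simpa [hc, sub_eq_zero] using hval
  have hre := congrArg reSqrtSq hquarter
  rw [reSqrtSq_sq, reSqrtSq_sq, sqrtDilog_re, sqrtDilog_re] at hre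
  exact fk_ne_fk_quarter hj hk hjk ((sq_eq_sq₀ (fk_nonneg _ _) (fk_nonneg _ _)).1 hre)

theorem fk_lt_fk_of_eventually_le (hx : ‖x‖ < 1) (hj : j ≠ 0) (hk : k ≠ 0) (hjk : j ≠ k)
    (hpos : 0 < fk k x) (hle : ∀ᶠ z in 𝓝 x, fk j z ≤ fk k z) : fk j x < fk k x := by
  refine lt_of_le_of_ne hle.self_of_nhds fun heq => ?_
  refine not_eventually_sqrtDilog_sub_eq hx hj hk hjk _
    (eventually_eq_of_isLocalMax_re
      ((analyticAt_sqrtDilog hx hj (heq ▸ hpos)).sub (analyticAt_sqrtDilog hx hk hpos)) ?_)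
  filter_upwards [hle] with z hz
  simp only [sub_re, sqrtDilog_re, heq, sub_self]
  linarith

theorem tendsto_fk_atTop (hx : ‖x‖ < 1) : Tendsto (fun k => fk k x) atTop (𝓝 0) := by
  have hsq : Tendsto (fun k => fk k x ^ 2) atTop (𝓝 0) := by
    have hgeom : Tendsto (fun k : ℕ => 5 / 3 * ‖x‖ ^ k / ((1 : ℕ) : ℝ) ^ 2) atTop (𝓝 0) := by
      simpa using (tendsto_pow_atTop_nhds_zero_of_lt_one (norm_nonneg x) hx).const_mul (5 / 3)
    refine squeeze_zero' (Eventually.of_forall fun k => sq_nonneg _) ?_ hgeom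
    filter_upwards [eventually_ge_atTop 1] with k hk
    exact fk_sq_le hx hk one_ne_zero le_rfl
  simpa [Real.sqrt_sq, fk_nonneg] using hsq.sqrt

theorem exists_lt_forall_le_of_tendsto {a : ℕ → ℝ} {b L : ℝ} (ha : Tendsto a atTop (𝓝 L))
    (hL : L < b) (hab : ∀ k, a k < b) : ∃ c < b, ∀ k, a k ≤ c := by
  obtain ⟨c, hc, hmax⟩ := ha.isCompact_insert_range.exists_isGreatest (Set.insert_nonempty _ _)
  refine ⟨c, ?_, fun k => hmax (Set.mem_insert_of_mem _ (Set.mem_range_self k))⟩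
  rcases hc with rfl | ⟨k, rfl⟩
  exacts [hL, hab k]

theorem zero_notMem_interior_R2 : (0 : ℂ) ∉ interior R2 := by
  intro h
  have hlim : Tendsto (fun t : ℝ => (t : ℂ)) (𝓝[>] 0) (𝓝 0) :=
    tendsto_nhdsWithin_of_tendsto_nhds (by simpa using continuous_ofReal.tendsto 0)
  have hmem : ∀ᶠ t : ℝ in 𝓝[>] 0, (t : ℂ) ∈ R2 := hlim (mem_interior_iff_mem_nhds.1 h)
  obtain ⟨t, ht, ht0, ht4⟩ := (hmem.and (Ioc_mem_nhdsGT (by norm_num : (0 : ℝ) < 1 / 4))).exists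
  exact (fk_lt_fk_of_small_pos ht0 ht4 one_ne_zero one_lt_two).not_ge ht.2.1

theorem fk_lt_fk_two_of_mem_interior (hx : x ∈ interior R2) (hk : k ≠ 2) : fk k x < fk 2 x := by
  obtain ⟨hx1, h12, -⟩ := interior_subset hx
  have hx0 : x ≠ 0 := ne_of_mem_of_not_mem hx zero_notMem_interior_R2
  have hfar : ∀ m, 4 ≤ m → fk m x < fk 2 x := fun m hm => by
    simpa [max_eq_right h12] using fk_lt_max_of_four_le hx1 hx0 hm
  have hpos : 0 < fk 2 x := (fk_nonneg 4 x).trans_lt (hfar 4 le_rfl)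
  have hnhds : ∀ᶠ z in 𝓝 x, z ∈ R2 := mem_interior_iff_mem_nhds.1 hx
  rcases (by omega : k = 0 ∨ k = 1 ∨ k = 3 ∨ 4 ≤ k) with rfl | rfl | rfl | hk4
  · simpa [fk] using hpos
  · exact fk_lt_fk_of_eventually_le hx1 one_ne_zero two_ne_zero hk hpos
      (hnhds.mono fun z hz => hz.2.1)
  · exact fk_lt_fk_of_eventually_le hx1 three_ne_zero two_ne_zero hk hpos
      (hnhds.mono fun z hz => hz.2.2)
  · exact hfar k hk4

theorem fk_two_pos_of_mem_interior (hx : x ∈ interior R2) : 0 < fk 2 x :=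
  (fk_nonneg 0 x).trans_lt (fk_lt_fk_two_of_mem_interior hx (by norm_num))

theorem exists_fk_le_of_mem_interior (hx : x ∈ interior R2) :
    ∃ c < fk 2 x, ∀ k ≠ 2, fk k x ≤ c := by
  have hpos := fk_two_pos_of_mem_interior hx
  have hlim : Tendsto (Function.update (fun k => fk k x) 2 0) atTop (𝓝 0) := by
    refine (tendsto_fk_atTop (interior_subset hx).1).congr' ?_
    filter_upwards [eventually_gt_atTop 2] with k hk
    rw [Function.update_of_ne hk.ne']
  obtain ⟨c, hc, hle⟩ := exists_lt_forall_le_of_tendsto hlim hpos fun k => by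
    rcases eq_or_ne k 2 with rfl | hk
    · simpa using hpos
    · simpa [hk] using fk_lt_fk_two_of_mem_interior hx hk
  exact ⟨c, hc, fun k hk => by simpa [hk] using hle k⟩

end StrictRegion

section ExpNearZero

variable {z : ℂ} {M : ℝ}

theorem re_le_norm_exp_sub {e : ℂ} (z : ℂ) (he : ‖e‖ = 1) : z.re ≤ ‖exp z - e‖ :=
  calc z.re ≤ Real.exp z.re - 1 := by linarith [Real.add_one_le_exp z.re]
    _ = ‖exp z‖ - ‖e‖ := by rw [norm_exp, he]
    _ ≤ ‖exp z - e‖ := norm_sub_norm_le _ _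

theorem norm_inv_exp_sub_one_sub_inv_le (hz0 : z ≠ 0) (hz : ‖z‖ ≤ 1 / 2) :
    ‖(exp z - 1)⁻¹ - z⁻¹‖ ≤ 2 := by
  have hpos : 0 < ‖z‖ := norm_pos_iff.2 hz0
  have hquad : ‖z - (exp z - 1)‖ ≤ ‖z‖ ^ 2 := by
    rw [norm_sub_rev]
    exact norm_exp_sub_one_sub_id_le (by linarith)
  have hlow : ‖z‖ / 2 ≤ ‖exp z - 1‖ := by
    have := norm_sub_norm_le z (exp z - 1)
    nlinarith
  rw [inv_sub_inv (norm_pos_iff.1 (by linarith)) hz0, norm_div, norm_mul,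
    div_le_iff₀ (mul_pos (by linarith) hpos)]
  nlinarith

theorem norm_inv_exp_add_one_le (hz : ‖z‖ ≤ 1 / 2) : ‖(exp z + 1)⁻¹‖ ≤ 1 := by
  have him := abs_le.1 ((abs_im_le_norm z).trans hz)
  have hcos : 0 ≤ Real.cos z.im :=
    Real.cos_nonneg_of_mem_Icc ⟨by linarith [Real.pi_gt_three], by linarith [Real.pi_gt_three]⟩
  have hre : 1 ≤ (exp z + 1).re := by
    rw [add_re, exp_re, one_re]
    linarith [mul_nonneg (Real.exp_pos z.re).le hcos]
  rw [norm_inv]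
  exact inv_le_one_of_one_le₀ (hre.trans (re_le_norm _))

theorem norm_inv_exp_sub_le {e : ℂ} (he : ‖e‖ = 1) (hz : 1 / 2 ≤ ‖z‖) (hM : 0 < M)
    (hzM : ‖z‖ ≤ M * z.re) : ‖(exp z - e)⁻¹‖ ≤ 2 * M := by
  have hre : (2 * M)⁻¹ ≤ z.re := by
    rw [inv_le_iff_one_le_mul₀ (by positivity)]
    linarith
  rw [norm_inv]
  exact inv_le_of_inv_le₀ (by positivity) (hre.trans (re_le_norm_exp_sub z he))

theorem tendsto_inv_exp_sub_one_sub_inv :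
    Tendsto (fun z : ℂ => (exp z - 1)⁻¹ - z⁻¹) (𝓝[≠] 0) (𝓝 (-(1 / 2))) := by
  have hslope : Tendsto (fun z : ℂ => (exp z - 1) / z) (𝓝[≠] 0) (𝓝 1) := by
    simpa [div_eq_inv_mul] using (hasDerivAt_exp (0 : ℂ)).tendsto_slope_zero
  have hsecond : Tendsto (fun z : ℂ => (exp z - 1 - z) / z ^ 2) (𝓝[≠] 0) (𝓝 (1 / 2)) := by
    have htaylor := (exp_sub_sum_range_succ_isLittleO_pow 2).tendsto_div_nhds_zero
    rw [← zero_add (1 / 2 : ℂ)]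
    refine ((htaylor.mono_left nhdsWithin_le_nhds).add_const (1 / 2 : ℂ)).congr' ?_
    filter_upwards [self_mem_nhdsWithin] with z (hz : z ≠ 0)
    simp only [Finset.sum_range_succ, Finset.sum_range_zero, Nat.factorial]
    push_cast
    field_simp
    ring
  have hlim := (hsecond.div hslope one_ne_zero).neg
  rw [div_one] at hlim
  refine hlim.congr' ?_
  filter_upwards [self_mem_nhdsWithin, hslope.eventually_ne one_ne_zero] with z (hz : z ≠ 0) hne
  have hexp : exp z - 1 ≠ 0 := (div_ne_zero_iff.1 hne).1
  simp only [Pi.div_apply]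
  field_simp
  ring

end ExpNearZero

/-- The `k`-th coefficient of `logGenFun` at `-exp s` with its pole `1 / (ks)` at `s = 0`, present
for even `k` only, removed. -/
noncomputable def polarRemainder (k : ℕ) (s : ℂ) : ℂ :=
  ((-exp s) ^ k - 1)⁻¹ - if 2 ∣ k then (k * s)⁻¹ else 0

/-- The part of `logGenFun x (-exp s)` that stays bounded as `s → 0`, see `logGenFun_neg_exp`. -/
noncomputable def logGenFunRemainder (x s : ℂ) : ℂ := logSeries x (polarRemainder · s)

section PolarRemainder

variable {k : ℕ} {s x : ℂ} {M : ℝ}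

theorem polarRemainder_of_even (hk : 2 ∣ k) (s : ℂ) :
    polarRemainder k s = (exp (k * s) - 1)⁻¹ - (k * s)⁻¹ := by
  rw [polarRemainder, if_pos hk, (even_iff_two_dvd.2 hk).neg_pow, exp_nat_mul]

theorem polarRemainder_of_odd (hk : ¬ 2 ∣ k) (s : ℂ) :
    polarRemainder k s = -(exp (k * s) + 1)⁻¹ := by
  have hodd : Odd k := Nat.not_even_iff_odd.1 (mt even_iff_two_dvd.1 hk)
  rw [polarRemainder, if_neg hk, hodd.neg_pow, exp_nat_mul, sub_zero, ← neg_add', inv_neg]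

theorem norm_polarRemainder_le (hs : 0 < s.re) (hsM : ‖s‖ ≤ M * s.re) (hk : k ≠ 0) :
    ‖polarRemainder k s‖ ≤ 2 * M + 2 := by
  have hs0 : s ≠ 0 := fun h => by simp [h] at hs
  have hM : 0 < M := pos_of_mul_pos_left ((norm_pos_iff.2 hs0).trans_le hsM) hs.le
  have hz0 : (k : ℂ) * s ≠ 0 := mul_ne_zero (Nat.cast_ne_zero.2 hk) hs0
  have hzM : ‖k * s‖ ≤ M * (k * s).re := by
    rw [norm_mul, norm_natCast, ← ofReal_natCast, re_ofReal_mul, mul_left_comm]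
    gcongr
  by_cases hdvd : 2 ∣ k
  · rw [polarRemainder_of_even hdvd]
    rcases le_total ‖k * s‖ (1 / 2) with hz | hz
    · linarith [norm_inv_exp_sub_one_sub_inv_le hz0 hz]
    · have hinv : ‖(k * s)⁻¹‖ ≤ 2 := by
        rw [norm_inv]
        exact inv_le_of_inv_le₀ two_pos (by linarith)
      linarith [norm_sub_le (exp (k * s) - 1)⁻¹ (k * s)⁻¹, norm_inv_exp_sub_le norm_one hz hM hzM]
  · rw [polarRemainder_of_odd hdvd, norm_neg]
    rcases le_total ‖k * s‖ (1 / 2) with hz | hz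
    · linarith [norm_inv_exp_add_one_le hz]
    · have hfar := norm_inv_exp_sub_le (e := -1) (by simp) hz hM hzM
      rw [sub_neg_eq_add] at hfar
      linarith

theorem tendsto_polarRemainder (hk : k ≠ 0) :
    Tendsto (polarRemainder k) (𝓝[≠] 0) (𝓝 (-(1 / 2))) := by
  have hk0 : (k : ℂ) ≠ 0 := Nat.cast_ne_zero.2 hk
  have hmul : Tendsto (fun s : ℂ => k * s) (𝓝 0) (𝓝 0) := by
    simpa using (continuous_const_mul (k : ℂ)).tendsto 0
  by_cases hdvd : 2 ∣ k
  · simp_rw [funext (polarRemainder_of_even hdvd)]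
    refine tendsto_inv_exp_sub_one_sub_inv.comp (tendsto_nhdsWithin_iff.2
      ⟨hmul.mono_left nhdsWithin_le_nhds, ?_⟩)
    filter_upwards [self_mem_nhdsWithin] with s hs
    exact mul_ne_zero hk0 hs
  · simp_rw [funext (polarRemainder_of_odd hdvd)]
    have hexp : Tendsto (fun s : ℂ => exp (k * s) + 1) (𝓝 0) (𝓝 2) := by
      have := ((continuous_exp.tendsto 0).comp hmul).add_const 1
      rwa [exp_zero, one_add_one_eq_two] at this
    rw [one_div]
    exact (hexp.inv₀ two_ne_zero).neg.mono_left nhdsWithin_le_nhds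

theorem norm_logGenFunRemainder_le (hx : ‖x‖ < 1) (hs : 0 < s.re) (hsM : ‖s‖ ≤ M * s.re) :
    ‖logGenFunRemainder x s‖ ≤ (1 - ‖x‖)⁻¹ * (2 * M + 2) :=
  norm_logSeries_le hx fun _ hk => norm_polarRemainder_le hs hsM hk

theorem tendsto_logGenFunRemainder {ι : Type*} {l : Filter ι} {y t : ι → ℂ} (hx : ‖x‖ < 1)
    (hy : Tendsto y l (𝓝 x)) (ht : Tendsto t l (𝓝 0)) (hre : ∀ᶠ i in l, 0 < (t i).re)
    (hM : ∀ᶠ i in l, ‖t i‖ ≤ M * (t i).re) :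
    Tendsto (fun i => logGenFunRemainder (y i) (t i)) l
      (𝓝 (logSeries x fun _ => -(1 / 2))) := by
  have ht0 : Tendsto t l (𝓝[≠] 0) := tendsto_nhdsWithin_iff.2
    ⟨ht, hre.mono fun i hi h0 => by simp [Set.mem_singleton_iff.1 h0] at hi⟩
  refine tendsto_logSeries (C := 2 * M + 2) hx hy
    (fun k hk => (tendsto_polarRemainder hk).comp ht0) ?_
  filter_upwards [hre, hM] with i hi hiM k hk
  exact norm_polarRemainder_le hi hiM hk

theorem logGenFun_neg_exp (hx : ‖x‖ < 1) (hs : 0 < s.re) :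
    logGenFun x (-exp s) = dilog (x ^ 2) / 4 / s + logGenFunRemainder x s := by
  have hpole : Summable fun k : ℕ => x ^ k / k * (s⁻¹ * if 2 ∣ k then (k : ℂ)⁻¹ else 0) := by
    refine summable_logSeries (C := ‖s⁻¹‖) hx fun k hk => ?_
    rw [norm_mul]
    refine mul_le_of_le_one_right (norm_nonneg _) ?_
    split_ifs
    · rw [norm_inv, norm_natCast]
      exact inv_le_one_of_one_le₀ (by exact_mod_cast Nat.one_le_iff_ne_zero.2 hk)
    · simp
  have hrem : Summable fun k : ℕ => x ^ k / k * polarRemainder k s :=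
    summable_logSeries hx fun k hk =>
      norm_polarRemainder_le (M := ‖s‖ / s.re) hs (div_mul_cancel₀ _ hs.ne').ge hk
  have hsum : logSeries x (fun k => s⁻¹ * if 2 ∣ k then (k : ℂ)⁻¹ else 0) =
      dilog (x ^ 2) / 4 / s := by
    rw [logSeries_const_mul, logSeries_ite_dvd x two_ne_zero]
    push_cast
    ring
  rw [← hsum, logGenFunRemainder, logSeries, logSeries, ← hpole.tsum_add hrem]
  refine tsum_congr fun k => ?_
  simp only [polarRemainder]
  split_ifs <;> ring

end PolarRemainder

/-- The integrand of Cauchy's formula for `F n x` on the circle through `-exp (-w / N)`, `N = √n`,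
in the saddle coordinate `q = -exp (-(w + τ i) / N)` and divided by `exp (2 N w)`, its size at the
saddle point `τ = 0`. -/
noncomputable def saddleIntegrand (x w : ℂ) (N τ : ℝ) : ℂ :=
  exp (logGenFun x (-exp ((w + τ * I) / N)) + N * (τ * I - w))

/-- The integral of `saddleIntegrand x w N` once around the circle, whose angle at `τ` is
`π - (w.im + τ) / N`. -/
noncomputable def saddleIntegral (x w : ℂ) (N : ℝ) : ℂ :=
  ∫ τ in (-(Real.pi * N) - w.im)..(Real.pi * N - w.im), saddleIntegrand x w N τ

section SaddleIntegrand

variable {x w : ℂ} {N τ : ℝ}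

theorem re_add_mul_I_div (w : ℂ) (τ N : ℝ) : ((w + τ * I) / N).re = w.re / N := by
  simp [div_ofReal_re]

theorem continuous_saddleIntegrand (hx : ‖x‖ < 1) (hw : 0 < w.re) (hN : 0 < N) :
    Continuous (saddleIntegrand x w N) := by
  have hpath : Continuous fun τ : ℝ => logGenFun x (-exp ((w + τ * I) / N)) := by
    refine (continuousOn_logGenFun hx (Real.one_lt_exp_iff.2 (div_pos hw hN))).comp_continuous
      (by fun_prop) fun τ => ?_
    simp [norm_exp]
  unfold saddleIntegrand
  fun_prop

theorem circleMap_saddle (hN : N ≠ 0) (w : ℂ) (τ : ℝ) :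
    circleMap 0 (Real.exp (-(w.re / N))) (Real.pi - w.im / N - τ / N) =
      (-exp ((w + τ * I) / N))⁻¹ := by
  have : (N : ℂ) ≠ 0 := ofReal_ne_zero.2 hN
  have harg : ((-(w.re / N) : ℝ) : ℂ) + ((Real.pi - w.im / N - τ / N : ℝ) : ℂ) * I =
      -((w + τ * I) / N) + Real.pi * I := by
    conv_rhs => rw [← re_add_im w]
    push_cast
    ring
  rw [circleMap_zero, ofReal_exp, ← exp_add, harg, exp_add, exp_pi_mul_I, inv_neg, exp_neg]
  ring

theorem inv_inv_pow_eq_saddle {n : ℕ} (hn : n ≠ 0) (W : ℂ) :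
    ((-exp (W / (√n : ℝ)))⁻¹ ^ n)⁻¹ = (-1) ^ n * exp ((√n : ℝ) * W) := by
  have hsqrt : ((√n : ℝ) : ℂ) ≠ 0 := by simpa using hn
  have hsq : ((√n : ℝ) : ℂ) ^ 2 = n := by
    rw [← ofReal_pow, Real.sq_sqrt n.cast_nonneg, ofReal_natCast]
  rw [inv_pow, inv_inv, neg_pow, ← exp_nat_mul, ← hsq]
  congr 2
  field_simp

theorem cauchyIntegrand_eq_saddleIntegrand {n : ℕ} (hn : n ≠ 0) (τ : ℝ) {q : ℂ}
    (hq : q = (-exp ((w + τ * I) / (√n : ℝ)))⁻¹) :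
    q * I * (exp (logGenFun x q⁻¹) * (q ^ (n + 1))⁻¹) =
      I * (-1) ^ n * exp (2 * (√n : ℝ) * w) * saddleIntegrand x w √n τ := by
  have hq0 : q ≠ 0 := by simp [hq]
  have hpow : (q ^ n)⁻¹ = (-1) ^ n * exp ((√n : ℝ) * (w + τ * I)) := by
    rw [hq, inv_inv_pow_eq_saddle hn]
  have hexp : exp ((√n : ℝ) * (w + τ * I)) =
      exp (2 * (√n : ℝ) * w) * exp ((√n : ℝ) * (τ * I - w)) := by
    rw [← exp_add]
    ring_nf
  have hinv : q⁻¹ = -exp ((w + τ * I) / (√n : ℝ)) := by rw [hq, inv_inv]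
  rw [pow_succ, mul_inv, hpow, hexp, saddleIntegrand, exp_add, ← hinv]
  field_simp

theorem exp_mul_saddleIntegral (hx : ‖x‖ < 1) (hw : 0 < w.re) {n : ℕ} (hn : n ≠ 0) :
    exp (2 * (√n : ℝ) * w) * saddleIntegral x w √n =
      (-1) ^ n * (2 * Real.pi * (√n : ℝ)) * F n x := by
  have hN : 0 < √(n : ℝ) := Real.sqrt_pos.2 (by positivity)
  set ρ := Real.exp (-(w.re / √n))
  have hρ1 : ρ < 1 := Real.exp_lt_one_iff.2 (neg_neg_of_pos (div_pos hw hN))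
  have hcauchy := circleIntegral_exp_logGenFun hx hn (Real.exp_pos _) hρ1
  rw [circleIntegral] at hcauchy
  have hsubst := intervalIntegral.integral_comp_sub_div (a := -(Real.pi * √n) - w.im)
    (b := Real.pi * √n - w.im) (fun θ => deriv (circleMap 0 ρ) θ • (exp (logGenFun x
      (circleMap 0 ρ θ)⁻¹) * (circleMap 0 ρ θ ^ (n + 1))⁻¹)) hN.ne' (Real.pi - w.im / √n)
  have hlow : Real.pi - w.im / √n - (Real.pi * √n - w.im) / √n = 0 := by field_simp; ring
  have hup : Real.pi - w.im / √n - (-(Real.pi * √n) - w.im) / √n = 2 * Real.pi := by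
    field_simp; ring
  rw [hlow, hup, hcauchy] at hsubst
  have hsaddle (τ : ℝ) : circleMap 0 ρ (Real.pi - w.im / √n - τ / √n) =
      (-exp ((w + τ * I) / (√n : ℝ)))⁻¹ := circleMap_saddle hN.ne' w τ
  simp_rw [deriv_circleMap, smul_eq_mul,
    cauchyIntegrand_eq_saddleIntegrand hn _ (hsaddle _)] at hsubst
  rw [intervalIntegral.integral_const_mul, real_smul, ← saddleIntegral] at hsubst
  have hsign : ((-1 : ℂ) ^ n) * (-1) ^ n = 1 := by rw [← mul_pow]; norm_num
  refine mul_left_cancel₀ (mul_ne_zero I_ne_zero (pow_ne_zero n (neg_ne_zero.2 one_ne_zero))) ?_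
  linear_combination hsubst - 2 * Real.pi * I * (√n : ℝ) * F n x * hsign

-- With `W = w + τ i` this is the exact identity `w² / W + W - 2 w = (W - w)² / W`.
theorem saddleIntegrand_eq (hx : ‖x‖ < 1) (hw : 0 < w.re) (hsq : w ^ 2 = dilog (x ^ 2) / 4)
    (hN : 0 < N) (τ : ℝ) :
    saddleIntegrand x w N τ =
      exp (logGenFunRemainder x ((w + τ * I) / N) - (N * τ ^ 2 : ℝ) / (w + τ * I)) := by
  have hre := re_add_mul_I_div w τ N
  have hW : w + τ * I ≠ 0 := fun h => by
    rw [h, zero_div, zero_re] at hre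
    exact (div_pos hw hN).ne hre
  have : (N : ℂ) ≠ 0 := ofReal_ne_zero.2 hN.ne'
  rw [saddleIntegrand, logGenFun_neg_exp hx (hre ▸ div_pos hw hN), ← hsq]
  congr 1
  push_cast
  field_simp
  linear_combination (N * τ ^ 2 : ℂ) * I_sq

theorem norm_saddleIntegrand_le {M : ℝ} (hx : ‖x‖ < 1) (hw : 0 < w.re)
    (hsq : w ^ 2 = dilog (x ^ 2) / 4) (hN : 0 < N) (hM : ‖w + τ * I‖ ≤ M * w.re) :
    ‖saddleIntegrand x w N τ‖ ≤
      Real.exp ((1 - ‖x‖)⁻¹ * (2 * M + 2) - N * τ ^ 2 * (w.re / ‖w + τ * I‖ ^ 2)) := by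
  have hre := re_add_mul_I_div w τ N
  have hquad : ((N * τ ^ 2 : ℝ) / (w + τ * I)).re = N * τ ^ 2 * (w.re / ‖w + τ * I‖ ^ 2) := by
    rw [div_re, Complex.sq_norm, ofReal_re, ofReal_im, zero_mul, zero_div, add_zero, mul_div_assoc,
      add_re, re_ofReal_mul, I_re, mul_zero, add_zero]
  rw [saddleIntegrand_eq hx hw hsq hN, norm_exp, sub_re, hquad]
  gcongr
  refine (re_le_norm _).trans (norm_logGenFunRemainder_le hx (hre ▸ div_pos hw hN) ?_)
  rw [hre, norm_div, norm_real, Real.norm_of_nonneg hN.le, ← mul_div_assoc]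
  gcongr

end SaddleIntegrand

/-- Along `l`, the `k`-th power of `P` is `1 + γ / N + o(1 / N)`. The exponents `k` for which this
holds for some `γ` are those whose terms contribute to the limit of `logGenFun x P / N`. -/
def HasPowRate {ι : Type*} (l : Filter ι) (N : ι → ℝ) (P : ι → ℂ) (k : ℕ) (γ : ℂ) : Prop :=
  Tendsto (fun i => N i * (P i ^ k - 1)) l (𝓝 γ)

section Limits

variable {ι : Type*} {l : Filter ι} {N : ι → ℝ}

theorem tendsto_inv_ofReal_atTop (hN : Tendsto N l atTop) :
    Tendsto (fun i => (N i : ℂ)⁻¹) l (𝓝 0) := by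
  simpa [Function.comp_def] using
    (continuous_ofReal.tendsto 0).comp (tendsto_inv_atTop_zero.comp hN)

theorem tendsto_one_of_tendsto_mul_sub_one (hN : Tendsto N l atTop) {z : ι → ℂ} {γ : ℂ}
    (h : Tendsto (fun i => N i * (z i - 1)) l (𝓝 γ)) : Tendsto z l (𝓝 1) := by
  have hlim := ((tendsto_inv_ofReal_atTop hN).mul h).add_const 1
  rw [zero_mul, zero_add] at hlim
  refine hlim.congr' ?_
  filter_upwards [hN.eventually_ne_atTop 0] with i hi
  rw [inv_mul_cancel_left₀ (ofReal_ne_zero.2 hi), sub_add_cancel]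

theorem tendsto_mul_log (hN : Tendsto N l atTop) {z : ι → ℂ} {γ : ℂ}
    (h : Tendsto (fun i => N i * (z i - 1)) l (𝓝 γ)) :
    Tendsto (fun i => N i * log (z i)) l (𝓝 γ) := by
  have hderiv : HasDerivAt log 1 1 := by simpa using hasDerivAt_log one_mem_slitPlane
  have hslope : Tendsto (dslope log 1) (𝓝 1) (𝓝 1) := by
    have := (continuousAt_dslope_same.2 hderiv.differentiableAt).tendsto
    rwa [dslope_same, hderiv.deriv] at this
  have hlim := h.mul (hslope.comp (tendsto_one_of_tendsto_mul_sub_one hN h))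
  rw [mul_one] at hlim
  refine hlim.congr fun i => ?_
  have := sub_smul_dslope log 1 (z i)
  rw [log_one, sub_zero, smul_eq_mul] at this
  rw [Function.comp_apply, mul_assoc, this]

theorem exists_tendsto_ultrafilter_of_norm_le {E : Type*} [SeminormedAddCommGroup E]
    [ProperSpace E] (U : Ultrafilter ι) {f : ι → E} {C : ℝ}
    (h : ∀ᶠ i in (U : Filter ι), ‖f i‖ ≤ C) : ∃ a, Tendsto f U (𝓝 a) := by
  obtain ⟨a, -, ha⟩ := (isCompact_closedBall (0 : E) C).ultrafilter_le_nhds (U.map f)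
    (le_principal_iff.2 (h.mono fun i hi => by simpa using hi))
  exact ⟨a, ha⟩

theorem eventually_forall_mem_of_ultrafilter {α β : Type*} {l : Filter α} {S : α → Set β}
    {p : α → β → Prop} (h : ∀ U : Ultrafilter (α × β), Tendsto Prod.fst (U : Filter (α × β)) l →
      (∀ᶠ q in (U : Filter (α × β)), q.2 ∈ S q.1) →
      ∀ᶠ q in (U : Filter (α × β)), p q.1 q.2) : ∀ᶠ a in l, ∀ b ∈ S a, p a b := by
  suffices hprod : ∀ᶠ q in l ×ˢ (⊤ : Filter β), q.2 ∈ S q.1 → p q.1 q.2 by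
    rw [← principal_univ, eventually_prod_principal_iff] at hprod
    exact hprod.mono fun a ha b => ha b (Set.mem_univ b)
  refine (eventually_inf_principal (s := {q : α × β | q.2 ∈ S q.1})).1 (mem_iff_ultrafilter.2 ?_)
  exact fun U hU => h U (tendsto_fst.mono_left (hU.trans inf_le_left))
    (hU.trans inf_le_right (mem_principal_self _))

end Limits

namespace HasPowRate

variable {ι : Type*} {l : Filter ι} {N : ι → ℝ} {P : ι → ℂ} {j k m : ℕ} {γ δ : ℂ} {σ : ℝ}

theorem tendsto_pow (hN : Tendsto N l atTop) (h : HasPowRate l N P k γ) :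
    Tendsto (fun i => P i ^ k) l (𝓝 1) :=
  tendsto_one_of_tendsto_mul_sub_one hN h

theorem add (hN : Tendsto N l atTop) (hj : HasPowRate l N P j γ) (hk : HasPowRate l N P k δ) :
    HasPowRate l N P (j + k) (γ + δ) := by
  have hlim := Tendsto.add hj ((hj.tendsto_pow hN).mul hk)
  rw [one_mul] at hlim
  exact hlim.congr fun i => by ring

theorem sub (hN : Tendsto N l atTop) (hj : HasPowRate l N P j γ)
    (hjk : HasPowRate l N P (j + k) δ) : HasPowRate l N P k (δ - γ) := by
  have hpow := hj.tendsto_pow hN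
  have hlim := (Tendsto.sub hjk hj).div hpow one_ne_zero
  rw [div_one] at hlim
  refine hlim.congr' ?_
  filter_upwards [hpow.eventually_ne one_ne_zero] with i hi
  rw [Pi.div_apply, pow_add, div_eq_iff hi]
  ring

theorem mul (hN : Tendsto N l atTop) (hm : HasPowRate l N P m γ) (j : ℕ) :
    HasPowRate l N P (m * j) (j * γ) := by
  induction j with
  | zero => simp [HasPowRate, tendsto_const_nhds]
  | succ j ih =>
    rw [mul_add_one, Nat.cast_succ, add_one_mul]
    exact ih.add hN hm

theorem exists_forall_dvd (hN : Tendsto N l atTop) (hk : k ≠ 0) (h : HasPowRate l N P k γ) :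
    ∃ m ≠ 0, ∃ γ, HasPowRate l N P m γ ∧ ∀ k δ, HasPowRate l N P k δ → m ∣ k := by
  classical
  have hex : ∃ m, m ≠ 0 ∧ ∃ γ, HasPowRate l N P m γ := ⟨k, hk, γ, h⟩
  obtain ⟨hm, γ', hγ'⟩ := Nat.find_spec hex
  refine ⟨Nat.find hex, hm, γ', hγ', fun k δ hδ => ?_⟩
  rw [← Nat.div_add_mod k (Nat.find hex)] at hδ
  have hmod := (hγ'.mul hN (k / Nat.find hex)).sub hN hδ
  by_contra hdvd
  exact Nat.find_min hex (Nat.mod_lt k (Nat.pos_of_ne_zero hm))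
    ⟨fun h0 => hdvd (Nat.dvd_of_mod_eq_zero h0), _, hmod⟩

theorem re_eq [NeBot l] (hN : Tendsto N l atTop)
    (hP : Tendsto (fun i => N i * Real.log ‖P i‖) l (𝓝 σ)) (h : HasPowRate l N P k γ) :
    γ.re = k * σ := by
  refine tendsto_nhds_unique ((continuous_re.tendsto γ).comp (tendsto_mul_log hN h)) ?_
  refine (hP.const_mul (k : ℝ)).congr fun i => ?_
  rw [Function.comp_apply, re_ofReal_mul, log_re, norm_pow, Real.log_pow]
  ring

theorem ne_zero [NeBot l] (hN : Tendsto N l atTop) (hσ : 0 < σ)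
    (hP : Tendsto (fun i => N i * Real.log ‖P i‖) l (𝓝 σ)) (hk : k ≠ 0)
    (h : HasPowRate l N P k γ) : γ ≠ 0 := by
  rintro rfl
  have hre := h.re_eq hN hP
  rw [zero_re] at hre
  exact mul_ne_zero (Nat.cast_ne_zero.2 hk) hσ.ne' hre.symm

theorem inv_eq_of_tendsto_inv [NeBot l] {β : ℂ} (hN : Tendsto N l atTop) (hσ : 0 < σ)
    (hP : Tendsto (fun i => N i * Real.log ‖P i‖) l (𝓝 σ)) (hk : k ≠ 0)
    (h : HasPowRate l N P k γ)
    (hβ : Tendsto (fun i => (N i * (P i ^ k - 1))⁻¹) l (𝓝 β)) : β = γ⁻¹ :=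
  tendsto_nhds_unique hβ (Tendsto.inv₀ h (h.ne_zero hN hσ hP hk))

end HasPowRate

/-- The saddle coordinates `τ` on the circle through the saddle point at distance at least `1` from
that point; the half-open interval parametrizes the circle once. -/
def minorArc (w : ℂ) (N : ℝ) : Set ℝ :=
  {τ ∈ Set.Ioc (-(Real.pi * N) - w.im) (Real.pi * N - w.im) | 1 ≤ |τ|}

section MinorArc

variable {ι : Type*} {N : ι → ℝ} {P x W : ι → ℂ} {x₀ : ℂ} {σ : ℝ}

theorem norm_inv_mul_pow_sub_one_le {N : ℝ} {P : ℂ} (hN : 0 < N) (hP : 0 < Real.log ‖P‖) {k : ℕ}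
    (hk : k ≠ 0) : ‖(N * (P ^ k - 1))⁻¹‖ ≤ (N * Real.log ‖P‖)⁻¹ := by
  have hlog : Real.log ‖P‖ ≤ ‖P‖ - 1 :=
    Real.log_le_sub_one_of_pos ((norm_nonneg P).lt_of_ne fun h => by simp [← h] at hP)
  have hpow : ‖P‖ - 1 ≤ ‖P ^ k - 1‖ := sub_one_le_norm_pow_sub_one (by linarith) le_rfl hk
  rw [norm_inv, norm_mul, norm_real, Real.norm_of_nonneg hN.le]
  gcongr
  exact hlog.trans hpow

theorem logGenFun_div (x P : ℂ) (N : ℝ) :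
    logGenFun x P / N = logSeries x fun k => (N * (P ^ k - 1))⁻¹ := by
  simp_rw [mul_inv, logSeries_const_mul, logGenFun, div_eq_inv_mul]

theorem logSeries_inv_hasPowRate {l : Filter ι} [NeBot l] (hN : Tendsto N l atTop) (hσ : 0 < σ)
    (hP : Tendsto (fun i => N i * Real.log ‖P i‖) l (𝓝 σ)) {m : ℕ} (hm : m ≠ 0) {γ : ℂ}
    (hγ : HasPowRate l N P m γ) (hdvd : ∀ k δ, HasPowRate l N P k δ → m ∣ k) {β : ℕ → ℂ}
    (hβ : ∀ k ≠ 0, Tendsto (fun i => (N i * (P i ^ k - 1))⁻¹) l (𝓝 (β k))) :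
    logSeries x₀ β = dilog (x₀ ^ m) / (m * γ) := by
  have hγ0 := hγ.ne_zero hN hσ hP hm
  have hβ_eq (k : ℕ) (hk : k ≠ 0) : β k = m / γ * if m ∣ k then (k : ℂ)⁻¹ else 0 := by
    split_ifs with h
    · obtain ⟨j, rfl⟩ := h
      rw [(hγ.mul hN j).inv_eq_of_tendsto_inv hN hσ hP hk (hβ _ hk)]
      push_cast
      field_simp
    · by_contra h0
      rw [mul_zero] at h0
      have hinv := (hβ k hk).inv₀ h0
      simp_rw [inv_inv] at hinv
      exact h (hdvd k _ hinv)
  have hcongr : logSeries x₀ β =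
      logSeries x₀ fun k => m / γ * if m ∣ k then (k : ℂ)⁻¹ else 0 := by
    refine tsum_congr fun k => ?_
    rcases eq_or_ne k 0 with rfl | hk
    · simp
    · rw [hβ_eq k hk]
  rw [hcongr, logSeries_const_mul, logSeries_ite_dvd _ hm]
  field_simp

theorem exists_tendsto_logGenFun_div (U : Ultrafilter ι) (hN : Tendsto N U atTop) (hσ : 0 < σ)
    (hP : Tendsto (fun i => N i * Real.log ‖P i‖) U (𝓝 σ)) (hx : Tendsto x U (𝓝 x₀))
    (hx₀ : ‖x₀‖ < 1) :
    ∃ L, Tendsto (fun i => logGenFun (x i) (P i) / N i) U (𝓝 L) ∧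
      (L = 0 ∨ ∃ m ≠ 0, ∃ γ, HasPowRate U N P m γ ∧ (∀ k δ, HasPowRate U N P k δ → m ∣ k) ∧
        L = dilog (x₀ ^ m) / (m * γ)) := by
  have hbound : ∀ᶠ i in (U : Filter ι), ∀ k ≠ 0, ‖(N i * (P i ^ k - 1))⁻¹‖ ≤ (σ / 2)⁻¹ := by
    filter_upwards [hN.eventually_gt_atTop 0, hP.eventually_const_lt (half_lt_self hσ)]
      with i hi hlog k hk
    refine (norm_inv_mul_pow_sub_one_le hi
      (pos_of_mul_pos_right ((half_pos hσ).trans hlog) hi.le) hk).trans ?_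
    gcongr
  have hlim (k : ℕ) : ∃ β, k ≠ 0 → Tendsto (fun i => (N i * (P i ^ k - 1))⁻¹) U (𝓝 β) := by
    rcases eq_or_ne k 0 with rfl | hk
    · simp
    · exact (exists_tendsto_ultrafilter_of_norm_le U (hbound.mono fun i hi => hi k hk)).imp
        fun _ h _ => h
  choose β hβ using hlim
  refine ⟨logSeries x₀ β, ?_, ?_⟩
  · simp_rw [logGenFun_div]
    exact tendsto_logSeries (C := (σ / 2)⁻¹) hx₀ hx hβ hbound
  by_cases hzero : ∀ k ≠ 0, β k = 0
  · left
    refine (tsum_congr fun k => ?_).trans tsum_zero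
    rcases eq_or_ne k 0 with rfl | hk
    · simp
    · rw [hzero k hk, mul_zero]
  · right
    push Not at hzero
    obtain ⟨k, hk, hβk⟩ := hzero
    have hrate : HasPowRate U N P k (β k)⁻¹ := by
      simpa only [HasPowRate, inv_inv] using (hβ k hk).inv₀ hβk
    obtain ⟨m, hm, γ, hγ, hdvd⟩ := hrate.exists_forall_dvd hN hk
    exact ⟨m, hm, γ, hγ, hdvd, logSeries_inv_hasPowRate hN hσ hP hm hγ hdvd hβ⟩

theorem re_div_le (A : ℂ) {Z : ℂ} (hZ : 0 < Z.re) : (A / Z).re ≤ reSqrtSq A / Z.re := by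
  have h := re_le_norm (A * (starRingEnd ℂ) (Z ^ 2))
  rw [norm_mul, norm_conj, norm_pow, sq_norm_eq_re_sq_add_im_sq, sq, map_mul] at h
  simp only [mul_re, mul_im, conj_re, conj_im] at h
  have hpos : 0 < Z.re ^ 2 + Z.im ^ 2 := by positivity
  have hdiv : (A / Z).re = (A.re * Z.re + A.im * Z.im) / (Z.re ^ 2 + Z.im ^ 2) := by
    rw [div_re, normSq_apply]
    ring
  rw [hdiv, div_le_div_iff₀ hpos hZ, reSqrtSq]
  linarith

theorem re_dilog_div_le_fk_sq_div (hσ : 0 < σ) {m : ℕ} (hm : m ≠ 0) {γ : ℂ} (hγ : γ.re = m * σ) :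
    (dilog (x₀ ^ m) / (m * γ)).re ≤ fk m x₀ ^ 2 / σ := by
  have : (0 : ℝ) < m := by positivity
  have hre : ((m : ℂ) * γ).re = m ^ 2 * σ := by
    rw [← ofReal_natCast, re_ofReal_mul, hγ]
    ring
  refine (re_div_le _ (by rw [hre]; positivity)).trans_eq ?_
  rw [hre, fk_sq, div_div]

-- `exp (W / N)` tends to `1` or to `-1`; the latter would make `1` a rate exponent.
theorem tendsto_of_hasPowRate_two (U : Ultrafilter ι) (hN : Tendsto N U atTop)
    (hW : ∀ᶠ i in (U : Filter ι), -(Real.pi * N i) < (W i).im ∧ (W i).im ≤ Real.pi * N i) {γ : ℂ}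
    (hγ : HasPowRate U N (fun i => -exp (W i / N i)) 2 γ)
    (hone : ∀ δ, ¬HasPowRate U N (fun i => -exp (W i / N i)) 1 δ) :
    Tendsto W U (𝓝 (γ / 2)) := by
  have hsq := hγ.tendsto_pow hN
  obtain ⟨e, he⟩ : ∃ e, Tendsto (fun i => exp (W i / N i)) U (𝓝 e) := by
    refine exists_tendsto_ultrafilter_of_norm_le (C := 2) U ?_
    filter_upwards [hsq.norm.eventually_lt_const (by norm_num : ‖(1 : ℂ)‖ < 2)] with i hi
    rw [norm_pow, norm_neg] at hi
    nlinarith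
  have hfactor (a : ℂ) (ha : a ^ 2 = 1) (hlim : Tendsto (fun i => exp (W i / N i)) U (𝓝 a)) :
      Tendsto (fun i => N i * (a * exp (W i / N i) - 1)) U (𝓝 (γ / 2)) := by
    have hsum := (hlim.const_mul a).add_const 1
    rw [← sq, ha, one_add_one_eq_two] at hsum
    refine (Tendsto.div hγ hsum two_ne_zero).congr' ?_
    filter_upwards [hsum.eventually_ne two_ne_zero] with i hi
    rw [Pi.div_apply, div_eq_iff hi]
    linear_combination -(N i : ℂ) * exp (W i / N i) ^ 2 * ha
  have he_sq : e ^ 2 = 1 := tendsto_nhds_unique (he.pow 2) (by simpa using hsq)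
  rcases mul_self_eq_one_iff.1 (sq e ▸ he_sq) with rfl | rfl
  · have hlog := tendsto_mul_log hN (by simpa using hfactor 1 (one_pow 2) he)
    refine hlog.congr' ?_
    filter_upwards [hW, hN.eventually_gt_atTop 0] with i hi hNi
    have him : (W i / N i).im = (W i).im / N i := div_ofReal_im _ _
    rw [log_exp (by rw [him, lt_div_iff₀ hNi]; linarith [hi.1])
      (by rw [him, div_le_iff₀ hNi]; exact hi.2), mul_div_cancel₀ _ (ofReal_ne_zero.2 hNi.ne')]
  · refine absurd ?_ (hone (γ / 2))
    simpa [HasPowRate] using hfactor (-1) (by norm_num) he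

theorem tendsto_logGenFun_div_saddle (U : Ultrafilter ι) (hN : Tendsto N U atTop) (hσ : 0 < σ)
    (hx : Tendsto x U (𝓝 x₀)) (hx₀ : ‖x₀‖ < 1) (hre : Tendsto (fun i => (W i).re) U (𝓝 σ))
    (him : ∀ᶠ i in (U : Filter ι), -(Real.pi * N i) < (W i).im ∧ (W i).im ≤ Real.pi * N i)
    {c : ℝ} (hc : ∀ k ≠ 2, fk k x₀ ≤ c) :
    ∃ L, Tendsto (fun i => logGenFun (x i) (-exp (W i / N i)) / N i) U (𝓝 L) ∧
      (L.re ≤ c ^ 2 / σ ∨ ∃ W₀, Tendsto W U (𝓝 W₀) ∧ L = dilog (x₀ ^ 2) / 4 / W₀) := by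
  have hlog : Tendsto (fun i => N i * Real.log ‖-exp (W i / N i)‖) U (𝓝 σ) := by
    refine hre.congr' ?_
    filter_upwards [hN.eventually_ne_atTop 0] with i hi
    rw [norm_neg, norm_exp, Real.log_exp, div_ofReal_re, mul_div_cancel₀ _ hi]
  obtain ⟨L, hL, rfl | ⟨m, hm, γ, hγ, hdvd, rfl⟩⟩ :=
    exists_tendsto_logGenFun_div U hN hσ hlog hx hx₀
  · exact ⟨0, hL, .inl (by rw [zero_re]; positivity)⟩
  refine ⟨_, hL, ?_⟩
  rcases eq_or_ne m 2 with rfl | hm2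
  · right
    have hone (δ : ℂ) : ¬HasPowRate U N (fun i => -exp (W i / N i)) 1 δ := fun h => by
      have := hdvd 1 δ h
      norm_num at this
    refine ⟨γ / 2, tendsto_of_hasPowRate_two U hN him hγ hone, ?_⟩
    push_cast
    rw [div_div, ← mul_div_assoc]
    ring
  · left
    refine (re_dilog_div_le_fk_sq_div hσ hm (hγ.re_eq hN hlog)).trans ?_
    gcongr
    · exact fk_nonneg m x₀
    · exact hc m hm2

theorem re_sq_div_add_mul_I {w : ℂ} (hw : 0 < w.re) {τ : ℝ} (hτ : 1 ≤ |τ|) :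
    (w ^ 2 / (w + τ * I)).re ≤ w.re - w.re / (‖w‖ + 1) ^ 2 := by
  have hW : w + τ * I ≠ 0 := fun h => by
    have hre := congrArg re h
    rw [add_re, re_ofReal_mul, I_re, mul_zero, add_zero, zero_re] at hre
    exact hw.ne' hre
  have hexpand : w ^ 2 / (w + τ * I) = w - τ * I - (τ ^ 2 : ℝ) / (w + τ * I) := by
    field_simp
    push_cast
    linear_combination (τ ^ 2 : ℂ) * I_sq
  have hre : ((τ ^ 2 : ℝ) / (w + τ * I)).re = τ ^ 2 * w.re / ‖w + τ * I‖ ^ 2 := by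
    rw [div_re, Complex.sq_norm, ofReal_re, ofReal_im]
    simp
  have hnorm : ‖w + τ * I‖ ≤ (‖w‖ + 1) * |τ| := by
    have := norm_add_le w (τ * I)
    rw [norm_mul, norm_I, mul_one, norm_real, Real.norm_eq_abs] at this
    nlinarith [norm_nonneg w]
  have hloss : w.re / (‖w‖ + 1) ^ 2 ≤ τ ^ 2 * w.re / ‖w + τ * I‖ ^ 2 := by
    have := norm_pos_iff.2 hW
    rw [div_le_div_iff₀ (by positivity) (by positivity)]
    calc w.re * ‖w + τ * I‖ ^ 2 ≤ w.re * ((‖w‖ + 1) * |τ|) ^ 2 := by gcongr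
      _ = τ ^ 2 * w.re * (‖w‖ + 1) ^ 2 := by rw [mul_pow, sq_abs]; ring
  rw [hexpand, sub_re, hre]
  simp only [sub_re, mul_re, ofReal_re, I_re, ofReal_im, I_im]
  linarith

theorem exists_limit_re_logGenFun_div_le (U : Ultrafilter ι) (hN : Tendsto N U atTop)
    (hx : Tendsto x U (𝓝 x₀)) (hx₀ : ‖x₀‖ < 1) (hpos : 0 < fk 2 x₀) {c : ℝ}
    (hc : ∀ k ≠ 2, fk k x₀ ≤ c) {τ : ι → ℝ}
    (hτ : ∀ᶠ i in (U : Filter ι), τ i ∈ minorArc (sqrtDilog 2 (x i)) (N i)) :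
    ∃ L, Tendsto (fun i => logGenFun (x i) (-exp ((sqrtDilog 2 (x i) + τ i * I) / N i)) / N i)
      U (𝓝 L) ∧ L.re ≤ max (c ^ 2 / fk 2 x₀) (fk 2 x₀ - fk 2 x₀ / (‖sqrtDilog 2 x₀‖ + 1) ^ 2) := by
  have hw : Tendsto (fun i => sqrtDilog 2 (x i)) U (𝓝 (sqrtDilog 2 x₀)) :=
    (analyticAt_sqrtDilog hx₀ two_ne_zero hpos).continuousAt.tendsto.comp hx
  have hre : Tendsto (fun i => (sqrtDilog 2 (x i) + τ i * I).re) U (𝓝 (fk 2 x₀)) := by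
    simpa [Function.comp_def, sqrtDilog_re] using (continuous_re.tendsto _).comp hw
  obtain ⟨L, hL, hcase⟩ := tendsto_logGenFun_div_saddle U hN hpos hx hx₀ hre
    (hτ.mono fun i hi => by
      simpa [sub_lt_iff_lt_add', le_sub_iff_add_le'] using hi.1) hc
  refine ⟨L, hL, hcase.elim le_max_of_le_left ?_⟩
  rintro ⟨W₀, hW₀, rfl⟩
  have hτlim : Tendsto τ U (𝓝 (W₀ - sqrtDilog 2 x₀).im) := by
    simpa [Function.comp_def] using (continuous_im.tendsto _).comp (hW₀.sub hw)
  have hW₀re : W₀.re = (sqrtDilog 2 x₀).re := by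
    rw [sqrtDilog_re]
    exact tendsto_nhds_unique ((continuous_re.tendsto W₀).comp hW₀) hre
  have hW₀eq : W₀ = sqrtDilog 2 x₀ + ((W₀ - sqrtDilog 2 x₀).im : ℝ) * I := by
    apply Complex.ext <;> simp [hW₀re]
  rw [← sqrtDilog_two_sq, hW₀eq, ← sqrtDilog_re]
  exact le_max_of_le_right (re_sq_div_add_mul_I (by rwa [sqrtDilog_re])
    (ge_of_tendsto hτlim.abs (hτ.mono fun i hi => hi.2)))

theorem exists_re_logGenFun_le {x₀ : ℂ} (hx₀ : x₀ ∈ interior R2) :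
    ∃ η < fk 2 x₀, ∀ᶠ p : ℝ × ℂ in atTop ×ˢ 𝓝 x₀, ∀ τ ∈ minorArc (sqrtDilog 2 p.2) p.1,
      (logGenFun p.2 (-exp ((sqrtDilog 2 p.2 + τ * I) / p.1))).re ≤ η * p.1 := by
  have hnorm : ‖x₀‖ < 1 := (interior_subset hx₀).1
  have hpos := fk_two_pos_of_mem_interior hx₀
  obtain ⟨c, hc2, hc⟩ := exists_fk_le_of_mem_interior hx₀
  have hc0 : 0 ≤ c := (fk_nonneg 0 x₀).trans (hc 0 two_ne_zero.symm)
  have hlt : max (c ^ 2 / fk 2 x₀) (fk 2 x₀ - fk 2 x₀ / (‖sqrtDilog 2 x₀‖ + 1) ^ 2) < fk 2 x₀ := by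
    refine max_lt ?_ (sub_lt_self _ (by positivity))
    rw [div_lt_iff₀ hpos]
    nlinarith
  obtain ⟨η, hη, hη2⟩ := exists_between hlt
  refine ⟨η, hη2, ?_⟩
  refine eventually_forall_mem_of_ultrafilter fun U hU hτ => ?_
  have hN : Tendsto (fun q : (ℝ × ℂ) × ℝ => q.1.1) U atTop := tendsto_fst.comp hU
  obtain ⟨L, hL, hLre⟩ := exists_limit_re_logGenFun_div_le U hN (tendsto_snd.comp hU) hnorm hpos hc
    hτ
  filter_upwards [hN.eventually_gt_atTop 0,
    ((continuous_re.tendsto L).comp hL).eventually_lt_const (hLre.trans_lt hη)] with q hq hlim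
  rw [Function.comp_apply, div_ofReal_re, div_lt_iff₀ hq] at hlim
  exact hlim.le

theorem exists_norm_saddleIntegrand_le {x₀ : ℂ} (hx₀ : x₀ ∈ interior R2) :
    ∃ η > 0, ∀ᶠ p : ℝ × ℂ in atTop ×ˢ 𝓝 x₀, ∀ τ ∈ minorArc (sqrtDilog 2 p.2) p.1,
      ‖saddleIntegrand p.2 (sqrtDilog 2 p.2) p.1 τ‖ ≤ Real.exp (-(η * p.1)) := by
  obtain ⟨c, hc, hle⟩ := exists_re_logGenFun_le hx₀
  obtain ⟨b, hcb, hb⟩ := exists_between hc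
  have hfk : ∀ᶠ p : ℝ × ℂ in atTop ×ˢ 𝓝 x₀, b < fk 2 p.2 := by
    have hcont := (analyticAt_sqrtDilog (interior_subset hx₀).1 two_ne_zero
      (fk_two_pos_of_mem_interior hx₀)).continuousAt
    have := (continuous_re.continuousAt.comp hcont).tendsto.comp
      (tendsto_snd (f := (atTop : Filter ℝ)))
    simp only [Function.comp_def, sqrtDilog_re] at this
    exact this.eventually_const_lt hb
  refine ⟨b - c, sub_pos.2 hcb, ?_⟩
  filter_upwards [hle, hfk, tendsto_fst.eventually (eventually_ge_atTop 0)] with p hp hbp hN τ hτ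
  rw [saddleIntegrand, norm_exp, Real.exp_le_exp, add_re, re_ofReal_mul, sub_re, sqrtDilog_re,
    re_ofReal_mul, I_re, mul_zero]
  nlinarith [hp τ hτ]

end MinorArc

theorem tendsto_intervalIntegral_neg_of_dominated {ι E : Type*} [NormedAddCommGroup E]
    [NormedSpace ℝ E] {l : Filter ι} [l.IsCountablyGenerated] {r : ι → ℝ} (hr : Tendsto r l atTop)
    {f : ι → ℝ → E} {g : ℝ → E} {bound : ℝ → ℝ} (hf : ∀ᶠ i in l, Continuous (f i))
    (hbound : ∀ᶠ i in l, ∀ t, |t| ≤ r i → ‖f i t‖ ≤ bound t)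
    (hint : MeasureTheory.Integrable bound)
    (hlim : ∀ t, Tendsto (fun i => f i t) l (𝓝 (g t))) :
    Tendsto (fun i => ∫ t in (-r i)..(r i), f i t) l (𝓝 (∫ t, g t)) := by
  have hindicator : Tendsto (fun i => ∫ t, (Set.Ioc (-r i) (r i)).indicator (f i) t) l
      (𝓝 (∫ t, g t)) := by
    refine MeasureTheory.tendsto_integral_filter_of_dominated_convergence (fun t => |bound t|)
      (hf.mono fun i hi => hi.aestronglyMeasurable.indicator measurableSet_Ioc) ?_ hint.abs ?_
    · filter_upwards [hbound] with i hi
      refine .of_forall fun t => ?_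
      rw [Set.indicator_apply]
      split_ifs with ht
      · exact (hi t (abs_le.2 ⟨ht.1.le, ht.2⟩)).trans (le_abs_self _)
      · simp
    · refine .of_forall fun t => (hlim t).congr' ?_
      filter_upwards [hr.eventually_gt_atTop |t|] with i hi
      have := abs_lt.1 hi
      rw [Set.indicator_of_mem (Set.mem_Ioc.2 ⟨this.1, this.2.le⟩)]
  refine hindicator.congr' ?_
  filter_upwards [hr.eventually_ge_atTop 0] with i hi
  rw [intervalIntegral.integral_of_le (by linarith),
    MeasureTheory.integral_indicator measurableSet_Ioc]

theorem integral_exp_sub_sq_div_ne_zero (φ : ℂ) {w : ℂ} (hw : 0 < w.re) :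
    ∫ t : ℝ, exp (φ - (t ^ 2 : ℝ) / w) ≠ 0 := by
  have hw0 : w ≠ 0 := fun h => by simp [h] at hw
  have hre : 0 < w⁻¹.re := by
    rw [inv_re]
    exact div_pos hw (normSq_pos.2 hw0)
  have heq (t : ℝ) : exp (φ - (t ^ 2 : ℝ) / w) = exp φ * exp (-w⁻¹ * t ^ 2) := by
    rw [← exp_add]
    push_cast
    ring_nf
  simp_rw [heq]
  rw [MeasureTheory.integral_const_mul, integral_gaussian_complex hre]
  refine mul_ne_zero (exp_ne_zero _) ?_
  rw [cpow_ne_zero_iff]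
  simp [hw0, Real.pi_ne_zero]

section MajorArc

variable {x₀ : ℂ}

theorem exists_norm_saddleIntegrand_le_gaussian (hx₀ : ‖x₀‖ < 1) (hpos : 0 < fk 2 x₀) :
    ∃ κ > 0, ∃ C, ∀ᶠ x in 𝓝 x₀, ∀ N > 0, ∀ τ : ℝ, |τ| ≤ 1 →
      ‖saddleIntegrand x (sqrtDilog 2 x) N τ‖ ≤ Real.exp (C - κ * (N * τ ^ 2)) := by
  have hw := (analyticAt_sqrtDilog hx₀ two_ne_zero hpos).continuousAt
  obtain ⟨σ, hσ, hσx⟩ := exists_between hpos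
  obtain ⟨r, hrx, hr⟩ := exists_between hx₀
  obtain ⟨B, hB⟩ := exists_gt ‖sqrtDilog 2 x₀‖
  have hB0 := (norm_nonneg _).trans_lt hB
  refine ⟨σ / (B + 1) ^ 2, by positivity, (1 - r)⁻¹ * (2 * ((B + 1) / σ) + 2), ?_⟩
  filter_upwards [continuous_norm.continuousAt.eventually_lt continuousAt_const hrx,
    hw.norm.eventually_lt continuousAt_const hB,
    (continuous_re.continuousAt.comp hw).eventually_const_lt (by simpa [sqrtDilog_re] using hσx)]
    with x hxr hxB hxσ N hN τ hτ
  rw [Function.comp_apply, sqrtDilog_re] at hxσ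
  have hre : (sqrtDilog 2 x).re = fk 2 x := sqrtDilog_re 2 x
  have hfk : 0 < fk 2 x := hσ.trans hxσ
  have hW : ‖sqrtDilog 2 x + τ * I‖ ≤ B + 1 := (norm_add_le _ _).trans (by
    rw [norm_mul, norm_I, mul_one, norm_real, Real.norm_eq_abs]
    exact add_le_add hxB.le hτ)
  have hWpos : 0 < ‖sqrtDilog 2 x + τ * I‖ := by
    refine lt_of_lt_of_le ?_ (re_le_norm _)
    simpa [hre] using hfk
  refine (norm_saddleIntegrand_le (M := (B + 1) / σ) (hxr.trans hr) (hre ▸ hfk)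
    (sqrtDilog_two_sq x) hN ?_).trans (Real.exp_le_exp.2 (sub_le_sub ?_ ?_))
  · rw [hre, div_mul_eq_mul_div, le_div_iff₀ hσ]
    gcongr
  · gcongr
  · rw [hre, mul_comm]
    gcongr

theorem tendsto_saddleIntegrand {ι : Type*} {l : Filter ι} {x w : ι → ℂ} {w₀ : ℂ} {N : ι → ℝ}
    (hx₀ : ‖x₀‖ < 1) (hw₀ : 0 < w₀.re) (hN : Tendsto N l atTop) (hx : Tendsto x l (𝓝 x₀))
    (hw : Tendsto w l (𝓝 w₀)) (hsq : ∀ i, w i ^ 2 = dilog (x i ^ 2) / 4) (t : ℝ) :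
    Tendsto (fun i => saddleIntegrand (x i) (w i) (N i) (t / √(N i))) l
      (𝓝 (exp (logSeries x₀ (fun _ => -(1 / 2)) - (t ^ 2 : ℝ) / w₀))) := by
  have hW : Tendsto (fun i => w i + (t / √(N i) : ℝ) * I) l (𝓝 w₀) := by
    have hτ : Tendsto (fun i => t / √(N i)) l (𝓝 0) :=
      (Real.tendsto_sqrt_atTop.comp hN).const_div_atTop t
    simpa using hw.add (((continuous_ofReal.tendsto 0).comp hτ).mul_const I)
  have hre : Tendsto (fun i => (w i).re) l (𝓝 w₀.re) := (continuous_re.tendsto w₀).comp hw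
  have hW0 : w₀ ≠ 0 := fun h => by simp [h] at hw₀
  have hM : ∀ᶠ i in l, ‖(w i + (t / √(N i) : ℝ) * I) / N i‖ ≤
      (‖w₀‖ / w₀.re + 1) * ((w i + (t / √(N i) : ℝ) * I) / N i).re := by
    filter_upwards [(hW.norm.div hre hw₀.ne').eventually_lt_const (lt_add_one _),
      hre.eventually_const_lt hw₀, hN.eventually_gt_atTop 0] with i hi hrei hNi
    rw [re_add_mul_I_div, norm_div, norm_real, Real.norm_of_nonneg hNi.le, ← mul_div_assoc]
    gcongr
    exact ((div_lt_iff₀ hrei).1 hi).le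
  have hrem := tendsto_logGenFunRemainder hx₀ hx
    (by simpa [div_eq_mul_inv] using hW.mul (tendsto_inv_ofReal_atTop hN))
    (by
      filter_upwards [hre.eventually_const_lt hw₀, hN.eventually_gt_atTop 0] with i hrei hNi
      rw [re_add_mul_I_div]
      exact div_pos hrei hNi) hM
  refine (hrem.sub (tendsto_const_nhds.div hW hW0)).cexp.congr' ?_
  filter_upwards [hre.eventually_const_lt hw₀, hN.eventually_gt_atTop 0,
    hx.norm.eventually_lt_const hx₀] with i hrei hNi hxi
  rw [saddleIntegrand_eq hxi hrei (hsq i) hNi, div_pow, Real.sq_sqrt hNi.le,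
    mul_div_cancel₀ _ hNi.ne', Pi.div_apply]

theorem tendsto_sqrtDilog (hx₀ : ‖x₀‖ < 1) (hpos : 0 < fk 2 x₀) :
    Tendsto (fun p : ℝ × ℂ => sqrtDilog 2 p.2) (atTop ×ˢ 𝓝 x₀) (𝓝 (sqrtDilog 2 x₀)) :=
  (analyticAt_sqrtDilog hx₀ two_ne_zero hpos).continuousAt.tendsto.comp tendsto_snd

theorem eventually_pos_and_norm_lt_one_and_re_pos (hx₀ : ‖x₀‖ < 1) (hpos : 0 < fk 2 x₀) :
    ∀ᶠ p : ℝ × ℂ in atTop ×ˢ 𝓝 x₀, 0 < p.1 ∧ ‖p.2‖ < 1 ∧ 0 < (sqrtDilog 2 p.2).re :=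
  (tendsto_fst.eventually_gt_atTop 0).and
    ((tendsto_snd.norm.eventually_lt_const hx₀).and
    (((continuous_re.tendsto _).comp (tendsto_sqrtDilog hx₀ hpos)).eventually_const_lt
      (by rwa [sqrtDilog_re])))

theorem tendsto_integral_majorArc (hx₀ : ‖x₀‖ < 1) (hpos : 0 < fk 2 x₀) :
    Tendsto (fun p : ℝ × ℂ => √p.1 * ∫ τ in (-1)..1, saddleIntegrand p.2 (sqrtDilog 2 p.2) p.1 τ)
      (atTop ×ˢ 𝓝 x₀) (𝓝 (∫ t : ℝ,
        exp (logSeries x₀ (fun _ => -(1 / 2)) - (t ^ 2 : ℝ) / sqrtDilog 2 x₀))) := by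
  obtain ⟨κ, hκ, C, hbound⟩ := exists_norm_saddleIntegrand_le_gaussian hx₀ hpos
  have hev := eventually_pos_and_norm_lt_one_and_re_pos hx₀ hpos
  have hlim : Tendsto (fun p : ℝ × ℂ => ∫ t in (-√p.1)..(√p.1),
      saddleIntegrand p.2 (sqrtDilog 2 p.2) p.1 (t / √p.1)) (atTop ×ˢ 𝓝 x₀) (𝓝 (∫ t : ℝ,
        exp (logSeries x₀ (fun _ => -(1 / 2)) - (t ^ 2 : ℝ) / sqrtDilog 2 x₀))) := by
    refine tendsto_intervalIntegral_neg_of_dominated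
      (bound := fun t => Real.exp C * Real.exp (-κ * t ^ 2))
      (Real.tendsto_sqrt_atTop.comp tendsto_fst)
      (hev.mono fun p ⟨hN, hx, hw⟩ =>
        (continuous_saddleIntegrand hx hw hN).comp (continuous_id.div_const _)) ?_
      ((integrable_exp_neg_mul_sq hκ).const_mul _) fun t => tendsto_saddleIntegrand hx₀
        (by rwa [sqrtDilog_re]) tendsto_fst tendsto_snd (tendsto_sqrtDilog hx₀ hpos)
        (fun p => sqrtDilog_two_sq p.2) t
    filter_upwards [hev, tendsto_snd.eventually hbound] with p ⟨hN, _, _⟩ hp t ht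
    have hsqrt := Real.sqrt_pos.2 hN
    refine (hp p.1 hN _ ?_).trans_eq ?_
    · rw [abs_div, abs_of_pos hsqrt]
      exact div_le_one_of_le₀ ht hsqrt.le
    · rw [← Real.exp_add, div_pow, Real.sq_sqrt hN.le, mul_div_cancel₀ _ hN.ne']
      ring_nf
  refine hlim.congr' (hev.mono fun p ⟨hN, _, _⟩ => ?_)
  have hsqrt := (Real.sqrt_pos.2 hN).ne'
  rw [intervalIntegral.integral_comp_div _ hsqrt, neg_div, div_self hsqrt, real_smul]

end MajorArc

section CauchyIntegral

theorem norm_intervalIntegral_sub_intervalIntegral_le {E : Type*} [NormedAddCommGroup E]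
    [NormedSpace ℝ E] {f : ℝ → E} (hf : Continuous f) {a b c d C : ℝ} (hac : a ≤ c) (hcd : c ≤ d)
    (hdb : d ≤ b) (hC : ∀ t ∈ Set.Ioc a b \ Set.Ioo c d, ‖f t‖ ≤ C) :
    ‖(∫ t in a..b, f t) - ∫ t in c..d, f t‖ ≤ C * ((c - a) + (b - d)) := by
  have hint (u v : ℝ) : IntervalIntegrable f MeasureTheory.volume u v := hf.intervalIntegrable u v
  have hsplit : (∫ t in a..b, f t) - ∫ t in c..d, f t =
      (∫ t in a..c, f t) + ∫ t in d..b, f t := by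
    rw [← intervalIntegral.integral_add_adjacent_intervals (hint a c) (hint c b),
      ← intervalIntegral.integral_add_adjacent_intervals (hint c d) (hint d b)]
    abel
  have hleft : ‖∫ t in a..c, f t‖ ≤ C * |c - a| := by
    refine intervalIntegral.norm_integral_le_of_norm_le_const fun t ht => ?_
    rw [Set.uIoc_of_le hac] at ht
    exact hC t ⟨⟨ht.1, ht.2.trans (hcd.trans hdb)⟩, fun h => h.1.not_ge ht.2⟩
  have hright : ‖∫ t in d..b, f t‖ ≤ C * |b - d| := by
    refine intervalIntegral.norm_integral_le_of_norm_le_const fun t ht => ?_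
    rw [Set.uIoc_of_le hdb] at ht
    exact hC t ⟨⟨(hac.trans hcd).trans_lt ht.1, ht.2⟩, fun h => h.2.not_gt ht.1⟩
  rw [abs_of_nonneg (sub_nonneg.2 hac)] at hleft
  rw [abs_of_nonneg (sub_nonneg.2 hdb)] at hright
  rw [hsplit, mul_add]
  exact norm_add_le_of_le hleft hright

theorem tendsto_saddleIntegral {x₀ : ℂ} (hx₀ : x₀ ∈ interior R2) :
    Tendsto (fun p : ℝ × ℂ => √p.1 * saddleIntegral p.2 (sqrtDilog 2 p.2) p.1)
      (atTop ×ˢ 𝓝 x₀) (𝓝 (∫ t : ℝ,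
        exp (logSeries x₀ (fun _ => -(1 / 2)) - (t ^ 2 : ℝ) / sqrtDilog 2 x₀))) := by
  have hnorm : ‖x₀‖ < 1 := (interior_subset hx₀).1
  have hpos := fk_two_pos_of_mem_interior hx₀
  obtain ⟨η, hη, hminor⟩ := exists_norm_saddleIntegrand_le hx₀
  have herror : Tendsto (fun p : ℝ × ℂ => 2 * Real.pi * (p.1 ^ (2 : ℝ) * Real.exp (-η * p.1)))
      (atTop ×ˢ 𝓝 x₀) (𝓝 0) := by
    simpa using ((tendsto_rpow_mul_exp_neg_mul_atTop_nhds_zero 2 η hη).comp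
      tendsto_fst).const_mul (2 * Real.pi)
  refine tendsto_of_tendsto_of_dist (tendsto_integral_majorArc hnorm hpos)
    (squeeze_zero' (.of_forall fun _ => dist_nonneg) ?_ herror)
  have him : ∀ᶠ p : ℝ × ℂ in atTop ×ˢ 𝓝 x₀,
      |(sqrtDilog 2 p.2).im| < |(sqrtDilog 2 x₀).im| + 1 :=
    ((continuous_im.tendsto _).comp (tendsto_sqrtDilog hnorm hpos)).abs.eventually_lt_const
      (lt_add_one _)
  filter_upwards [hminor, him, eventually_pos_and_norm_lt_one_and_re_pos hnorm hpos,
    tendsto_fst.eventually_ge_atTop (|(sqrtDilog 2 x₀).im| + 2)] with p hp him ⟨hN, hx, hw⟩ hlarge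
  have hpi : p.1 ≤ Real.pi * p.1 := le_mul_of_one_le_left hN.le (by linarith [Real.pi_gt_three])
  obtain ⟨him_neg, him_pos⟩ := abs_lt.1 him
  have hdiff := norm_intervalIntegral_sub_intervalIntegral_le
    (continuous_saddleIntegrand hx hw hN) (c := -1) (d := 1) (by linarith) (by norm_num)
    (by linarith) fun τ hτ => hp τ ⟨hτ.1, not_lt.1 fun h => hτ.2 (abs_lt.1 h)⟩
  have hsqrt : √p.1 ≤ p.1 := Real.sqrt_le_iff.2 ⟨hN.le,
    le_self_pow₀ (by linarith [abs_nonneg (sqrtDilog 2 x₀).im]) two_ne_zero⟩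
  rw [dist_comm, dist_eq_norm, ← mul_sub, saddleIntegral, norm_mul, norm_real,
    Real.norm_of_nonneg (Real.sqrt_nonneg _)]
  calc _ ≤ p.1 * (Real.exp (-(η * p.1)) * (2 * Real.pi * p.1)) := by
        gcongr
        refine hdiff.trans ?_
        gcongr
        linarith
    _ = _ := by
        rw [Real.rpow_two, neg_mul]
        ring

end CauchyIntegral

theorem log_norm_F_eq {x w : ℂ} (hx : ‖x‖ < 1) (hw : 0 < w.re) {n : ℕ} (hn : n ≠ 0)
    (hI : saddleIntegral x w √n ≠ 0) :
    Real.log ‖F n x‖ =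
      2 * √n * w.re + Real.log ‖saddleIntegral x w √n‖ - Real.log (2 * Real.pi * √n) := by
  have hnorm := congrArg norm (exp_mul_saddleIntegral hx hw hn)
  have hsqrt : 0 < √(n : ℝ) := Real.sqrt_pos.2 (by positivity)
  have hre : (2 * (√n : ℝ) * w : ℂ).re = 2 * √n * w.re := by
    rw [← ofReal_ofNat, ← ofReal_mul, re_ofReal_mul]
  have hcoe : ‖(2 * Real.pi * (√n : ℝ) : ℂ)‖ = 2 * Real.pi * √n := by
    rw [← ofReal_ofNat, ← ofReal_mul, ← ofReal_mul, norm_real, Real.norm_of_nonneg (by positivity)]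
  have hlhs : Real.exp (2 * √n * w.re) * ‖saddleIntegral x w √n‖ ≠ 0 :=
    mul_ne_zero (Real.exp_ne_zero _) (norm_ne_zero_iff.2 hI)
  rw [norm_mul, norm_mul, norm_mul, norm_pow, norm_neg, norm_one, one_pow, one_mul, hcoe, norm_exp,
    hre] at hnorm
  have hlog := congrArg Real.log hnorm
  rw [Real.log_mul (Real.exp_ne_zero _) (norm_ne_zero_iff.2 hI), Real.log_exp,
    Real.log_mul (by positivity) (right_ne_zero_of_mul (hnorm ▸ hlhs))] at hlog
  linarith

theorem tendsto_log_norm_F_div_sub_fk {x₀ : ℂ} (hx₀ : x₀ ∈ interior R2) :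
    Tendsto (fun i : ℕ × ℂ => Real.log ‖F i.1 i.2‖ / (2 * √i.1) - fk 2 i.2) (atTop ×ˢ 𝓝 x₀)
      (𝓝 0) := by
  have hnorm : ‖x₀‖ < 1 := (interior_subset hx₀).1
  have hpos := fk_two_pos_of_mem_interior hx₀
  have hN : Tendsto (fun i : ℕ × ℂ => √(i.1 : ℝ)) (atTop ×ˢ 𝓝 x₀) atTop :=
    Real.tendsto_sqrt_atTop.comp (tendsto_natCast_atTop_atTop.comp tendsto_fst)
  have hp : Tendsto (fun i : ℕ × ℂ => (√(i.1 : ℝ), i.2)) (atTop ×ˢ 𝓝 x₀) (atTop ×ˢ 𝓝 x₀) :=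
    hN.prodMk tendsto_snd
  have hT := (tendsto_saddleIntegral hx₀).comp hp
  have hG := integral_exp_sub_sq_div_ne_zero (logSeries x₀ fun _ => -(1 / 2))
    (by rwa [sqrtDilog_re] : 0 < (sqrtDilog 2 x₀).re)
  have hlogN : Tendsto (fun i : ℕ × ℂ => Real.log √(i.1 : ℝ) / √(i.1 : ℝ)) (atTop ×ˢ 𝓝 x₀) (𝓝 0) :=
    Real.isLittleO_log_id_atTop.tendsto_div_nhds_zero.comp hN
  have hlogT := (hT.norm.log (norm_ne_zero_iff.2 hG)).sub_const (Real.log (2 * Real.pi))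
  have hlim := ((hlogT.div_atTop hN).div_const 2).sub (hlogN.const_mul (3 / 4))
  rw [zero_div, mul_zero, sub_zero] at hlim
  refine hlim.congr' ?_
  filter_upwards [hp.eventually (eventually_pos_and_norm_lt_one_and_re_pos hnorm hpos),
    hT.eventually_ne hG] with ⟨n, x⟩ ⟨hn, hx, hw⟩ hTne
  have hI := right_ne_zero_of_mul hTne
  have hn0 : n ≠ 0 := by
    rintro rfl
    simp at hn
  rw [log_norm_F_eq hx hw hn0 hI, sqrtDilog_re, Function.comp_apply, norm_mul, norm_real,
    Real.norm_of_nonneg (Real.sqrt_nonneg _),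
    Real.log_mul (Real.sqrt_pos.2 hn).ne' (norm_ne_zero_iff.2 hI),
    Real.log_mul (by positivity) hn.ne', Real.log_sqrt hn.le]
  field_simp
  ring

/-- On region R(2): uniformly on compact subsets of the interior of R(2),
ln|Fₙ(z)|/(2√n) → (1/2)·Re √(Li₂(z^2)). -/
theorem sqrt_n_asymptotics_region_2 (K : Set ℂ) (hK : K ⊆ interior R2) (hKc : IsCompact K) :
    TendstoUniformlyOn (fun (n : ℕ) (z : ℂ) => Real.log ‖F n z‖ / (2 * Real.sqrt n))
      (fun z : ℂ => (1 / (2 : ℝ)) * ((dilog (z ^ 2)) ^ (1 / 2 : ℂ)).re) atTop K := by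
  rw [← tendstoLocallyUniformlyOn_iff_tendstoUniformlyOn_of_compact hKc,
    tendstoLocallyUniformlyOn_iff_forall_tendsto]
  intro x₀ hx₀
  rw [tendsto_uniformity_iff_dist_tendsto_zero]
  have hlim := ((tendsto_log_norm_F_div_sub_fk (hK hx₀)).mono_left
    (prod_mono_right atTop (nhdsWithin_le_nhds (s := K)))).norm
  rw [norm_zero] at hlim
  refine hlim.congr fun i => ?_
  rw [dist_comm, dist_eq_norm, fk, Nat.cast_ofNat]
end

section
/- Let h, k be relatively prime integers with 0 ≤ h < k, and fix a complex x with |x| < 1. Let Q̃ be the analytic continuation to ℂ ∖ {1} of Q_{h,k}(s) = ∑_{m≥1} ∑_{l≥1} (x^l e^{2πi l m h/k}/l)·(lm)^{−s}. Then there exists δ > 0 such that for all complex z with Re(z) > 0 and |z| < δ: P(x, e^{2πi(h/k + iz)}) = e^{w_{h,k}} · exp( Li₂(x^k)/(2π k² z) ) · exp( j_{h,k}(z) ), where w_{h,k} = (1/(2k))·ln(1 − x^k) + ∑_{l ≥ 1, k ∤ l} (x^l/l)·1/(e^{−2πi l h/k} − 1), and j_{h,k}(z) = (1/2πi)·∫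 Q̃(s)·Γ(s)·(2πz)^{−s} ds, the integral taken over the vertical line Re(s) = −3/4 oriented upward (this integral converges absolutely). -/
open Complex Filter Real MeasureTheory

/-- The bivariate generating function `P(x,u) = ∏_{j≥1} (1 - x uʲ)⁻¹`. -/
noncomputable def Pgen (x u : ℂ) : ℂ := ∏' j : ℕ, (1 - x * u ^ (j + 1))⁻¹

/-- The term of the double series `Q_{h,k}(s)` indexed by `(m,l) = (p.1+1, p.2+1)`:
`(x^l e^{2πi l m h/k}/l)·(lm)^{-s}`. -/
noncomputable def Qterm (h k : ℕ) (x : ℂ) (s : ℂ) (p : ℕ × ℕ) : ℂ :=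
  x ^ (p.2 + 1) * Complex.exp (2 * Real.pi * Complex.I * (p.2 + 1) * (p.1 + 1) * h / k) /
    (p.2 + 1) * (((p.2 + 1) * (p.1 + 1) : ℂ)) ^ (-s)

/-- The constant `w_{h,k} = (1/2k)·ln(1-x^k) + ∑_{l≥1, k∤l} (x^l/l)/(e^{-2πi l h/k}-1)`. -/
noncomputable def whk (h k : ℕ) (x : ℂ) : ℂ :=
  (1 / (2 * (k : ℂ))) * Complex.log (1 - x ^ k) +
    ∑' l : ℕ, (if k ∣ (l + 1) then 0 else
      x ^ (l + 1) / (l + 1) *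
        (1 / (Complex.exp (-(2 * Real.pi * Complex.I * (l + 1) * h / k)) - 1)))

/-!
For `u = ζ e^{-tv}` with `ζ = e^{2πih/k}` and `v = 2πz`, expanding the logarithms makes
`log P(x, u)` an exponential sum in `t > 0`, whose Mellin transform on `Re s > 1` is
`Q(s) Γ(s) v^{-s}`. As `t → 0`, `log P(x, u) = Li₂(x^k) / (k² v t) + w_{h,k} + O(t)`, and each
subtracted singular term moves the strip in which the Mellin transform equals `Q̃(s) Γ(s) v^{-s}`
across one pole, finally to `-1 < Re s < 0`. Mellin inversion at `t = 1` is the claim. Absolute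
convergence comes from the freedom to rotate `v`: the Mellin transform is bounded on vertical lines
for every `v` with `Re v > 0`, so `Q̃(s) Γ(s)` decays like `e^{-θ |Im s|}` for every `θ < π/2`.
-/

open scoped Topology

/-! ### Mellin transforms of exponential sums -/

lemma continuousOn_cpow_Ioi (p : ℂ) : ContinuousOn (fun t : ℝ => (t : ℂ) ^ p) (Set.Ioi 0) :=
  fun t ht => (continuousAt_ofReal_cpow_const t p (Or.inr (ne_of_gt ht))).continuousWithinAt

lemma norm_cpow_mul_exp_neg_mul (s c : ℂ) {t : ℝ} (ht : 0 < t) :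
    ‖(t : ℂ) ^ (s - 1) * Complex.exp (-(c * t))‖ = t ^ (s.re - 1) * Real.exp (-(c.re * t)) := by
  rw [norm_mul, Complex.norm_cpow_eq_rpow_re_of_pos ht, Complex.norm_exp]
  simp

lemma integrableOn_rpow_mul_exp_neg_mul_Ioi {σ c : ℝ} (hσ : 0 < σ) (hc : 0 < c) :
    IntegrableOn (fun t : ℝ => t ^ (σ - 1) * Real.exp (-(c * t))) (Set.Ioi 0) := by
  simpa [neg_mul] using
    integrableOn_rpow_mul_exp_neg_mul_rpow (p := 1) (s := σ - 1) (by linarith) one_pos hc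

lemma continuousOn_cpow_mul_exp_neg_mul (s c : ℂ) :
    ContinuousOn (fun t : ℝ => (t : ℂ) ^ (s - 1) * Complex.exp (-(c * t))) (Set.Ioi 0) :=
  (continuousOn_cpow_Ioi _).mul (by fun_prop)

lemma integrableOn_cpow_mul_exp_neg_mul_Ioi {s c : ℂ} (hs : 0 < s.re) (hc : 0 < c.re) :
    IntegrableOn (fun t : ℝ => (t : ℂ) ^ (s - 1) * Complex.exp (-(c * t))) (Set.Ioi 0) := by
  refine Integrable.mono' (integrableOn_rpow_mul_exp_neg_mul_Ioi hs hc)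
    ((continuousOn_cpow_mul_exp_neg_mul s c).aestronglyMeasurable measurableSet_Ioi) ?_
  filter_upwards [ae_restrict_mem measurableSet_Ioi] with t ht
  exact (norm_cpow_mul_exp_neg_mul s c ht).le

lemma differentiableAt_integral_cpow_mul_exp_neg_mul {s c : ℂ} (hs : 0 < s.re) (hc : 0 < c.re) :
    DifferentiableAt ℂ (fun w : ℂ => ∫ t : ℝ in Set.Ioi 0,
      (t : ℂ) ^ (s - 1) * Complex.exp (-(w * t))) c := by
  have hnear : {w : ℂ | c.re / 2 < w.re} ∈ 𝓝 c :=
    (isOpen_lt continuous_const Complex.continuous_re).mem_nhds (half_lt_self hc)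
  have hF' (w : ℂ) {t : ℝ} (ht : 0 < t) : -(t : ℂ) * ((t : ℂ) ^ (s - 1) * Complex.exp (-(w * t))) =
      -((t : ℂ) ^ (s + 1 - 1) * Complex.exp (-(w * t))) := by
    rw [show s + 1 - 1 = (s - 1) + 1 by ring, Complex.cpow_add _ _ (mod_cast ht.ne'),
      Complex.cpow_one]
    ring
  refine (hasDerivAt_integral_of_dominated_loc_of_deriv_le
    (μ := volume.restrict (Set.Ioi (0 : ℝ)))
    (F := fun w t => (t : ℂ) ^ (s - 1) * Complex.exp (-(w * t)))
    (F' := fun w t => -(t : ℂ) * ((t : ℂ) ^ (s - 1) * Complex.exp (-(w * t))))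
    (bound := fun t => t ^ (s.re + 1 - 1) * Real.exp (-(c.re / 2 * t)))
    hnear (Eventually.of_forall fun w => ?_) (integrableOn_cpow_mul_exp_neg_mul_Ioi hs hc) ?_ ?_
    (integrableOn_rpow_mul_exp_neg_mul_Ioi (by linarith) (half_pos hc)) ?_).2.differentiableAt
  · exact (continuousOn_cpow_mul_exp_neg_mul s w).aestronglyMeasurable measurableSet_Ioi
  · exact ContinuousOn.aestronglyMeasurable
      (ContinuousOn.mul (by fun_prop) (continuousOn_cpow_mul_exp_neg_mul s c)) measurableSet_Ioi
  · filter_upwards [ae_restrict_mem measurableSet_Ioi] with t (ht : 0 < t) w (hw : c.re / 2 < w.re)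
    rw [hF' w ht, norm_neg, norm_cpow_mul_exp_neg_mul _ _ ht, Complex.add_re, Complex.one_re]
    gcongr
  · filter_upwards with t w _
    have hexp : HasDerivAt (fun w : ℂ => Complex.exp (-(w * t)))
        (Complex.exp (-(w * t)) * -(1 * t)) w := ((hasDerivAt_id w).mul_const (t : ℂ)).neg.cexp
    exact (hexp.const_mul _).congr_deriv (by ring)

/-- The library has this for real `c`; both sides are analytic on the half-plane `0 < c.re`. -/
lemma integral_cpow_mul_exp_neg_mul_Ioi_of_re_pos {s c : ℂ} (hs : 0 < s.re) (hc : 0 < c.re) :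
    ∫ t : ℝ in Set.Ioi 0, (t : ℂ) ^ (s - 1) * Complex.exp (-(c * t)) =
      c ^ (-s) * Complex.Gamma s := by
  have hopen : IsOpen {w : ℂ | 0 < w.re} := isOpen_lt continuous_const Complex.continuous_re
  refine AnalyticOnNhd.eqOn_of_preconnected_of_frequently_eq (z₀ := 1)
    (f := fun w : ℂ => ∫ t : ℝ in Set.Ioi 0, (t : ℂ) ^ (s - 1) * Complex.exp (-(w * t)))
    (g := fun w : ℂ => w ^ (-s) * Complex.Gamma s)
    (DifferentiableOn.analyticOnNhd (fun w hw =>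
      (differentiableAt_integral_cpow_mul_exp_neg_mul hs hw).differentiableWithinAt) hopen)
    (DifferentiableOn.analyticOnNhd (fun w hw =>
      ((differentiableAt_id.cpow_const (Or.inl hw)).mul_const _).differentiableWithinAt) hopen)
    (convex_halfSpace_re_gt 0).isPreconnected
    (show (0 : ℝ) < (1 : ℂ).re from one_pos) ?_ hc
  have htends : Tendsto ((↑) : ℝ → ℂ) (𝓝[>] 1) (𝓝[≠] 1) := by
    refine tendsto_nhdsWithin_iff.mpr ⟨?_, ?_⟩
    · exact (Complex.continuous_ofReal.tendsto' 1 1 Complex.ofReal_one).mono_left nhdsWithin_le_nhds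
    · filter_upwards [self_mem_nhdsWithin] with r (hr : 1 < r)
      exact Complex.ofReal_eq_one.not.mpr hr.ne'
  refine htends.frequently (Eventually.frequently ?_)
  filter_upwards [self_mem_nhdsWithin] with r (hr : 1 < r)
  have hr0 : 0 < r := one_pos.trans hr
  rw [Complex.integral_cpow_mul_exp_neg_mul_Ioi hs (by simpa using hr0), one_div,
    Complex.inv_cpow _ _ (by rw [Complex.arg_ofReal_of_nonneg hr0.le]; exact Real.pi_pos.ne),
    Complex.cpow_neg]

lemma hasSum_mellin_of_re_pos {ι : Type*} [Countable ι] {a c : ι → ℂ} {F : ℝ → ℂ} {s : ℂ}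
    (hc : ∀ i, 0 < (c i).re) (hs : 0 < s.re)
    (hF : ∀ t ∈ Set.Ioi (0 : ℝ), HasSum (fun i => a i * Complex.exp (-(c i * t))) (F t))
    (hsum : Summable fun i => ‖a i‖ * (1 / (c i).re) ^ s.re) :
    HasSum (fun i => a i * (c i ^ (-s) * Complex.Gamma s)) (mellin F s) := by
  let f (i : ι) (t : ℝ) : ℂ := a i * ((t : ℂ) ^ (s - 1) * Complex.exp (-(c i * t)))
  have hmellin : mellin F s = ∫ t in Set.Ioi (0 : ℝ), ∑' i, f i t :=
    setIntegral_congr_fun measurableSet_Ioi fun t ht => by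
      simp only [f, smul_eq_mul, ← (hF t ht).tsum_eq, ← tsum_mul_left, mul_left_comm]
  have hnorm (i : ι) : ∫ t in Set.Ioi (0 : ℝ), ‖f i t‖ =
      ‖a i‖ * (1 / (c i).re) ^ s.re * Real.Gamma s.re := by
    rw [mul_assoc, ← Real.integral_rpow_mul_exp_neg_mul_Ioi hs (hc i), ← integral_const_mul]
    refine setIntegral_congr_fun measurableSet_Ioi fun t ht => ?_
    simp only [f, norm_mul (a i), norm_cpow_mul_exp_neg_mul s (c i) ht]
  have hint := hasSum_integral_of_summable_integral_norm
    (fun i => (integrableOn_cpow_mul_exp_neg_mul_Ioi hs (hc i)).const_mul (a i))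
    ((hsum.mul_right (Real.Gamma s.re)).congr fun i => (hnorm i).symm)
  rw [hmellin]
  exact hint.congr_fun fun i => by
    rw [integral_const_mul, integral_cpow_mul_exp_neg_mul_Ioi_of_re_pos hs (hc i)]

/-! ### Continuation of Mellin transforms across a pole -/

lemma hasMellin_cpow_compl_Ioc (a : ℂ) {s : ℂ} (hs : s.re + a.re < 0) :
    HasMellin ((Set.Ioc (0 : ℝ) 1)ᶜ.indicator (fun t => (t : ℂ) ^ a : ℝ → ℂ)) s
      (-(1 / (s + a))) := by
  have hinter : Set.Ioi (0 : ℝ) ∩ (Set.Ioc 0 1)ᶜ = Set.Ioi 1 := by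
    ext t
    simp only [Set.mem_inter_iff, Set.mem_Ioi, Set.mem_compl_iff, Set.mem_Ioc, not_and, not_le]
    exact ⟨fun ht => ht.2 ht.1, fun ht => ⟨one_pos.trans ht, fun _ => ht⟩⟩
  have hmeas : MeasurableSet (Set.Ioc (0 : ℝ) 1)ᶜ := measurableSet_Ioc.compl
  have hexp : (s + a - 1).re < -1 := by
    rw [Complex.sub_re, Complex.add_re, Complex.one_re]; linarith
  have hcongr : Set.EqOn (fun t : ℝ => (t : ℂ) ^ (s + a - 1))
      (fun t : ℝ => (t : ℂ) ^ (s - 1) • (t : ℂ) ^ a) (Set.Ioi 1) := fun t ht => by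
    dsimp only
    rw [smul_eq_mul, ← Complex.cpow_add _ _ (mod_cast (one_pos.trans ht).ne')]
    ring_nf
  have hsmul : (fun t : ℝ => (t : ℂ) ^ (s - 1) •
      (Set.Ioc (0 : ℝ) 1)ᶜ.indicator (fun t => (t : ℂ) ^ a : ℝ → ℂ) t) =
      (Set.Ioc (0 : ℝ) 1)ᶜ.indicator fun t : ℝ => (t : ℂ) ^ (s - 1) • (t : ℂ) ^ a :=
    (Set.indicator_smul _ _ _).symm
  refine ⟨?_, ?_⟩
  · rw [MellinConvergent, hsmul, integrableOn_indicator_iff hmeas, Set.inter_comm, hinter]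
    exact (integrableOn_Ioi_cpow_of_lt hexp one_pos).congr_fun hcongr measurableSet_Ioi
  · rw [mellin, hsmul, setIntegral_indicator hmeas, hinter,
      ← setIntegral_congr_fun measurableSet_Ioi hcongr, integral_Ioi_cpow_of_lt hexp one_pos]
    simp [neg_div]

/-- `F` with its singular term `A t⁻ᵖ` removed on `(0, 1]` only, so that the behaviour at infinity
is untouched. -/
noncomputable def subCpowNearZero (F : ℝ → ℂ) (A p : ℂ) (t : ℝ) : ℂ :=
  F t - A • (Set.Ioc (0 : ℝ) 1).indicator (fun t => (t : ℂ) ^ (-p) : ℝ → ℂ) t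

section MellinContinuation

variable {F : ℝ → ℂ} {A p : ℂ} {a b : ℝ}

lemma locallyIntegrableOn_subCpowNearZero (hF : LocallyIntegrableOn F (Set.Ioi 0)) :
    LocallyIntegrableOn (subCpowNearZero F A p) (Set.Ioi 0) := by
  refine hF.sub (LocallyIntegrableOn.smul ?_ A)
  exact fun t ht => ((continuousOn_cpow_Ioi _).locallyIntegrableOn measurableSet_Ioi t ht).imp
    fun u hu => ⟨hu.1, Integrable.indicator hu.2 measurableSet_Ioc⟩

lemma subCpowNearZero_isBigO_atTop (htop : F =O[atTop] fun t => t ^ (-a)) :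
    subCpowNearZero F A p =O[atTop] fun t => t ^ (-a) := by
  refine htop.congr' ?_ EventuallyEq.rfl
  filter_upwards [eventually_gt_atTop 1] with t ht
  rw [subCpowNearZero, Set.indicator_of_notMem fun hmem => hmem.2.not_gt ht, smul_zero, sub_zero]

lemma subCpowNearZero_isBigO_zero
    (hzero : (fun t : ℝ => F t - A * (t : ℂ) ^ (-p)) =O[𝓝[>] 0] fun t => t ^ (-b)) :
    subCpowNearZero F A p =O[𝓝[>] 0] fun t => t ^ (-b) := by
  refine hzero.congr' ?_ EventuallyEq.rfl
  filter_upwards [Ioc_mem_nhdsGT (zero_lt_one (α := ℝ))] with t ht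
  rw [subCpowNearZero, Set.indicator_of_mem ht, smul_eq_mul]

lemma mellin_subCpowNearZero {s : ℂ} (hconv : MellinConvergent (subCpowNearZero F A p) s)
    (hs : p.re < s.re) : mellin (subCpowNearZero F A p) s + A * (1 / (s - p)) = mellin F s := by
  have hpow := hasMellin_cpow_Ioc (-p) (s := s) (by rw [Complex.neg_re]; linarith)
  have hadd := hasMellin_add hconv (hpow.1.const_smul A)
  rw [(hasMellin_const_smul hpow.1 A).2, hpow.2] at hadd
  rw [sub_eq_add_neg s p, ← smul_eq_mul, ← hadd.2]
  simp only [subCpowNearZero, sub_add_cancel]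

lemma hasMellin_sub_cpow {s : ℂ} (hconv : MellinConvergent (subCpowNearZero F A p) s)
    (hs : s.re < p.re) :
    HasMellin (fun t => F t - A * (t : ℂ) ^ (-p)) s
      (mellin (subCpowNearZero F A p) s + A * (1 / (s - p))) := by
  have hpow := hasMellin_cpow_compl_Ioc (-p) (s := s) (by rw [Complex.neg_re]; linarith)
  have hsub := hasMellin_sub hconv (hpow.1.const_smul A)
  rw [(hasMellin_const_smul hpow.1 A).2, hpow.2] at hsub
  convert hsub using 1
  · ext t
    simp only [Set.indicator_compl, subCpowNearZero, Pi.sub_apply, smul_eq_mul]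
    ring
  · simp only [smul_eq_mul]
    ring

lemma eqOn_of_convex_of_eqOn_isOpen {f g : ℂ → ℂ} {K V : Set ℂ} (hf : DifferentiableOn ℂ f K)
    (hg : DifferentiableOn ℂ g K) (hK : IsOpen K) (hconv : Convex ℝ K) (hV : IsOpen V)
    (hKV : (K ∩ V).Nonempty) (hfg : Set.EqOn f g V) : Set.EqOn f g K := by
  obtain ⟨z, hzK, hzV⟩ := hKV
  exact (hf.analyticOnNhd hK).eqOn_of_preconnected_of_eventuallyEq (hg.analyticOnNhd hK)
    hconv.isPreconnected hzK (hfg.eventuallyEq_of_mem (hV.mem_nhds hzV))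

/-- The identity theorem, passing from right to left above `p`. -/
lemma eq_of_re_lt_of_eq_of_lt_re {f g : ℂ → ℂ} (hbp : b < p.re) (hpa : p.re < a)
    (hf : ∀ s : ℂ, b < s.re → s.re < a → s ≠ p → DifferentiableAt ℂ f s)
    (hg : ∀ s : ℂ, b < s.re → s.re < a → s ≠ p → DifferentiableAt ℂ g s)
    (hfg : ∀ s : ℂ, p.re < s.re → s.re < a → f s = g s) {s : ℂ} (hbs : b < s.re)
    (hsp : s.re < p.re) : f s = g s := by
  let strip (c d : ℝ) : Set ℂ := {s | c < s.re} ∩ {s | s.re < d}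
  let above : Set ℂ := strip b a ∩ {s | p.im < s.im}
  have hstrip (c d : ℝ) : IsOpen (strip c d) :=
    (isOpen_lt continuous_const continuous_re).inter (isOpen_lt continuous_re continuous_const)
  have habove : IsOpen above := (hstrip b a).inter (isOpen_lt continuous_const continuous_im)
  have hstrip_convex (c d : ℝ) : Convex ℝ (strip c d) :=
    (convex_halfSpace_re_gt c).inter (convex_halfSpace_re_lt d)
  have hdiff {φ : ℂ → ℂ}
      (hφ : ∀ s : ℂ, b < s.re → s.re < a → s ≠ p → DifferentiableAt ℂ φ s) :
      DifferentiableOn ℂ φ above ∧ DifferentiableOn ℂ φ (strip b p.re) :=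
    ⟨fun s hs => (hφ s hs.1.1 hs.1.2 (ne_of_apply_ne im hs.2.ne')).differentiableWithinAt,
      fun s hs => (hφ s hs.1 (hs.2.trans hpa) (ne_of_apply_ne re hs.2.ne)).differentiableWithinAt⟩
  obtain ⟨σ, hpσ, hσa⟩ := exists_between hpa
  have hfg_above : Set.EqOn f g above :=
    eqOn_of_convex_of_eqOn_isOpen (hdiff hf).1 (hdiff hg).1 habove
      ((hstrip_convex b a).inter (convex_halfSpace_im_gt _)) (hstrip p.re a)
      ⟨⟨σ, p.im + 1⟩, ⟨⟨hbp.trans hpσ, hσa⟩, lt_add_one p.im⟩, hpσ, hσa⟩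
      fun s hs => hfg s hs.1 hs.2
  exact eqOn_of_convex_of_eqOn_isOpen (hdiff hf).2 (hdiff hg).2 (hstrip b p.re)
    (hstrip_convex b p.re) habove
    ⟨⟨s.re, p.im + 1⟩, ⟨hbs, hsp⟩, ⟨hbs, hsp.trans hpa⟩, lt_add_one p.im⟩ hfg_above ⟨hbs, hsp⟩

/-- Moving the strip of validity of a Mellin transform to the left across a pole costs the singular
term that produces the pole. -/
lemma hasMellin_sub_cpow_of_mellin_eq {Λ : ℂ → ℂ} (hF : LocallyIntegrableOn F (Set.Ioi 0))
    (htop : F =O[atTop] fun t => t ^ (-a))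
    (hzero : (fun t : ℝ => F t - A * (t : ℂ) ^ (-p)) =O[𝓝[>] 0] fun t => t ^ (-b))
    (hbp : b < p.re) (hpa : p.re < a)
    (hΛ : ∀ s : ℂ, b < s.re → s.re < a → s ≠ p → DifferentiableAt ℂ Λ s)
    (hmellin : ∀ s : ℂ, p.re < s.re → s.re < a → mellin F s = Λ s) {s : ℂ} (hbs : b < s.re)
    (hsp : s.re < p.re) : HasMellin (fun t => F t - A * (t : ℂ) ^ (-p)) s (Λ s) := by
  have hloc := locallyIntegrableOn_subCpowNearZero (A := A) (p := p) hF
  have htop' := subCpowNearZero_isBigO_atTop (A := A) (p := p) htop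
  have hzero' := subCpowNearZero_isBigO_zero hzero
  have hconv {s : ℂ} (hbs : b < s.re) (hsa : s.re < a) :
      MellinConvergent (subCpowNearZero F A p) s :=
    mellinConvergent_of_isBigO_rpow hloc htop' hsa hzero' hbs
  have hcont : mellin (subCpowNearZero F A p) s + A * (1 / (s - p)) = Λ s := by
    refine eq_of_re_lt_of_eq_of_lt_re
      (f := fun s => mellin (subCpowNearZero F A p) s + A * (1 / (s - p))) hbp hpa
      (fun s hbs hsa hs => ?_) hΛ (fun s hps hsa => ?_) hbs hsp
    · refine (mellin_differentiableAt_of_isBigO_rpow hloc htop' hsa hzero' hbs).add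
        (DifferentiableAt.const_mul ?_ A)
      exact (differentiableAt_const 1).div (by fun_prop) (sub_ne_zero.mpr hs)
    · rw [mellin_subCpowNearZero (hconv (hbp.trans hps) hsa) hps, hmellin s hps hsa]
  rw [← hcont]
  exact hasMellin_sub_cpow (hconv hbs (hsp.trans hpa)) hsp

end MellinContinuation

/-! ### Absolute convergence on vertical lines -/

lemma norm_mellin_le (f : ℝ → ℂ) (s : ℂ) :
    ‖mellin f s‖ ≤ ∫ t in Set.Ioi (0 : ℝ), t ^ (s.re - 1) * ‖f t‖ := by
  refine (norm_integral_le_integral_norm _).trans_eq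
    (setIntegral_congr_fun measurableSet_Ioi fun t ht => ?_)
  rw [norm_smul, Complex.norm_cpow_eq_rpow_re_of_pos ht, Complex.sub_re, Complex.one_re]

lemma integrable_exp_neg_mul_abs {c : ℝ} (hc : 0 < c) :
    Integrable fun y : ℝ => Real.exp (-(c * |y|)) := by
  rw [← integrableOn_univ, ← Set.Iic_union_Ioi (a := (0 : ℝ))]
  refine IntegrableOn.union ?_ ?_
  · exact (integrableOn_exp_mul_Iic hc 0).congr_fun
      (fun y (hy : y ≤ 0) => by rw [abs_of_nonpos hy, mul_neg, neg_neg]) measurableSet_Iic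
  · exact (integrableOn_exp_mul_Ioi (neg_neg_iff_pos.mpr hc) 0).congr_fun
      (fun y (hy : 0 < y) => by simp only [abs_of_pos hy, neg_mul]) measurableSet_Ioi

lemma norm_cpow_neg_add_mul_I {v : ℂ} (hv : v ≠ 0) (σ y : ℝ) :
    ‖v ^ (-(σ + y * Complex.I))‖ = ‖v‖ ^ (-σ) * Real.exp (v.arg * y) := by
  rw [Complex.norm_cpow_of_ne_zero hv, div_eq_mul_inv, ← Real.exp_neg]
  simp

lemma exists_forall_norm_mul_exp_le {φ : ℝ → ℂ} {σ : ℝ}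
    (hbound : ∀ v : ℂ, 0 < v.re → ∃ B, ∀ y : ℝ, ‖φ y * v ^ (-(σ + y * Complex.I))‖ ≤ B)
    {θ : ℝ} (hθ : |θ| < Real.pi / 2) : ∃ B, ∀ y : ℝ, ‖φ y‖ * Real.exp (θ * y) ≤ B := by
  obtain ⟨hθ₁, hθ₂⟩ := abs_lt.mp hθ
  have hre : 0 < (Complex.exp (θ * Complex.I)).re := by
    rw [Complex.exp_ofReal_mul_I_re]
    exact Real.cos_pos_of_mem_Ioo ⟨hθ₁, hθ₂⟩
  have harg : (Complex.exp (θ * Complex.I)).arg = θ := by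
    rw [Complex.arg_exp_mul_I, toIocMod_eq_self]
    constructor <;> linarith [Real.pi_pos]
  obtain ⟨B, hB⟩ := hbound _ hre
  refine ⟨B, fun y => le_of_eq_of_le ?_ (hB y)⟩
  rw [norm_mul, norm_cpow_neg_add_mul_I (Complex.exp_ne_zero _), harg,
    Complex.norm_exp_ofReal_mul_I, Real.one_rpow, one_mul]

/-- Comparing `v` with `exp (± i θ)` for some `|arg v| < θ < π / 2` turns boundedness into
exponential decay. -/
lemma integrable_mul_cpow_of_bounded {φ : ℝ → ℂ} {σ : ℝ} (hφ : AEStronglyMeasurable φ volume)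
    (hbound : ∀ v : ℂ, 0 < v.re → ∃ B, ∀ y : ℝ, ‖φ y * v ^ (-(σ + y * Complex.I))‖ ≤ B)
    {v : ℂ} (hv : 0 < v.re) :
    Integrable fun y : ℝ => φ y * v ^ (-(σ + y * Complex.I)) := by
  have hv0 : v ≠ 0 := ne_of_apply_ne re hv.ne'
  obtain ⟨θ, hvθ, hθ⟩ := exists_between (Complex.abs_arg_lt_pi_div_two_iff.mpr (Or.inl hv))
  have hθ0 : 0 < θ := (abs_nonneg _).trans_lt hvθ
  obtain ⟨B₁, hB₁⟩ := exists_forall_norm_mul_exp_le hbound ((abs_of_pos hθ0).trans_lt hθ)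
  obtain ⟨B₂, hB₂⟩ := exists_forall_norm_mul_exp_le hbound
    (((abs_neg θ).trans (abs_of_pos hθ0)).trans_lt hθ)
  have hφ_le (y : ℝ) : ‖φ y‖ * Real.exp (θ * |y|) ≤ max B₁ B₂ := by
    rcases abs_cases y with ⟨hy, -⟩ | ⟨hy, -⟩
    · rw [hy]
      exact (hB₁ y).trans (le_max_left _ _)
    · rw [hy, mul_neg, ← neg_mul]
      exact (hB₂ y).trans (le_max_right _ _)
  refine ((integrable_exp_neg_mul_abs (sub_pos.mpr hvθ)).const_mul
    (max B₁ B₂ * ‖v‖ ^ (-σ))).mono' (hφ.mul ?_) (Eventually.of_forall fun y => ?_)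
  · exact Continuous.aestronglyMeasurable
      (continuous_const.cpow (by fun_prop) fun _ => Or.inl hv)
  · rw [norm_mul, norm_cpow_neg_add_mul_I hv0]
    calc ‖φ y‖ * (‖v‖ ^ (-σ) * Real.exp (v.arg * y))
        ≤ ‖φ y‖ * (‖v‖ ^ (-σ) * Real.exp (|v.arg| * |y|)) := by
          gcongr ‖φ y‖ * (_ * Real.exp ?_)
          exact (le_abs_self _).trans (abs_mul _ _).le
      _ = ‖φ y‖ * Real.exp (θ * |y|) * ‖v‖ ^ (-σ) * Real.exp (-((θ - |v.arg|) * |y|)) := by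
          rw [show |v.arg| * |y| = θ * |y| + -((θ - |v.arg|) * |y|) by ring, Real.exp_add]
          ring
      _ ≤ max B₁ B₂ * ‖v‖ ^ (-σ) * Real.exp (-((θ - |v.arg|) * |y|)) := by
          gcongr
          exact hφ_le y

/-! ### The logarithm of the generating function -/

/-- The logarithm of `Pgen`, as the double series over the pairs `(m, l) = (p.1 + 1, p.2 + 1)`
obtained by expanding the logarithm of each factor. -/
noncomputable def logPgen (x u : ℂ) : ℂ :=
  ∑' p : ℕ × ℕ, x ^ (p.2 + 1) / (p.2 + 1) * u ^ ((p.2 + 1) * (p.1 + 1))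

lemma hasSum_mul_of_nonneg {ι κ : Type*} {f : ι → ℝ} {g : κ → ℝ} {a b : ℝ} (hf : HasSum f a)
    (hg : HasSum g b) (hf0 : 0 ≤ f) (hg0 : 0 ≤ g) :
    HasSum (fun p : ι × κ => f p.1 * g p.2) (a * b) :=
  hf.mul hg (hf.summable.mul_of_nonneg hg.summable hf0 hg0)

lemma hasSum_pow_succ {r : ℝ} (hr0 : 0 ≤ r) (hr1 : r < 1) :
    HasSum (fun n : ℕ => r ^ (n + 1)) (r / (1 - r)) := by
  simpa only [pow_succ', div_eq_mul_inv] using (hasSum_geometric_of_lt_one hr0 hr1).mul_left r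

lemma hasSum_pow_succ_mul_pow_succ {q r : ℝ} (hq0 : 0 ≤ q) (hq1 : q < 1) (hr0 : 0 ≤ r)
    (hr1 : r < 1) :
    HasSum (fun p : ℕ × ℕ => q ^ (p.1 + 1) * r ^ (p.2 + 1)) (q / (1 - q) * (r / (1 - r))) := by
  have h := hasSum_mul_of_nonneg (hasSum_pow_succ hq0 hq1) (hasSum_pow_succ hr0 hr1)
    (fun n => pow_nonneg hq0 (n + 1)) fun n => pow_nonneg hr0 (n + 1)
  exact h

lemma norm_pow_succ_div_le (x : ℂ) (l : ℕ) : ‖x ^ (l + 1) / ((l : ℂ) + 1)‖ ≤ ‖x‖ ^ (l + 1) := by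
  rw [norm_div, norm_pow, ← Nat.cast_add_one, Complex.norm_natCast]
  exact div_le_self (by positivity) (by exact_mod_cast Nat.le_add_left 1 l)

section LogPgen

variable {x u : ℂ}

lemma norm_logPgen_term_le (x : ℂ) (hu : ‖u‖ ≤ 1) (p : ℕ × ℕ) :
    ‖x ^ (p.2 + 1) / ((p.2 : ℂ) + 1) * u ^ ((p.2 + 1) * (p.1 + 1))‖ ≤
      ‖u‖ ^ (p.1 + 1) * ‖x‖ ^ (p.2 + 1) := by
  rw [norm_mul, norm_pow u, mul_comm]
  exact mul_le_mul (pow_le_pow_of_le_one (norm_nonneg u) hu (Nat.le_mul_of_pos_left _ p.2.succ_pos))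
    (norm_pow_succ_div_le x p.2) (norm_nonneg _) (by positivity)

lemma hasSum_logPgen (hx : ‖x‖ < 1) (hu : ‖u‖ < 1) :
    HasSum (fun p : ℕ × ℕ => x ^ (p.2 + 1) / ((p.2 : ℂ) + 1) * u ^ ((p.2 + 1) * (p.1 + 1)))
      (logPgen x u) :=
  have hbound := hasSum_pow_succ_mul_pow_succ (norm_nonneg u) hu (norm_nonneg x) hx
  (Summable.of_norm_bounded hbound.summable (norm_logPgen_term_le x hu.le)).hasSum

lemma norm_logPgen_le (hx : ‖x‖ < 1) (hu : ‖u‖ < 1) :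
    ‖logPgen x u‖ ≤ ‖u‖ / (1 - ‖u‖) * (‖x‖ / (1 - ‖x‖)) :=
  tsum_of_norm_bounded (hasSum_pow_succ_mul_pow_succ (norm_nonneg u) hu (norm_nonneg x) hx)
    (norm_logPgen_term_le x hu.le)

lemma continuousOn_logPgen (hx : ‖x‖ < 1) : ContinuousOn (logPgen x) (Metric.ball 0 1) := by
  intro u hu
  obtain ⟨r, hur, hr1⟩ := exists_between (mem_ball_zero_iff.mp hu)
  have hcont : ContinuousOn (logPgen x) (Metric.ball 0 r) := by
    refine continuousOn_tsum (fun p => by fun_prop)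
      (hasSum_pow_succ_mul_pow_succ ((norm_nonneg u).trans hur.le) hr1 (norm_nonneg x) hx).summable
      fun p w hw => ?_
    have hwr : ‖w‖ ≤ r := (mem_ball_zero_iff.mp hw).le
    refine (norm_logPgen_term_le x (hwr.trans hr1.le) p).trans ?_
    gcongr
  exact (hcont.continuousAt (Metric.isOpen_ball.mem_nhds
    (mem_ball_zero_iff.mpr hur))).continuousWithinAt

lemma Pgen_eq_exp_logPgen (hx : ‖x‖ < 1) (hu : ‖u‖ < 1) :
    Pgen x u = Complex.exp (logPgen x u) := by
  have hlt (m : ℕ) : ‖x * u ^ (m + 1)‖ < 1 := by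
    rw [norm_mul, norm_pow]
    exact mul_lt_one_of_nonneg_of_lt_one_left (norm_nonneg x) hx
      (pow_le_one₀ (norm_nonneg u) hu.le)
  have hlog : HasSum (fun m : ℕ => -Complex.log (1 - x * u ^ (m + 1))) (logPgen x u) := by
    refine (hasSum_logPgen hx hu).prod_fiberwise fun m => ?_
    refine (Complex.hasSum_taylorSeries_neg_log' (hlt m)).congr_fun fun l => ?_
    ring
  rw [Pgen, ← hlog.cexp.tprod_eq]
  refine tprod_congr fun m => ?_
  have hne : 1 - x * u ^ (m + 1) ≠ 0 := fun h => by
    simpa [← sub_eq_zero.mp h] using hlt m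
  rw [Function.comp_apply, Complex.exp_neg, Complex.exp_log hne]

lemma hasSum_logPgen_lambert (hx : ‖x‖ < 1) (hu : ‖u‖ < 1) :
    HasSum (fun l : ℕ => x ^ (l + 1) / ((l : ℂ) + 1) * (u ^ (l + 1) / (1 - u ^ (l + 1))))
      (logPgen x u) := by
  refine ((Equiv.prodComm ℕ ℕ).hasSum_iff.mpr (hasSum_logPgen hx hu)).prod_fiberwise fun l => ?_
  have hlt : ‖u ^ (l + 1)‖ < 1 := by
    rw [norm_pow]
    exact pow_lt_one₀ (norm_nonneg u) hu l.succ_ne_zero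
  have hgeom := (hasSum_geometric_of_norm_lt_one hlt).mul_left (u ^ (l + 1))
  rw [← div_eq_mul_inv] at hgeom
  refine (hgeom.mul_left (x ^ (l + 1) / ((l : ℂ) + 1))).congr_fun fun m => ?_
  rw [Function.comp_apply, Equiv.prodComm_apply, Prod.swap, ← pow_succ', ← pow_mul]

end LogPgen

/-! ### Expansion at roots of unity -/

/-- The expansion at `w = 0`, up to `O(w)`, of `γ * exp (-w) / (1 - γ * exp (-w))`: there is a pole
exactly when `γ = 1`. -/
noncomputable def geomPrincipalPart (γ w : ℂ) : ℂ :=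
  if γ = 1 then 1 / w - 1 / 2 else γ / (1 - γ)

lemma hasDerivAt_one_sub_exp_neg : HasDerivAt (fun w : ℂ => 1 - Complex.exp (-w)) 1 0 := by
  simpa using (hasDerivAt_neg (0 : ℂ)).cexp.const_sub 1

lemma inv_one_sub_exp_neg_isBigO :
    (fun w : ℂ => (1 - Complex.exp (-w))⁻¹) =O[𝓝 0] fun w => w⁻¹ := by
  simpa [Function.comp_def] using
    (hasDerivAt_one_sub_exp_neg.isTheta_sub one_ne_zero).inv.isBigO.comp_tendsto
      (tendsto_id.prodMk tendsto_const_pure)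

lemma exp_neg_sub_sum_range_isBigO (n : ℕ) :
    (fun w : ℂ => Complex.exp (-w) - ∑ i ∈ Finset.range n, (-w) ^ i / i.factorial) =O[𝓝 0]
      fun w => w ^ n := by
  have hneg : Tendsto (fun w : ℂ => -w) (𝓝 0) (𝓝 0) := by
    simpa using continuous_neg.tendsto (0 : ℂ)
  refine ((Complex.exp_sub_sum_range_isBigO_pow n).comp_tendsto hneg).trans
    (Asymptotics.isBigO_of_le _ fun w => ?_)
  simp

lemma exp_neg_div_one_sub_exp_neg_isBigO :
    (fun w : ℂ => Complex.exp (-w) / (1 - Complex.exp (-w)) - (1 / w - 1 / 2)) =O[𝓝[≠] 0]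
      fun w => w := by
  have hmul : (fun w : ℂ => w * (Complex.exp (-w) - ∑ i ∈ Finset.range 2, (-w) ^ i / i.factorial))
      =O[𝓝 0] fun w => w ^ 3 :=
    ((Asymptotics.isBigO_refl (fun w : ℂ => w) _).mul (exp_neg_sub_sum_range_isBigO 2)).congr_right
      fun w => (pow_succ' w 2).symm
  have hnum := hmul.add ((exp_neg_sub_sum_range_isBigO 3).const_mul_left 2)
  have hden := (Asymptotics.isBigO_refl (fun w : ℂ => w⁻¹) (𝓝 0)).mul inv_one_sub_exp_neg_isBigO
  have hquot := ((hnum.mul hden).const_mul_left 2⁻¹).mono (nhdsWithin_le_nhds (s := {0}ᶜ))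
  have hexp : ∀ᶠ w in 𝓝[≠] (0 : ℂ), 1 - Complex.exp (-w) ≠ 0 :=
    hasDerivAt_one_sub_exp_neg.eventually_ne one_ne_zero
  refine hquot.congr' ?_ ?_
  · filter_upwards [self_mem_nhdsWithin, hexp] with w hw hE
    simp only [Finset.sum_range_succ, Finset.sum_range_zero, Nat.factorial]
    have hw0 : w ≠ 0 := hw
    push_cast
    field_simp
    ring
  · filter_upwards [self_mem_nhdsWithin] with w hw
    have hw0 : w ≠ 0 := hw
    field_simp

lemma geom_sub_geomPrincipalPart_isBigO (γ : ℂ) :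
    (fun w : ℂ => γ * Complex.exp (-w) / (1 - γ * Complex.exp (-w)) - geomPrincipalPart γ w)
      =O[𝓝[≠] 0] fun w => w := by
  by_cases hγ : γ = 1
  · simpa only [geomPrincipalPart, hγ, if_true, one_mul] using exp_neg_div_one_sub_exp_neg_isBigO
  · have hne : 1 - γ * Complex.exp (-(0 : ℂ)) ≠ 0 := by
      simpa [sub_eq_zero] using Ne.symm hγ
    have hdiff : DifferentiableAt ℂ
        (fun w => γ * Complex.exp (-w) / (1 - γ * Complex.exp (-w))) 0 := by
      fun_prop (disch := exact hne)
    simpa [geomPrincipalPart, hγ] using hdiff.isBigO_sub.mono nhdsWithin_le_nhds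

lemma norm_div_one_sub_le {γ : ℂ} {r : ℝ} (hγ : ‖γ‖ ≤ r) (hr : r < 1) :
    ‖γ / (1 - γ)‖ ≤ r / (1 - r) := by
  have hsub : 1 - r ≤ ‖1 - γ‖ := by
    have htri := norm_sub_norm_le 1 γ
    rw [norm_one] at htri
    linarith
  rw [norm_div]
  exact div_le_div₀ ((norm_nonneg γ).trans hγ) hγ (sub_pos.mpr hr) hsub

lemma exists_forall_norm_le_mul {E : Type*} [SeminormedAddCommGroup E] {f : ℝ → E}
    (hzero : f =O[𝓝[>] 0] fun r => r) (hbound : ∀ ε > 0, ∃ B, ∀ r, ε ≤ r → ‖f r‖ ≤ B) :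
    ∃ C, ∀ r, 0 < r → ‖f r‖ ≤ C * r := by
  obtain ⟨C, hC⟩ := hzero.bound
  obtain ⟨ε, hε, hlt⟩ := mem_nhdsGT_iff_exists_Ioo_subset.mp hC
  obtain ⟨B, hB⟩ := hbound ε hε
  refine ⟨max C (|B| / ε), fun r hr => ?_⟩
  have hε0 : 0 < ε := hε
  rcases lt_or_ge r ε with hrε | hrε
  · calc ‖f r‖ ≤ C * ‖r‖ := hlt ⟨hr, hrε⟩
      _ ≤ max C (|B| / ε) * r := by
        rw [Real.norm_of_nonneg hr.le]
        gcongr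
        exact le_max_left _ _
  · calc ‖f r‖ ≤ |B| := (hB r hrε).trans (le_abs_self B)
      _ = |B| / ε * ε := (div_mul_cancel₀ _ hε0.ne').symm
      _ ≤ max C (|B| / ε) * r :=
        mul_le_mul (le_max_right _ _) hrε hε0.le
          (le_max_of_le_right (div_nonneg (abs_nonneg B) hε0.le))

lemma exists_forall_norm_geom_sub_geomPrincipalPart_le {γ v : ℂ} (hγ : ‖γ‖ ≤ 1) (hv : 0 < v.re) :
    ∃ C, ∀ r : ℝ, 0 < r →
      ‖γ * Complex.exp (-(r * v)) / (1 - γ * Complex.exp (-(r * v))) -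
        geomPrincipalPart γ (r * v)‖ ≤ C * r := by
  have hv0 : v ≠ 0 := ne_of_apply_ne re hv.ne'
  refine exists_forall_norm_le_mul ?_ fun ε hε => ?_
  · have hray : Tendsto (fun r : ℝ => (r : ℂ) * v) (𝓝[>] 0) (𝓝[≠] 0) := by
      refine tendsto_nhdsWithin_iff.mpr ⟨?_, ?_⟩
      · have hcont : Continuous fun r : ℝ => (r : ℂ) * v := by fun_prop
        simpa using (hcont.tendsto 0).mono_left nhdsWithin_le_nhds
      · filter_upwards [self_mem_nhdsWithin] with r hr
        exact mul_ne_zero (by exact_mod_cast ne_of_gt hr) hv0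
    refine ((geom_sub_geomPrincipalPart_isBigO γ).comp_tendsto hray).trans
      (Asymptotics.IsBigO.of_bound ‖v‖ (Eventually.of_forall fun r => ?_))
    simp [mul_comm]
  · have hlt : Real.exp (-(ε * v.re)) < 1 :=
      Real.exp_lt_one_iff.mpr (neg_lt_zero.mpr (mul_pos hε hv))
    refine ⟨Real.exp (-(ε * v.re)) / (1 - Real.exp (-(ε * v.re))) +
      (1 / (ε * ‖v‖) + 1 / 2 + ‖γ / (1 - γ)‖), fun r hr => ?_⟩
    refine norm_sub_le_of_le (norm_div_one_sub_le ?_ hlt) ?_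
    · rw [norm_mul, Complex.norm_exp, neg_re, re_ofReal_mul]
      refine (mul_le_of_le_one_left (Real.exp_pos _).le hγ).trans ?_
      gcongr
    · unfold geomPrincipalPart
      split_ifs
      · refine ((norm_sub_le _ _).trans ?_).trans (le_add_of_nonneg_right (norm_nonneg _))
        have hr0 : 0 < r := hε.trans_le hr
        rw [norm_div, norm_div, norm_mul, norm_one, Complex.norm_ofNat,
          Complex.norm_of_nonneg hr0.le]
        gcongr
      · exact le_add_of_nonneg_left (by positivity)

lemma exists_forall_pow_le_of_isOfFinOrder {M : Type*} [Monoid M] {ζ : M} (hζ : IsOfFinOrder ζ)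
    (f : M → ℝ) : ∃ B, ∀ n : ℕ, f (ζ ^ n) ≤ B := by
  obtain ⟨B, hB⟩ := (hζ.finite_powers.image f).bddAbove
  exact ⟨B, fun n => hB ⟨ζ ^ n, ⟨n, rfl⟩, rfl⟩⟩

lemma exists_forall_norm_geom_pow_sub_geomPrincipalPart_le {ζ v : ℂ} (hζ : IsOfFinOrder ζ)
    (hv : 0 < v.re) :
    ∃ C, ∀ (n : ℕ) (r : ℝ), 0 < r →
      ‖ζ ^ n * Complex.exp (-(r * v)) / (1 - ζ ^ n * Complex.exp (-(r * v))) -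
        geomPrincipalPart (ζ ^ n) (r * v)‖ ≤ C * r := by
  have hray (γ : ℂ) : ∃ C, ‖γ‖ ≤ 1 → ∀ r : ℝ, 0 < r →
      ‖γ * Complex.exp (-(r * v)) / (1 - γ * Complex.exp (-(r * v))) -
        geomPrincipalPart γ (r * v)‖ ≤ C * r := by
    by_cases hγ : ‖γ‖ ≤ 1
    · obtain ⟨C, hC⟩ := exists_forall_norm_geom_sub_geomPrincipalPart_le hγ hv
      exact ⟨C, fun _ => hC⟩
    · exact ⟨0, fun h => absurd h hγ⟩
  choose C hC using hray
  obtain ⟨B, hB⟩ := exists_forall_pow_le_of_isOfFinOrder hζ C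
  refine ⟨B, fun n r hr => (hC (ζ ^ n) ?_ r hr).trans ?_⟩
  · rw [norm_pow, hζ.norm_eq_one, one_pow]
  · gcongr
    exact hB n

lemma hasSum_ite_dvd_succ {M : Type*} [AddCommMonoid M] [TopologicalSpace M] {k : ℕ} (hk : 0 < k)
    {f : ℕ → M} {a : M} (hf : HasSum (fun n => f (k * (n + 1))) a) :
    HasSum (fun l => if k ∣ l + 1 then f (l + 1) else 0) a := by
  have hsucc (n : ℕ) : k * (n + 1) - 1 + 1 = k * (n + 1) :=
    Nat.sub_add_cancel (Nat.mul_pos hk n.succ_pos)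
  have hinj : Function.Injective fun n : ℕ => k * (n + 1) - 1 := fun m n hmn => by
    have hpred : k * (m + 1) - 1 = k * (n + 1) - 1 := hmn
    have hmul : k * (m + 1) = k * (n + 1) := by rw [← hsucc m, hpred, hsucc n]
    exact Nat.succ_injective (Nat.eq_of_mul_eq_mul_left hk hmul)
  rw [← hinj.hasSum_iff]
  · simpa only [Function.comp_def, hsucc, dvd_mul_right, if_true] using hf
  · rintro l hl
    refine if_neg ?_
    rintro ⟨n, hn⟩
    obtain ⟨m, rfl⟩ : ∃ m, n = m + 1 := Nat.exists_eq_succ_of_ne_zero (by rintro rfl; simp at hn)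
    exact hl ⟨m, by simp only; omega⟩

lemma summable_mul_pow_succ_div {b : ℕ → ℂ} {B : ℝ} (hb : ∀ l, ‖b l‖ ≤ B) {x : ℂ} (hx : ‖x‖ < 1) :
    Summable fun l : ℕ => x ^ (l + 1) / ((l : ℂ) + 1) * b l := by
  refine Summable.of_norm_bounded ((hasSum_pow_succ (norm_nonneg x) hx).summable.mul_right B)
    fun l => ?_
  rw [norm_mul]
  exact mul_le_mul (norm_pow_succ_div_le x l) (hb l) (norm_nonneg _) (by positivity)

lemma hasSum_dilog {y : ℂ} (hy : ‖y‖ < 1) :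
    HasSum (fun n : ℕ => y ^ (n + 1) / ((n : ℂ) + 1) ^ 2) (dilog y) := by
  have hinv (n : ℕ) : ‖((n : ℂ) + 1)⁻¹‖ ≤ 1 := by
    rw [norm_inv, ← Nat.cast_add_one, Complex.norm_natCast]
    exact inv_le_one_of_one_le₀ (by exact_mod_cast Nat.le_add_left 1 n)
  refine ((summable_mul_pow_succ_div hinv hy).congr fun n => ?_).hasSum
  rw [← div_eq_mul_inv, div_div, sq]

section Multiples

variable {k : ℕ} {x : ℂ}

lemma hasSum_dilog_pow (hk : 0 < k) (hx : ‖x‖ < 1) :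
    HasSum (fun l : ℕ => if k ∣ l + 1 then x ^ (l + 1) / ((l + 1 : ℕ) : ℂ) ^ 2 else 0)
      (dilog (x ^ k) / (k : ℂ) ^ 2) := by
  refine hasSum_ite_dvd_succ hk (f := fun n => x ^ n / (n : ℂ) ^ 2) ?_
  have hxk : ‖x ^ k‖ < 1 := (norm_pow x k).trans_lt (pow_lt_one₀ (norm_nonneg x) hx hk.ne')
  refine ((hasSum_dilog hxk).div_const ((k : ℂ) ^ 2)).congr_fun fun n => ?_
  push_cast
  rw [pow_mul, mul_pow, div_div, mul_comm]

lemma hasSum_neg_log_one_sub_pow (hk : 0 < k) (hx : ‖x‖ < 1) :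
    HasSum (fun l : ℕ => if k ∣ l + 1 then x ^ (l + 1) / ((l + 1 : ℕ) : ℂ) else 0)
      (-Complex.log (1 - x ^ k) / k) := by
  refine hasSum_ite_dvd_succ hk (f := fun n => x ^ n / (n : ℂ)) ?_
  have hxk : ‖x ^ k‖ < 1 := (norm_pow x k).trans_lt (pow_lt_one₀ (norm_nonneg x) hx hk.ne')
  refine ((Complex.hasSum_taylorSeries_neg_log' hxk).div_const (k : ℂ)).congr_fun fun n => ?_
  push_cast
  rw [pow_mul, div_div, mul_comm (k : ℂ)]

end Multiples

/-- The constant `w` of the factorization, written in terms of the `k`-th root of unity `ζ`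
instead of `h`, with `1 / (ζ⁻ˡ - 1)` in the form `ζˡ / (1 - ζˡ)`. -/
noncomputable def rootConst (ζ : ℂ) (k : ℕ) (x : ℂ) : ℂ :=
  1 / (2 * k) * Complex.log (1 - x ^ k) +
    ∑' l : ℕ, if k ∣ l + 1 then 0 else
      x ^ (l + 1) / ((l : ℂ) + 1) * (ζ ^ (l + 1) / (1 - ζ ^ (l + 1)))

section PrimitiveRoot

variable {k : ℕ} {ζ x : ℂ}

lemma hasSum_geomPrincipalPart (hζ : IsPrimitiveRoot ζ k) (hk : 0 < k) (hx : ‖x‖ < 1) (w : ℂ) :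
    HasSum (fun l : ℕ => x ^ (l + 1) / ((l : ℂ) + 1) *
        geomPrincipalPart (ζ ^ (l + 1)) (((l + 1 : ℕ) : ℂ) * w))
      (dilog (x ^ k) / (k ^ 2 * w) + rootConst ζ k x) := by
  obtain ⟨B, hB⟩ := exists_forall_pow_le_of_isOfFinOrder (hζ.isOfFinOrder hk.ne')
    fun γ => ‖γ / (1 - γ)‖
  have hregular : Summable fun l : ℕ => if k ∣ l + 1 then 0 else
      x ^ (l + 1) / ((l : ℂ) + 1) * (ζ ^ (l + 1) / (1 - ζ ^ (l + 1))) := by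
    refine ((summable_mul_pow_succ_div (fun l => hB (l + 1)) hx).indicator
      {l | ¬ k ∣ l + 1}).congr fun l => ?_
    simp only [Set.indicator, Set.mem_ofPred_eq, ite_not]
  have hsum := (((hasSum_dilog_pow hk hx).div_const w).sub
    ((hasSum_neg_log_one_sub_pow hk hx).mul_left (1 / 2))).add hregular.hasSum
  have hval : dilog (x ^ k) / (k ^ 2 * w) + rootConst ζ k x =
      dilog (x ^ k) / k ^ 2 / w - 1 / 2 * (-Complex.log (1 - x ^ k) / k) +
        ∑' l : ℕ, if k ∣ l + 1 then 0 else
          x ^ (l + 1) / ((l : ℂ) + 1) * (ζ ^ (l + 1) / (1 - ζ ^ (l + 1))) := by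
    rw [rootConst, div_div]
    ring
  rw [hval]
  refine hsum.congr_fun fun l => ?_
  simp only [geomPrincipalPart, hζ.pow_eq_one_iff_dvd]
  split_ifs
  · push_cast
    field_simp
    ring
  · simp

lemma norm_mul_exp_neg_mul {v : ℂ} (hζ : ‖ζ‖ = 1) (t : ℝ) :
    ‖ζ * Complex.exp (-(t * v))‖ = Real.exp (-(t * v.re)) := by
  rw [norm_mul, hζ, one_mul, Complex.norm_exp, neg_re, re_ofReal_mul]

lemma norm_mul_exp_neg_mul_lt_one {v : ℂ} (hζ : ‖ζ‖ = 1) (hv : 0 < v.re) {t : ℝ} (ht : 0 < t) :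
    ‖ζ * Complex.exp (-(t * v))‖ < 1 := by
  rw [norm_mul_exp_neg_mul hζ]
  exact Real.exp_lt_one_iff.mpr (neg_lt_zero.mpr (mul_pos ht hv))

lemma exists_forall_norm_logPgen_sub_le (hζ : IsPrimitiveRoot ζ k) (hk : 0 < k) (hx : ‖x‖ < 1)
    {v : ℂ} (hv : 0 < v.re) :
    ∃ C, ∀ t : ℝ, 0 < t → ‖logPgen x (ζ * Complex.exp (-(t * v))) -
      (dilog (x ^ k) / (k ^ 2 * (t * v)) + rootConst ζ k x)‖ ≤ C * t := by
  obtain ⟨C, hC⟩ :=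
    exists_forall_norm_geom_pow_sub_geomPrincipalPart_le (hζ.isOfFinOrder hk.ne') hv
  refine ⟨‖x‖ / (1 - ‖x‖) * C, fun t ht => ?_⟩
  have hdiff := (hasSum_logPgen_lambert hx
    (norm_mul_exp_neg_mul_lt_one (hζ.norm'_eq_one hk.ne') hv ht)).sub
      (hasSum_geomPrincipalPart hζ hk hx (t * v))
  have hbound := ((hasSum_pow_succ (norm_nonneg x) hx).mul_right C).mul_right t
  rw [← hdiff.tsum_eq]
  refine tsum_of_norm_bounded hbound fun l => ?_
  have hterm := hC (l + 1) (((l + 1 : ℕ) : ℝ) * t) (by positivity)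
  have hpow : (ζ * Complex.exp (-(t * v))) ^ (l + 1) =
      ζ ^ (l + 1) * Complex.exp (-((((l + 1 : ℕ) : ℝ) * t : ℝ) * v)) := by
    rw [mul_pow, ← Complex.exp_nat_mul]
    push_cast
    ring_nf
  rw [hpow, ← mul_sub, norm_mul, norm_div, norm_pow, ← Nat.cast_add_one, Complex.norm_natCast]
  calc _ ≤ ‖x‖ ^ (l + 1) / ((l + 1 : ℕ) : ℝ) * (C * (((l + 1 : ℕ) : ℝ) * t)) := by
        gcongr
        simpa [mul_assoc] using hterm
    _ = ‖x‖ ^ (l + 1) * C * t := by field_simp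

end PrimitiveRoot

/-! ### Mellin transform along a ray -/

/-- `log P` along the ray `u = ζ * exp (-t v)`, which tends to the root of unity `ζ` as `t → 0`. -/
noncomputable def logPgenRay (ζ x v : ℂ) (t : ℝ) : ℂ := logPgen x (ζ * Complex.exp (-(t * v)))

/-- The term indexed by `(m, l) = (p.1 + 1, p.2 + 1)` of the Dirichlet series `Q`, for an arbitrary
`ζ` in place of `exp (2πih/k)`. -/
noncomputable def rootQterm (ζ x s : ℂ) (p : ℕ × ℕ) : ℂ :=
  x ^ (p.2 + 1) / (p.2 + 1) * ζ ^ ((p.2 + 1) * (p.1 + 1)) *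
    (((p.2 + 1) * (p.1 + 1) : ℕ) : ℂ) ^ (-s)

lemma mul_ofReal_cpow {v : ℂ} (hv : v ≠ 0) {r : ℝ} (hr : 0 < r) (s : ℂ) :
    ((r : ℂ) * v) ^ s = (r : ℂ) ^ s * v ^ s := by
  have hr0 : (r : ℂ) ≠ 0 := ofReal_ne_zero.mpr hr.ne'
  rw [cpow_def_of_ne_zero (mul_ne_zero hr0 hv), cpow_def_of_ne_zero hr0, cpow_def_of_ne_zero hv,
    Complex.log_ofReal_mul hr hv, ← Complex.ofReal_log hr.le, add_mul, Complex.exp_add]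

section Ray

variable {ζ x v : ℂ}

lemma continuousOn_logPgenRay (hζ : ‖ζ‖ = 1) (hx : ‖x‖ < 1) (hv : 0 < v.re) :
    ContinuousOn (logPgenRay ζ x v) (Set.Ioi 0) :=
  (continuousOn_logPgen hx).comp (by fun_prop) fun _ ht =>
    mem_ball_zero_iff.mpr (norm_mul_exp_neg_mul_lt_one hζ hv ht)

lemma logPgenRay_isBigO_atTop (hζ : ‖ζ‖ = 1) (hx : ‖x‖ < 1) (hv : 0 < v.re) (a : ℝ) :
    logPgenRay ζ x v =O[atTop] fun t => t ^ (-a) := by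
  have hexp : logPgenRay ζ x v =O[atTop] fun t => Real.exp (-v.re * t) := by
    refine Asymptotics.IsBigO.of_bound ((1 - Real.exp (-v.re))⁻¹ * (‖x‖ / (1 - ‖x‖))) ?_
    filter_upwards [eventually_ge_atTop 1] with t ht
    have ht0 : 0 < t := one_pos.trans_le ht
    have hden : 0 < 1 - Real.exp (-v.re) :=
      sub_pos.mpr (Real.exp_lt_one_iff.mpr (neg_lt_zero.mpr hv))
    have hle : Real.exp (-v.re * t) ≤ Real.exp (-v.re) := by
      gcongr
      nlinarith
    calc ‖logPgenRay ζ x v t‖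
        ≤ Real.exp (-(t * v.re)) / (1 - Real.exp (-(t * v.re))) * (‖x‖ / (1 - ‖x‖)) := by
          rw [← norm_mul_exp_neg_mul hζ]
          exact norm_logPgen_le hx (norm_mul_exp_neg_mul_lt_one hζ hv ht0)
      _ = Real.exp (-v.re * t) / (1 - Real.exp (-v.re * t)) * (‖x‖ / (1 - ‖x‖)) := by
          rw [neg_mul, mul_comm t]
      _ ≤ Real.exp (-v.re * t) / (1 - Real.exp (-v.re)) * (‖x‖ / (1 - ‖x‖)) := by gcongr
      _ = (1 - Real.exp (-v.re))⁻¹ * (‖x‖ / (1 - ‖x‖)) * ‖Real.exp (-v.re * t)‖ := by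
          rw [Real.norm_of_nonneg (Real.exp_pos _).le]
          ring
  exact hexp.trans (isLittleO_exp_neg_mul_rpow_atTop hv (-a)).isBigO

lemma hasSum_logPgenRay (hζ : ‖ζ‖ = 1) (hx : ‖x‖ < 1) (hv : 0 < v.re) {t : ℝ} (ht : 0 < t) :
    HasSum (fun p : ℕ × ℕ => x ^ (p.2 + 1) / ((p.2 : ℂ) + 1) * ζ ^ ((p.2 + 1) * (p.1 + 1)) *
      Complex.exp (-((((p.2 + 1) * (p.1 + 1) : ℕ) : ℂ) * v * t))) (logPgenRay ζ x v t) := by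
  refine (hasSum_logPgen hx (norm_mul_exp_neg_mul_lt_one hζ hv ht)).congr_fun fun p => ?_
  rw [mul_pow, ← Complex.exp_nat_mul, mul_assoc]
  ring_nf

lemma re_natCast_mul (n : ℕ) (v : ℂ) : ((n : ℂ) * v).re = n * v.re := by
  rw [← ofReal_natCast, re_ofReal_mul]

lemma summable_norm_mul_rpow (hζ : ‖ζ‖ = 1) (hx : ‖x‖ < 1) (hv : 0 < v.re) {σ : ℝ} (hσ : 1 < σ) :
    Summable fun p : ℕ × ℕ => ‖x ^ (p.2 + 1) / ((p.2 : ℂ) + 1) * ζ ^ ((p.2 + 1) * (p.1 + 1))‖ *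
      (1 / ((((p.2 + 1) * (p.1 + 1) : ℕ) : ℂ) * v).re) ^ σ := by
  have hm : Summable fun m : ℕ => (1 / (((m + 1 : ℕ) : ℝ) * v.re)) ^ σ := by
    have hzeta := (summable_nat_add_iff 1).mpr (Real.summable_one_div_nat_rpow.mpr hσ)
    refine (hzeta.mul_right ((1 / v.re) ^ σ)).congr fun m => ?_
    rw [← one_div_mul_one_div, Real.mul_rpow (by positivity) (by positivity),
      Real.div_rpow zero_le_one (Nat.cast_nonneg _), Real.one_rpow]
  have hl := (hasSum_pow_succ (norm_nonneg x) hx).summable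
  have hprod := hm.mul_of_nonneg hl (fun m => by positivity) fun l => by positivity
  refine hprod.of_nonneg_of_le (fun p => ?_) fun p => ?_
  · rw [re_natCast_mul]
    positivity
  · have hmn : p.1 + 1 ≤ (p.2 + 1) * (p.1 + 1) := Nat.le_mul_of_pos_left _ p.2.succ_pos
    rw [re_natCast_mul, norm_mul, norm_pow, hζ, one_pow, mul_one, mul_comm]
    gcongr
    exact norm_pow_succ_div_le x p.2

lemma mellin_logPgenRay (hζ : ‖ζ‖ = 1) (hx : ‖x‖ < 1) (hv : 0 < v.re) {s q : ℂ} (hs : 1 < s.re)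
    (hq : HasSum (rootQterm ζ x s) q) :
    mellin (logPgenRay ζ x v) s = q * Complex.Gamma s * v ^ (-s) := by
  have hn (p : ℕ × ℕ) : (0 : ℝ) < ((p.2 + 1) * (p.1 + 1) : ℕ) := by positivity
  have hre (p : ℕ × ℕ) : 0 < ((((p.2 + 1) * (p.1 + 1) : ℕ) : ℂ) * v).re := by
    rw [re_natCast_mul]
    exact mul_pos (hn p) hv
  refine (hasSum_mellin_of_re_pos hre (one_pos.trans hs)
    (fun t ht => hasSum_logPgenRay hζ hx hv ht) (summable_norm_mul_rpow hζ hx hv hs)).unique ?_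
  rw [mul_assoc]
  refine (hq.mul_right (Complex.Gamma s * v ^ (-s))).congr_fun fun p => ?_
  have hcpow := mul_ofReal_cpow (ne_of_apply_ne re hv.ne') (hn p) (-s)
  rw [ofReal_natCast] at hcpow
  rw [hcpow, rootQterm]
  ring

end Ray

/-- What remains of `log P` along the ray after removing its polar and constant parts at `t = 0`.
Both are written as multiples of `t ^ (-p)`, with `p` the pole of the Mellin transform they
cause. -/
noncomputable def rayRemainder (ζ : ℂ) (k : ℕ) (x v : ℂ) (t : ℝ) : ℂ :=
  logPgenRay ζ x v t - dilog (x ^ k) / (k ^ 2 * v) * (t : ℂ) ^ (-1 : ℂ) -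
    rootConst ζ k x * (t : ℂ) ^ (-0 : ℂ)

lemma differentiableAt_mul_Gamma_mul_cpow {Q : ℂ → ℂ} {s v : ℂ} (hQ : DifferentiableAt ℂ Q s)
    (hs : -1 < s.re) (hs0 : s ≠ 0) (hv : v ≠ 0) :
    DifferentiableAt ℂ (fun s => Q s * Complex.Gamma s * v ^ (-s)) s := by
  refine (hQ.mul (Complex.differentiableAt_Gamma s fun m hm => ?_)).mul
    (differentiableAt_id.neg.const_cpow (Or.inl hv))
  rcases Nat.eq_zero_or_pos m with rfl | hm0
  · exact hs0 (by simpa using hm)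
  · have hm1 : (1 : ℝ) ≤ m := by exact_mod_cast hm0
    rw [hm, neg_re, natCast_re] at hs
    linarith

section PrimitiveRoot

variable {k : ℕ} {ζ x v : ℂ}

lemma rayRemainder_isBigO_zero (hζ : IsPrimitiveRoot ζ k) (hk : 0 < k) (hx : ‖x‖ < 1)
    (hv : 0 < v.re) : rayRemainder ζ k x v =O[𝓝[>] 0] fun t => t ^ (1 : ℝ) := by
  obtain ⟨C, hC⟩ := exists_forall_norm_logPgen_sub_le hζ hk hx hv
  refine Asymptotics.IsBigO.of_bound C ?_
  filter_upwards [self_mem_nhdsWithin] with t ht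
  rw [Real.rpow_one, Real.norm_of_nonneg (le_of_lt ht)]
  refine le_of_eq_of_le ?_ (hC t ht)
  rw [rayRemainder, logPgenRay, neg_zero, cpow_zero, cpow_neg_one, sub_sub]
  congr 3
  · field_simp
  · exact mul_one _

lemma continuousOn_logPgenRay_sub (hζ : ‖ζ‖ = 1) (hx : ‖x‖ < 1) (hv : 0 < v.re) (A p : ℂ) :
    ContinuousOn (fun t : ℝ => logPgenRay ζ x v t - A * (t : ℂ) ^ p) (Set.Ioi 0) :=
  (continuousOn_logPgenRay hζ hx hv).sub (continuousOn_const.mul (continuousOn_cpow_Ioi p))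

lemma continuousOn_rayRemainder (hζ : ‖ζ‖ = 1) (hx : ‖x‖ < 1) (hv : 0 < v.re) :
    ContinuousOn (rayRemainder ζ k x v) (Set.Ioi 0) :=
  (continuousOn_logPgenRay_sub hζ hx hv _ _).sub
    (continuousOn_const.mul (continuousOn_cpow_Ioi _))

variable {Q : ℂ → ℂ}

lemma hasMellin_logPgenRay_sub (hζ : IsPrimitiveRoot ζ k) (hk : 0 < k) (hx : ‖x‖ < 1)
    (hv : 0 < v.re) (hQ : ∀ s : ℂ, 0 < s.re → s ≠ 1 → DifferentiableAt ℂ Q s)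
    (hQsum : ∀ s : ℂ, 1 < s.re → HasSum (rootQterm ζ x s) (Q s)) {s : ℂ} (hs0 : 0 < s.re)
    (hs1 : s.re < 1) :
    HasMellin (fun t : ℝ => logPgenRay ζ x v t - dilog (x ^ k) / (k ^ 2 * v) * (t : ℂ) ^ (-1 : ℂ))
      s (Q s * Complex.Gamma s * v ^ (-s)) := by
  have hζ1 := hζ.norm'_eq_one hk.ne'
  have hzero : (fun t : ℝ => logPgenRay ζ x v t -
      dilog (x ^ k) / (k ^ 2 * v) * (t : ℂ) ^ (-1 : ℂ)) =O[𝓝[>] 0] fun t => t ^ (-0 : ℝ) := by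
    have hlin : (fun t : ℝ => t ^ (1 : ℝ)) =O[𝓝[>] 0] fun _ => (1 : ℝ) := by
      simp only [Real.rpow_one]
      exact (tendsto_id.mono_left nhdsWithin_le_nhds).isBigO_one ℝ
    have hconst : (fun _ : ℝ => rootConst ζ k x) =O[𝓝[>] 0] fun _ => (1 : ℝ) :=
      Asymptotics.isBigO_const_const _ one_ne_zero _
    refine (((rayRemainder_isBigO_zero hζ hk hx hv).trans hlin).add hconst).congr
      (fun t => ?_) fun t => ?_
    · rw [rayRemainder, neg_zero, cpow_zero, mul_one, sub_add_cancel]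
    · rw [neg_zero, Real.rpow_zero]
  refine hasMellin_sub_cpow_of_mellin_eq (a := 2) (b := 0)
    (Λ := fun s => Q s * Complex.Gamma s * v ^ (-s))
    ((continuousOn_logPgenRay hζ1 hx hv).locallyIntegrableOn measurableSet_Ioi)
    (logPgenRay_isBigO_atTop hζ1 hx hv 2) hzero (by simp) (by simp) (fun s hs _ hs1 => ?_)
    (fun s hs _ => mellin_logPgenRay hζ1 hx hv ?_ (hQsum s ?_)) hs0 (by simpa using hs1)
  · exact differentiableAt_mul_Gamma_mul_cpow (hQ s hs hs1) (by linarith)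
      (ne_of_apply_ne re hs.ne') (ne_of_apply_ne re hv.ne')
  all_goals simpa using hs

lemma hasMellin_rayRemainder (hζ : IsPrimitiveRoot ζ k) (hk : 0 < k) (hx : ‖x‖ < 1)
    (hv : 0 < v.re) (hQ : ∀ s : ℂ, -1 < s.re → s ≠ 1 → DifferentiableAt ℂ Q s)
    (hQsum : ∀ s : ℂ, 1 < s.re → HasSum (rootQterm ζ x s) (Q s)) {s : ℂ} (hs : -1 < s.re)
    (hs0 : s.re < 0) :
    HasMellin (rayRemainder ζ k x v) s (Q s * Complex.Gamma s * v ^ (-s)) := by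
  have hζ1 := hζ.norm'_eq_one hk.ne'
  have htop : (fun t : ℝ => logPgenRay ζ x v t -
      dilog (x ^ k) / (k ^ 2 * v) * (t : ℂ) ^ (-1 : ℂ)) =O[atTop] fun t => t ^ (-1 : ℝ) := by
    refine (logPgenRay_isBigO_atTop hζ1 hx hv 1).sub (Asymptotics.IsBigO.const_mul_left ?_ _)
    refine Asymptotics.IsBigO.of_bound' ?_
    filter_upwards [eventually_gt_atTop 0] with t ht
    rw [Complex.norm_cpow_eq_rpow_re_of_pos ht, Real.norm_of_nonneg (by positivity), neg_re, one_re]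
  refine hasMellin_sub_cpow_of_mellin_eq (p := 0) (a := 1) (b := -1)
    (Λ := fun s => Q s * Complex.Gamma s * v ^ (-s))
    ((continuousOn_logPgenRay_sub hζ1 hx hv _ _).locallyIntegrableOn measurableSet_Ioi)
    htop ?_ (by simp) (by simp) (fun s hs hs1 hs0 => ?_)
    (fun s hs hs1 => (hasMellin_logPgenRay_sub hζ hk hx hv
      (fun s hs => hQ s (neg_one_lt_zero.trans hs)) hQsum (by simpa using hs) hs1).2)
    hs (by simpa using hs0)
  · rw [neg_neg]
    exact rayRemainder_isBigO_zero hζ hk hx hv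
  · exact differentiableAt_mul_Gamma_mul_cpow (hQ s hs (ne_of_apply_ne re hs1.ne)) hs hs0
      (ne_of_apply_ne re hv.ne')

lemma integrable_mul_Gamma_mul_cpow (hζ : IsPrimitiveRoot ζ k) (hk : 0 < k) (hx : ‖x‖ < 1)
    (hQ : ∀ s : ℂ, -1 < s.re → s ≠ 1 → DifferentiableAt ℂ Q s)
    (hQsum : ∀ s : ℂ, 1 < s.re → HasSum (rootQterm ζ x s) (Q s)) {σ : ℝ} (hσ : -1 < σ)
    (hσ0 : σ < 0) (hv : 0 < v.re) :
    Integrable fun y : ℝ => Q (σ + y * Complex.I) * Complex.Gamma (σ + y * Complex.I) *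
      v ^ (-(σ + y * Complex.I)) := by
  have hre (y : ℝ) : (σ + y * Complex.I : ℂ).re = σ := by simp
  have hcont : Continuous fun y : ℝ =>
      Q (σ + y * Complex.I) * Complex.Gamma (σ + y * Complex.I) := by
    refine continuous_iff_continuousAt.mpr fun y => ?_
    have hdiff := differentiableAt_mul_Gamma_mul_cpow (s := σ + y * Complex.I) (v := 1)
      (hQ _ (by rwa [hre]) ?_) (by rwa [hre]) ?_ one_ne_zero
    · simp only [one_cpow, mul_one] at hdiff
      exact hdiff.continuousAt.comp (f := fun y : ℝ => σ + y * Complex.I) (by fun_prop)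
    · exact ne_of_apply_ne re (by rw [hre, one_re]; linarith)
    · exact ne_of_apply_ne re (by rw [hre, zero_re]; exact hσ0.ne)
  refine integrable_mul_cpow_of_bounded hcont.aestronglyMeasurable (fun w hw =>
    ⟨∫ t in Set.Ioi (0 : ℝ), t ^ (σ - 1) * ‖rayRemainder ζ k x w t‖, fun y => ?_⟩) hv
  have hmellin := hasMellin_rayRemainder hζ hk hx hw hQ hQsum (s := σ + y * Complex.I)
    (by rwa [hre]) (by rwa [hre])
  simpa only [hmellin.2, hre] using
    norm_mellin_le (rayRemainder ζ k x w) (σ + y * Complex.I)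

lemma logPgen_mul_exp_neg (hζ : IsPrimitiveRoot ζ k) (hk : 0 < k) (hx : ‖x‖ < 1)
    (hQ : ∀ s : ℂ, -1 < s.re → s ≠ 1 → DifferentiableAt ℂ Q s)
    (hQsum : ∀ s : ℂ, 1 < s.re → HasSum (rootQterm ζ x s) (Q s)) {σ : ℝ} (hσ : -1 < σ)
    (hσ0 : σ < 0) (hv : 0 < v.re) :
    logPgen x (ζ * Complex.exp (-v)) = rootConst ζ k x + dilog (x ^ k) / (k ^ 2 * v) +
      1 / (2 * Real.pi) * ∫ y : ℝ, Q (σ + y * Complex.I) * Complex.Gamma (σ + y * Complex.I) *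
        v ^ (-(σ + y * Complex.I)) := by
  have hmellin (y : ℝ) := hasMellin_rayRemainder hζ hk hx hv hQ hQsum
    (s := σ + y * Complex.I) (by simpa using hσ) (by simpa using hσ0)
  have hconv : MellinConvergent (rayRemainder ζ k x v) σ := by simpa using (hmellin 0).1
  have hvert : VerticalIntegrable (mellin (rayRemainder ζ k x v)) σ := by
    simp only [VerticalIntegrable, fun y => (hmellin y).2]
    exact integrable_mul_Gamma_mul_cpow hζ hk hx hQ hQsum hσ hσ0 hv
  have hinv := mellinInv_mellin_eq σ _ one_pos hconv hvert
    ((continuousOn_rayRemainder (hζ.norm'_eq_one hk.ne') hx hv).continuousAt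
      (Ioi_mem_nhds one_pos))
  simp only [mellinInv, fun y => (hmellin y).2, rayRemainder, logPgenRay, Complex.ofReal_one,
    Complex.one_cpow, one_smul, mul_one, one_mul, Complex.real_smul] at hinv
  rw [sub_sub, eq_sub_iff_add_eq] at hinv
  rw [← hinv]
  push_cast
  ring

end PrimitiveRoot

lemma rootQterm_exp (h k : ℕ) (x s : ℂ) :
    rootQterm (Complex.exp (2 * Real.pi * Complex.I * (h / k))) x s = Qterm h k x s := by
  ext p
  rw [rootQterm, Qterm, ← Complex.exp_nat_mul, div_mul_eq_mul_div]
  push_cast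
  ring_nf

lemma rootConst_exp (h k : ℕ) (x : ℂ) :
    rootConst (Complex.exp (2 * Real.pi * Complex.I * (h / k))) k x = whk h k x := by
  have hterm (l : ℕ) : Complex.exp (2 * Real.pi * Complex.I * (h / k)) ^ (l + 1) =
      (Complex.exp (-(2 * Real.pi * Complex.I * (l + 1) * h / k)))⁻¹ := by
    rw [← Complex.exp_nat_mul, ← Complex.exp_neg]
    push_cast
    ring_nf
  have hinv {w : ℂ} (hw : w ≠ 0) : w⁻¹ / (1 - w⁻¹) = 1 / (w - 1) := by
    rw [← mul_div_mul_left _ _ hw, mul_inv_cancel₀ hw, mul_sub, mul_one, mul_inv_cancel₀ hw]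
  simp only [rootConst, whk, hterm, hinv (Complex.exp_ne_zero _)]

lemma exp_two_pi_mul_I_add (r z : ℂ) :
    Complex.exp (2 * Real.pi * Complex.I * (r + Complex.I * z)) =
      Complex.exp (2 * Real.pi * Complex.I * r) * Complex.exp (-(2 * Real.pi * z)) := by
  rw [← Complex.exp_add]
  congr 1
  linear_combination 2 * Real.pi * z * Complex.I_mul_I

theorem generating_function_factorization_general (h k : ℕ) (hk : 0 < k) (hco : Nat.Coprime h k)
    (x : ℂ) (hx : ‖x‖ < 1)
    (Qt : ℂ → ℂ) (hQt : DifferentiableOn ℂ Qt ({s | -1 < s.re} \ {1}))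
    (hQsum : ∀ s : ℂ, 1 < s.re → HasSum (fun p : ℕ × ℕ => Qterm h k x s p) (Qt s))
    (σ : ℝ) (hσ : -1 < σ) (hσ0 : σ < 0) (z : ℂ) (hz : 0 < z.re) :
    Integrable (fun t : ℝ =>
      Qt (σ + t * Complex.I) * Complex.Gamma (σ + t * Complex.I) *
        (2 * Real.pi * z) ^ (-(σ + t * Complex.I))) ∧
    Pgen x (Complex.exp (2 * Real.pi * Complex.I * ((h : ℂ) / k + Complex.I * z))) =
      Complex.exp (whk h k x) *
      Complex.exp (dilog (x ^ k) / (2 * Real.pi * (k : ℂ) ^ 2 * z)) *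
      Complex.exp ((1 / (2 * Real.pi * Complex.I)) *
        ∫ t : ℝ, Qt (σ + t * Complex.I) * Complex.Gamma (σ + t * Complex.I) *
          (2 * Real.pi * z) ^ (-(σ + t * Complex.I)) * Complex.I) := by
  have hζ := Complex.isPrimitiveRoot_exp_of_coprime h k hk.ne' hco
  have hv : 0 < (2 * Real.pi * z).re := by
    rw [← ofReal_ofNat, ← ofReal_mul, re_ofReal_mul]
    exact mul_pos Real.two_pi_pos hz
  have hopen : IsOpen ({s : ℂ | -1 < s.re} \ {1}) :=
    (isOpen_lt continuous_const Complex.continuous_re).sdiff isClosed_singleton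
  have hQ (s : ℂ) (hs : -1 < s.re) (hs1 : s ≠ 1) : DifferentiableAt ℂ Qt s :=
    hQt.differentiableAt (hopen.mem_nhds ⟨hs, hs1⟩)
  simp only [← rootQterm_exp] at hQsum
  have hnorm := norm_mul_exp_neg_mul_lt_one (hζ.norm'_eq_one hk.ne') hv one_pos
  rw [ofReal_one, one_mul] at hnorm
  have hpole : dilog (x ^ k) / (k ^ 2 * (2 * Real.pi * z)) =
      dilog (x ^ k) / (2 * Real.pi * (k : ℂ) ^ 2 * z) := by ring
  have hI (J : ℂ) : 1 / (2 * Real.pi * Complex.I) * (J * Complex.I) = 1 / (2 * Real.pi) * J := by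
    field_simp
  refine ⟨integrable_mul_Gamma_mul_cpow hζ hk hx hQ hQsum hσ hσ0 hv, ?_⟩
  rw [exp_two_pi_mul_I_add, Pgen_eq_exp_logPgen hx hnorm,
    logPgen_mul_exp_neg hζ hk hx hQ hQsum hσ hσ0 hv,
    rootConst_exp, Complex.exp_add, Complex.exp_add, integral_mul_const, hpole, hI]

/-- Factorization of the generating function near the rational point `e^{2πih/k}`:
`P(x, e^{2πi(h/k + iz)}) = e^{w_{h,k}} · exp(Li₂(x^k)/(2πk²z)) · exp(j_{h,k}(z))`, where
`j_{h,k}(z) = (1/2πi)∫_{Re s = -3/4} Q̃(s)Γ(s)(2πz)^{-s} ds` and this integral converges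
absolutely. -/
theorem generating_function_factorization (h k : ℕ) (hhk : h < k) (hco : Nat.Coprime h k)
    (x : ℂ) (hx : ‖x‖ < 1)
    (Qt : ℂ → ℂ) (hQt : DifferentiableOn ℂ Qt {(1 : ℂ)}ᶜ)
    (hQsum : ∀ s : ℂ, 1 < s.re → HasSum (fun p : ℕ × ℕ => Qterm h k x s p) (Qt s)) :
    ∃ δ > (0 : ℝ), ∀ z : ℂ, 0 < z.re → ‖z‖ < δ →
      Integrable (fun t : ℝ =>
        Qt (-(3/4) + t * Complex.I) * Complex.Gamma (-(3/4) + t * Complex.I) *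
          (2 * Real.pi * z) ^ (-(-(3/4) + t * Complex.I))) ∧
      Pgen x (Complex.exp (2 * Real.pi * Complex.I * ((h : ℂ) / k + Complex.I * z))) =
        Complex.exp (whk h k x) *
        Complex.exp (dilog (x ^ k) / (2 * Real.pi * (k : ℂ) ^ 2 * z)) *
        Complex.exp ((1 / (2 * Real.pi * Complex.I)) *
          ∫ t : ℝ, Qt (-(3/4) + t * Complex.I) * Complex.Gamma (-(3/4) + t * Complex.I) *
            (2 * Real.pi * z) ^ (-(-(3/4) + t * Complex.I)) * Complex.I) := by
  refine ⟨1, one_pos, fun z hz _ => ?_⟩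
  simpa using generating_function_factorization_general h k (Nat.zero_lt_of_lt hhk) hco x hx Qt
    (hQt.mono fun _ hs => hs.2) hQsum (-(3/4)) (by norm_num) (by norm_num) z hz
end
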